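/- arXiv:math/9205206 — 4 statements merged into one kernel-verified Lean document; each statement's English description precedes it below -/
import Mathlib

section
/- Let 𝒜 be an algebra of subsets of a set Ω and let 1 < p < ∞. If φ : 𝒜 → ℝ is a normalized submeasure which satisfies a lower p-estimate, then there exists a finitely additive measure λ on 𝒜 with 0 ≤ λ(A) ≤ φ(A) for all A ∈ 𝒜 and λ(Ω) ≥ K_p, where K_p = 2(2^p − 1)^{−1/p} − 1. -/
open Set Filter Topology

/-!
By compactness it suffices to treat a finite subalgebra, that is, a finite set of atoms. There, let
`m` be a measure of maximal total mass among those dominated by `φ`. If moving mass towards a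
nonempty set `R` could not violate `m ≤ φ` to first order, the total mass could be increased; hence
some `A` meeting `R` has `m A = φ A` and carries at most its proportional share of mass off `R`,
i.e. `m A * m R ≤ m univ * m (A ∩ R)`. Since `φ (A \ R) ≥ m (A \ R)`, the lower `p`-estimate on `A`
bounds `φ (A ∩ R) ^ p` by `m A ^ p - m (A \ R) ^ p`, and Bernoulli's inequality turns this into
`φ (A ∩ R) ≤ D * (m R ^ p⁻¹ - m (R \ A) ^ p⁻¹)` with `D = p ^ (1 + p⁻¹) * m univ ^ (1 - p⁻¹)`.
Removing such sets `A` one after another, subadditivity makes these bounds telescope to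
`φ R ≤ D * m R ^ p⁻¹`. For `R = univ` this is `m univ ≥ φ univ / p ^ (1 + p⁻¹)`, which is stronger
than the bound by `K_p`.
-/

open MeasureTheory

lemma rpow_sub_rpow_sub_le {p a b : ℝ} (hp : 1 ≤ p) (hb : 0 ≤ b) (hba : b ≤ a) :
    a ^ p - (a - b) ^ p ≤ p * a ^ (p - 1) * b := by
  rcases (hb.trans hba).eq_or_lt with rfl | ha
  · simp [le_antisymm hba hb]
  have hratio : b / a ≤ 1 := (div_le_one ha).2 hba
  have bernoulli : 1 + p * -(b / a) ≤ (1 + -(b / a)) ^ p :=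
    one_add_mul_self_le_rpow_one_add (by linarith) hp
  have hfactor : a - b = a * (1 + -(b / a)) := by field_simp; ring
  rw [hfactor, Real.mul_rpow ha.le (by linarith), Real.rpow_sub_one ha.ne']
  calc a ^ p - a ^ p * (1 + -(b / a)) ^ p
      ≤ a ^ p - a ^ p * (1 + p * -(b / a)) := by gcongr
    _ = p * (a ^ p / a) * b := by ring

lemma mul_rpow_mul_div_le_rpow_sub_rpow_sub {q a b : ℝ} (hq₀ : 0 ≤ q) (hq₁ : q ≤ 1)
    (hb : 0 ≤ b) (hba : b ≤ a) : q * a ^ q * (b / a) ≤ a ^ q - (a - b) ^ q := by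
  rcases (hb.trans hba).eq_or_lt with rfl | ha
  · simp [le_antisymm hba hb]
  have hratio : b / a ≤ 1 := (div_le_one ha).2 hba
  have bernoulli : (1 + -(b / a)) ^ q ≤ 1 + q * -(b / a) :=
    rpow_one_add_le_one_add_mul_self (by linarith) hq₀ hq₁
  have hfactor : a - b = a * (1 + -(b / a)) := by field_simp; ring
  rw [hfactor, Real.mul_rpow ha.le (by linarith)]
  calc q * a ^ q * (b / a) = a ^ q - a ^ q * (1 + q * -(b / a)) := by ring
    _ ≤ a ^ q - a ^ q * (1 + -(b / a)) ^ q := by gcongr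

lemma le_mul_rpow_inv_sub_rpow_inv {p a b k r u : ℝ} (hp : 1 ≤ p) (hb : 0 ≤ b) (hba : b ≤ a)
    (hbr : b ≤ r) (hk : 0 ≤ k) (hu : 0 ≤ u) (hdensity : a * r ≤ k * b)
    (hlower : u ^ p + (a - b) ^ p ≤ a ^ p) :
    u ≤ p ^ (1 + p⁻¹) * k ^ (1 - p⁻¹) * (r ^ p⁻¹ - (r - b) ^ p⁻¹) := by
  have hp₀ : 0 < p := by linarith
  have hup : u ^ p ≤ p * a ^ (p - 1) * b := by
    linarith [rpow_sub_rpow_sub_le hp hb hba]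
  rcases (hb.trans hbr).eq_or_lt with rfl | hr
  · obtain rfl : b = 0 := le_antisymm hbr hb
    have hu0 : u ^ p ≤ 0 := by simpa using hup
    simp [(Real.rpow_eq_zero hu hp₀.ne').1 (hu0.antisymm (by positivity))]
  set t := b / r with ht
  have ht₀ : 0 ≤ t := by positivity
  have hakt : a ≤ k * t := by rw [ht, ← mul_div_assoc, le_div_iff₀ hr]; exact hdensity
  have hroot : u ≤ (p * k ^ (p - 1) * t ^ p * r) ^ p⁻¹ := by
    rw [Real.le_rpow_inv_iff_of_pos hu (by positivity) hp₀]
    calc u ^ p ≤ p * a ^ (p - 1) * b := hup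
      _ ≤ p * (k * t) ^ (p - 1) * b := by
        have := hb.trans hba
        gcongr
      _ = p * k ^ (p - 1) * (t ^ (p - 1) * t) * r := by
        rw [Real.mul_rpow hk ht₀, ht]; field_simp
      _ = p * k ^ (p - 1) * t ^ p * r := by
        rw [← Real.rpow_add_one' ht₀ (by simpa using hp₀.ne'), sub_add_cancel]
  calc u ≤ (p * k ^ (p - 1) * t ^ p * r) ^ p⁻¹ := hroot
    _ = p ^ p⁻¹ * k ^ (1 - p⁻¹) * t * r ^ p⁻¹ := by
      rw [Real.mul_rpow (by positivity) hr.le, Real.mul_rpow (by positivity) (by positivity),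
        Real.mul_rpow hp₀.le (by positivity), Real.rpow_rpow_inv ht₀ hp₀.ne', ← Real.rpow_mul hk,
        sub_mul, mul_inv_cancel₀ hp₀.ne', one_mul]
    _ = p ^ (1 + p⁻¹) * k ^ (1 - p⁻¹) * (p⁻¹ * r ^ p⁻¹ * t) := by
      rw [Real.rpow_add hp₀, Real.rpow_one]; field_simp
    _ ≤ p ^ (1 + p⁻¹) * k ^ (1 - p⁻¹) * (r ^ p⁻¹ - (r - b) ^ p⁻¹) := by
      gcongr
      exact mul_rpow_mul_div_le_rpow_sub_rpow_sub (by positivity) (inv_le_one_of_one_le₀ hp) hb hbr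

lemma eventually_nonneg_add_mul {u v : ℝ} (hu : 0 ≤ u) (hv : u = 0 → 0 ≤ v) :
    ∀ᶠ ε in 𝓝[>] (0 : ℝ), 0 ≤ u + ε * v := by
  rcases hu.eq_or_lt with rfl | hu
  · filter_upwards [self_mem_nhdsWithin] with ε hε
    simpa using mul_nonneg (le_of_lt hε) (hv rfl)
  · have hlim : Tendsto (fun ε : ℝ ↦ u + ε * v) (𝓝[>] 0) (𝓝 u) :=
      tendsto_nhdsWithin_of_tendsto_nhds (Continuous.tendsto' (by fun_prop) 0 u (by simp))
    exact hlim.eventually_const_le hu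

section Finite

variable {α : Type*} {φ : Finset α → ℝ} {l : α → ℝ}

/-- The weights on `α` whose finitely additive extension `A ↦ ∑ x ∈ A, l x` lies between `0`
and `φ`. -/
def dominatedWeights (φ : Finset α → ℝ) : Set (α → ℝ) :=
  {l | 0 ≤ l ∧ ∀ A, ∑ x ∈ A, l x ≤ φ A}

lemma isCompact_dominatedWeights (φ : Finset α → ℝ) : IsCompact (dominatedWeights φ) := by
  have hclosed : IsClosed (dominatedWeights φ) := by
    refine isClosed_Ici.inter (?_ : IsClosed {l : α → ℝ | ∀ A, ∑ x ∈ A, l x ≤ φ A})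
    simp only [ofPred_forall]
    exact isClosed_iInter fun A ↦ isClosed_le (by fun_prop) continuous_const
  refine (isCompact_Icc (a := 0) (b := fun x ↦ φ {x})).of_isClosed_subset hclosed ?_
  exact fun l hl ↦ ⟨hl.1, fun x ↦ by simpa using hl.2 {x}⟩

variable [Fintype α]

lemma exists_isMaxOn_dominatedWeights (hφ : ∀ A, 0 ≤ φ A) :
    ∃ l ∈ dominatedWeights φ, IsMaxOn (fun l : α → ℝ ↦ ∑ x, l x) (dominatedWeights φ) l :=
  (isCompact_dominatedWeights φ).exists_isMaxOn ⟨0, le_rfl, by simpa using hφ⟩ (by fun_prop)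

lemma sum_nonpos_of_isMaxOn (hl : l ∈ dominatedWeights φ)
    (hmax : IsMaxOn (fun l : α → ℝ ↦ ∑ x, l x) (dominatedWeights φ) l) {d : α → ℝ}
    (hd : ∀ x, l x = 0 → 0 ≤ d x) (htight : ∀ A, ∑ x ∈ A, l x = φ A → ∑ x ∈ A, d x ≤ 0) :
    ∑ x, d x ≤ 0 := by
  have hnonneg : ∀ᶠ ε in 𝓝[>] (0 : ℝ), ∀ x, 0 ≤ l x + ε * d x :=
    eventually_all.2 fun x ↦ eventually_nonneg_add_mul (hl.1 x) (hd x)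
  have hle : ∀ᶠ ε in 𝓝[>] (0 : ℝ), ∀ A, 0 ≤ φ A - ∑ x ∈ A, l x + ε * -∑ x ∈ A, d x :=
    eventually_all.2 fun A ↦ eventually_nonneg_add_mul (sub_nonneg.2 (hl.2 A))
      fun h ↦ neg_nonneg.2 (htight A (sub_eq_zero.1 h).symm)
  obtain ⟨ε, hnonneg, hle, hε⟩ := (hnonneg.and (hle.and self_mem_nhdsWithin)).exists
  have hmass : ∑ x, (l x + ε * d x) ≤ ∑ x, l x := by
    refine hmax ⟨hnonneg, fun A ↦ ?_⟩
    rw [Finset.sum_add_distrib, ← Finset.mul_sum]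
    linarith [hle A]
  rw [Finset.sum_add_distrib, ← Finset.mul_sum] at hmass
  exact nonpos_of_mul_nonpos_right (by linarith) hε

variable [DecidableEq α]

lemma exists_tight_of_isMaxOn (hl : l ∈ dominatedWeights φ)
    (hmax : IsMaxOn (fun l : α → ℝ ↦ ∑ x, l x) (dominatedWeights φ) l)
    {R : Finset α} (hR : R.Nonempty) :
    ∃ A, (A ∩ R).Nonempty ∧ ∑ x ∈ A, l x = φ A ∧
      (∑ x ∈ A, l x) * ∑ x ∈ R, l x ≤ (∑ x, l x) * ∑ x ∈ A ∩ R, l x := by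
  by_contra! hsparse
  obtain ⟨x₀, hx₀⟩ := hR
  let drift (A : Finset α) : ℝ :=
    (∑ x, l x) * ∑ x ∈ A ∩ R, l x - (∑ x ∈ A, l x) * ∑ x ∈ R, l x
  obtain ⟨δ, hδ, hδ₀⟩ : ∃ δ : ℝ,
      (∀ A, (A ∩ R).Nonempty → ∑ x ∈ A, l x = φ A → δ ≤ -drift A) ∧ 0 < δ := by
    have hdrift (A : Finset α) : ∀ᶠ δ in 𝓝[>] (0 : ℝ),
        (A ∩ R).Nonempty → ∑ x ∈ A, l x = φ A → δ ≤ -drift A := by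
      simp only [eventually_imp_distrib_left]
      intro hAR hA
      have hneg : 0 < -drift A := by linarith [hsparse A hAR hA]
      filter_upwards [Ioc_mem_nhdsGT hneg] with δ hδ using hδ.2
    exact ((eventually_all.2 hdrift).and self_mem_nhdsWithin).exists
  -- Moving mass towards `R` keeps the total, so the extra `δ` at `x₀` would increase it.
  let d (x : α) : ℝ := (if x ∈ R then (∑ y, l y) * l x else 0) - l x * ∑ y ∈ R, l y +
    if x = x₀ then δ else 0
  have sum_d (A : Finset α) : ∑ x ∈ A, d x = drift A + if x₀ ∈ A then δ else 0 := by
    simp only [d, drift, Finset.sum_add_distrib, Finset.sum_sub_distrib, ← Finset.sum_mul,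
      Finset.sum_ite_mem, ← Finset.mul_sum, Finset.sum_ite_eq']
  have hd : ∑ x, d x ≤ 0 := by
    refine sum_nonpos_of_isMaxOn hl hmax (fun x hx ↦ ?_) fun A hA ↦ ?_
    · simp only [d, hx, mul_zero, zero_mul, ite_self, sub_self, zero_add]
      split_ifs <;> positivity
    · rw [sum_d]
      by_cases hAR : (A ∩ R).Nonempty
      · have := hδ A hAR hA
        split_ifs <;> linarith
      · have hx₀A : x₀ ∉ A := fun h ↦ hAR ⟨x₀, Finset.mem_inter.2 ⟨h, hx₀⟩⟩
        have : 0 ≤ (∑ x ∈ A, l x) * ∑ x ∈ R, l x :=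
          mul_nonneg (Finset.sum_nonneg fun x _ ↦ hl.1 x) (Finset.sum_nonneg fun x _ ↦ hl.1 x)
        simpa [drift, Finset.not_nonempty_iff_eq_empty.1 hAR, hx₀A] using this
  have hdrift_univ : drift Finset.univ = 0 := by simp [drift]
  rw [sum_d, hdrift_univ, if_pos (Finset.mem_univ _)] at hd
  linarith

variable {p : ℝ}

lemma exists_inter_le_mul_rpow_sub_rpow (hp : 1 ≤ p) (hφ : ∀ A, 0 ≤ φ A)
    (hlower : ∀ A B, Disjoint A B → φ A ^ p + φ B ^ p ≤ φ (A ∪ B) ^ p)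
    (hl : l ∈ dominatedWeights φ)
    (hmax : IsMaxOn (fun l : α → ℝ ↦ ∑ x, l x) (dominatedWeights φ) l)
    {R : Finset α} (hR : R.Nonempty) :
    ∃ A, (A ∩ R).Nonempty ∧ φ (A ∩ R) ≤ p ^ (1 + p⁻¹) * (∑ x, l x) ^ (1 - p⁻¹) *
      ((∑ x ∈ R, l x) ^ p⁻¹ - (∑ x ∈ R \ A, l x) ^ p⁻¹) := by
  obtain ⟨A, hAR, htight, hdensity⟩ := exists_tight_of_isMaxOn hl hmax hR
  refine ⟨A, hAR, ?_⟩
  have hnonneg (B : Finset α) : 0 ≤ ∑ x ∈ B, l x := Finset.sum_nonneg fun x _ ↦ hl.1 x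
  have hsplitA : ∑ x ∈ A ∩ R, l x + ∑ x ∈ A \ R, l x = ∑ x ∈ A, l x :=
    Finset.sum_inter_add_sum_sdiff A R l
  have hsplitR : ∑ x ∈ A ∩ R, l x + ∑ x ∈ R \ A, l x = ∑ x ∈ R, l x := by
    rw [Finset.inter_comm, Finset.sum_inter_add_sum_sdiff]
  rw [eq_sub_of_add_eq' hsplitR]
  refine le_mul_rpow_inv_sub_rpow_inv hp (hnonneg _) (by linarith [hnonneg (A \ R)])
    (by linarith [hnonneg (R \ A)]) (hnonneg _) (hφ _) hdensity ?_
  have hsdiff : (∑ x ∈ A, l x - ∑ x ∈ A ∩ R, l x) ^ p ≤ φ (A \ R) ^ p := by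
    rw [← eq_sub_of_add_eq' hsplitA]
    exact Real.rpow_le_rpow (hnonneg _) (hl.2 _) (by linarith)
  have hlowerA := hlower _ _ (Finset.disjoint_sdiff_inter A R).symm
  rw [Finset.union_comm, Finset.sdiff_union_inter, ← htight] at hlowerA
  linarith

lemma le_mul_sum_rpow_inv_of_isMaxOn (hp : 1 ≤ p) (hφ_empty : φ ∅ = 0) (hφ : ∀ A, 0 ≤ φ A)
    (hsub : ∀ A B, Disjoint A B → φ (A ∪ B) ≤ φ A + φ B)
    (hlower : ∀ A B, Disjoint A B → φ A ^ p + φ B ^ p ≤ φ (A ∪ B) ^ p)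
    (hl : l ∈ dominatedWeights φ)
    (hmax : IsMaxOn (fun l : α → ℝ ↦ ∑ x, l x) (dominatedWeights φ) l) (R : Finset α) :
    φ R ≤ p ^ (1 + p⁻¹) * (∑ x, l x) ^ (1 - p⁻¹) * (∑ x ∈ R, l x) ^ p⁻¹ := by
  induction R using Finset.strongInduction with | H R ih =>
  rcases R.eq_empty_or_nonempty with rfl | hR
  · simp [hφ_empty, (show p ≠ 0 by linarith)]
  obtain ⟨A, hAR, hA⟩ := exists_inter_le_mul_rpow_sub_rpow hp hφ hlower hl hmax hR
  have hssubset : R \ A ⊂ R := by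
    rw [← Finset.sdiff_inter_self_left]
    exact Finset.sdiff_ssubset Finset.inter_subset_left (by rwa [Finset.inter_comm])
  have hsubR := hsub _ _ (Finset.disjoint_sdiff_inter R A).symm
  rw [Finset.union_comm, Finset.sdiff_union_inter, Finset.inter_comm] at hsubR
  linarith [ih _ hssubset]

theorem exists_weights_le_of_lower_estimate (hp : 1 ≤ p) (hφ_empty : φ ∅ = 0)
    (hφ : ∀ A, 0 ≤ φ A)
    (hsub : ∀ A B, Disjoint A B → φ (A ∪ B) ≤ φ A + φ B)
    (hlower : ∀ A B, Disjoint A B → φ A ^ p + φ B ^ p ≤ φ (A ∪ B) ^ p) :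
    ∃ l ∈ dominatedWeights φ, φ Finset.univ ≤ p ^ (1 + p⁻¹) * ∑ x, l x := by
  obtain ⟨l, hl, hmax⟩ := exists_isMaxOn_dominatedWeights hφ
  refine ⟨l, hl, ?_⟩
  have hmass : 0 ≤ ∑ x, l x := Finset.sum_nonneg fun x _ ↦ hl.1 x
  calc φ Finset.univ
      ≤ p ^ (1 + p⁻¹) * (∑ x, l x) ^ (1 - p⁻¹) * (∑ x, l x) ^ p⁻¹ :=
        le_mul_sum_rpow_inv_of_isMaxOn hp hφ_empty hφ hsub hlower hl hmax Finset.univ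
    _ = p ^ (1 + p⁻¹) * ∑ x, l x := by
      rw [mul_assoc, ← Real.rpow_add' hmass (by simp), sub_add_cancel, Real.rpow_one]

end Finite

section SetAlgebra

universe u

variable {Ω : Type u} {𝒜 : Set (Set Ω)} {φ lam : Set Ω → ℝ} {κ p : ℝ}

/-- A nonnegative finitely additive measure, defined on all subsets of `Ω` rather than on an
algebra: the measures constructed here are limits of finite sums of point masses. -/
structure IsFinAddMeasure (lam : Set Ω → ℝ) : Prop where
  nonneg (A : Set Ω) : 0 ≤ lam A
  union (A B : Set Ω) : Disjoint A B → lam (A ∪ B) = lam A + lam B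

namespace IsFinAddMeasure

lemma empty (h : IsFinAddMeasure lam) : lam ∅ = 0 := by
  simpa using h.union ∅ ∅ (disjoint_empty ∅)

lemma mono (h : IsFinAddMeasure lam) {A B : Set Ω} (hAB : A ⊆ B) : lam A ≤ lam B := by
  rw [← union_sdiff_cancel hAB, h.union A (B \ A) disjoint_sdiff_right]
  exact le_add_of_nonneg_right (h.nonneg _)

end IsFinAddMeasure

lemma isFinAddMeasure_sum_indicator {α : Type*} [Fintype α] {l : α → ℝ} (hl : 0 ≤ l) (g : α → Ω) :
    IsFinAddMeasure fun A ↦ ∑ a, A.indicator (fun _ ↦ l a) (g a) where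
  nonneg A := Finset.sum_nonneg fun a _ ↦ indicator_nonneg (fun _ _ ↦ hl a) _
  union A B hAB := by simp only [indicator_union_of_disjoint hAB, Finset.sum_add_distrib]

lemma isClosed_setOf_isFinAddMeasure : IsClosed {lam : Set Ω → ℝ | IsFinAddMeasure lam} := by
  have heq : {lam : Set Ω → ℝ | IsFinAddMeasure lam} = (⋂ A, {lam | 0 ≤ lam A}) ∩
      ⋂ (A) (B) (_ : Disjoint A B), {lam | lam (A ∪ B) = lam A + lam B} := by
    ext lam
    simp only [mem_ofPred_eq, mem_inter_iff, mem_iInter]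
    exact ⟨fun h ↦ ⟨h.nonneg, h.union⟩, fun h ↦ ⟨h.1, h.2⟩⟩
  rw [heq]
  refine (isClosed_iInter fun A ↦ isClosed_le continuous_const (by fun_prop)).inter ?_
  exact isClosed_iInter fun A ↦ isClosed_iInter fun B ↦ isClosed_iInter fun _ ↦
    isClosed_eq (by fun_prop) (by fun_prop)

lemma exists_isFinAddMeasure_le_of_forall_finset (h_univ : univ ∈ 𝒜)
    (h : ∀ s : Finset (Set Ω), ↑s ⊆ 𝒜 →
      ∃ lam, IsFinAddMeasure lam ∧ (∀ A ∈ s, lam A ≤ φ A) ∧ κ ≤ lam univ) :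
    ∃ lam, IsFinAddMeasure lam ∧ (∀ A ∈ 𝒜, lam A ≤ φ A) ∧ κ ≤ lam univ := by
  classical
  let K : Set (Set Ω → ℝ) :=
    {lam | IsFinAddMeasure lam} ∩ ({lam | lam univ ≤ φ univ} ∩ {lam | κ ≤ lam univ})
  have hclosed : IsClosed K := isClosed_setOf_isFinAddMeasure.inter
    ((isClosed_le (by fun_prop) continuous_const).inter
      (isClosed_le continuous_const (by fun_prop)))
  have hcompact : IsCompact K :=
    (isCompact_Icc (a := 0) (b := fun _ ↦ φ univ)).of_isClosed_subset hclosed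
      fun lam hlam ↦ ⟨hlam.1.nonneg, fun A ↦ (hlam.1.mono (subset_univ A)).trans hlam.2.1⟩
  obtain ⟨lam, ⟨hlam, -, hκ⟩, hle⟩ := hcompact.inter_iInter_nonempty
    (fun A : 𝒜 ↦ {lam | lam A ≤ φ A})
    (fun A ↦ isClosed_le (by fun_prop) continuous_const) fun u ↦ by
      obtain ⟨lam, hlam, hle, hκ⟩ := h (insert univ (u.image Subtype.val)) (by
        simp [insert_subset_iff, h_univ])
      refine ⟨lam, ⟨hlam, hle univ (Finset.mem_insert_self _ _), hκ⟩, mem_iInter₂.2 fun A hA ↦ ?_⟩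
      exact hle A (Finset.mem_insert_of_mem (Finset.mem_image_of_mem _ hA))
  exact ⟨lam, hlam, fun A hA ↦ mem_iInter.1 hle ⟨A, hA⟩, hκ⟩

lemma exists_isFinAddMeasure_le_preimage {α : Type*} [Finite α] {f : Ω → α}
    (hf : f.Surjective) (hf𝒜 : ∀ T, f ⁻¹' T ∈ 𝒜) (hp : 1 ≤ p) (hφ_empty : φ ∅ = 0)
    (hφ_nonneg : ∀ A ∈ 𝒜, 0 ≤ φ A)
    (hφ_sub : ∀ A ∈ 𝒜, ∀ B ∈ 𝒜, Disjoint A B → φ (A ∪ B) ≤ φ A + φ B)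
    (hφ_lower : ∀ A ∈ 𝒜, ∀ B ∈ 𝒜, Disjoint A B → φ A ^ p + φ B ^ p ≤ φ (A ∪ B) ^ p) :
    ∃ lam, IsFinAddMeasure lam ∧ (∀ T, lam (f ⁻¹' T) ≤ φ (f ⁻¹' T)) ∧
      φ univ / p ^ (1 + p⁻¹) ≤ lam univ := by
  classical
  have := Fintype.ofFinite α
  obtain ⟨l, hl, hmass⟩ := exists_weights_le_of_lower_estimate
    (φ := fun T : Finset α ↦ φ (f ⁻¹' T)) hp (by simpa using hφ_empty) (fun T ↦ hφ_nonneg _ (hf𝒜 T))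
    (fun A B hAB ↦ by
      simpa using hφ_sub _ (hf𝒜 A) _ (hf𝒜 B) ((Finset.disjoint_coe.2 hAB).preimage f))
    (fun A B hAB ↦ by
      simpa using hφ_lower _ (hf𝒜 A) _ (hf𝒜 B) ((Finset.disjoint_coe.2 hAB).preimage f))
  refine ⟨fun A ↦ ∑ a, A.indicator (fun _ ↦ l a) (Function.surjInv hf a),
    isFinAddMeasure_sum_indicator hl.1 _, fun T ↦ ?_, ?_⟩
  · calc ∑ a, (f ⁻¹' T).indicator (fun _ ↦ l a) (Function.surjInv hf a)
        = ∑ a ∈ T.toFinset, l a := by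
          simp only [indicator_apply, mem_preimage, Function.surjInv_eq hf, ← Finset.sum_filter,
            filter_mem_univ_eq_toFinset]
      _ ≤ φ (f ⁻¹' T) := by simpa using hl.2 T.toFinset
  · rw [div_le_iff₀' (by positivity)]
    simpa using hmass

lemma exists_surjective_finite_preimage (h𝒜 : IsSetAlgebra 𝒜) {s : Finset (Set Ω)}
    (hs : ↑s ⊆ 𝒜) :
    ∃ (α : Type u) (_ : Finite α) (f : Ω → α), f.Surjective ∧ (∀ T, f ⁻¹' T ∈ 𝒜) ∧
      ∀ A ∈ s, ∃ T, f ⁻¹' T = A := by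
  classical
  let pattern (x : Ω) (A : s) : Prop := x ∈ A.1
  refine ⟨range pattern, inferInstance, rangeFactorization pattern, rangeFactorization_surjective,
    fun T ↦ ?_, fun A hA ↦ ⟨{t | t.1 ⟨A, hA⟩}, rfl⟩⟩
  have hfibre (t : range pattern) : rangeFactorization pattern ⁻¹' {t} ∈ 𝒜 := by
    have heq : rangeFactorization pattern ⁻¹' {t} =
        ⋂ A ∈ Finset.univ, if t.1 A then A.1 else A.1ᶜ := by
      ext x
      simp only [mem_preimage, mem_singleton_iff, Subtype.ext_iff, rangeFactorization_coe,
        funext_iff, eq_iff_iff, pattern, Finset.mem_univ, iInter_true, mem_iInter]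
      refine forall_congr' fun A ↦ ?_
      by_cases hA : t.1 A <;> simp [hA]
    rw [heq]
    refine h𝒜.biInter_mem _ fun A _ ↦ ?_
    split_ifs
    exacts [hs A.2, h𝒜.compl_mem (hs A.2)]
  rw [← biUnion_preimage_singleton]
  simpa only [mem_toFinset] using h𝒜.biUnion_mem T.toFinset fun t _ ↦ hfibre t

theorem submeasure_lower_estimate_dominates_measure_general (h𝒜 : IsSetAlgebra 𝒜) (hp : 1 ≤ p)
    (hφ_empty : φ ∅ = 0) (hφ_nonneg : ∀ A ∈ 𝒜, 0 ≤ φ A)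
    (hφ_sub : ∀ A ∈ 𝒜, ∀ B ∈ 𝒜, Disjoint A B → φ (A ∪ B) ≤ φ A + φ B)
    (hφ_lower : ∀ A ∈ 𝒜, ∀ B ∈ 𝒜, Disjoint A B → φ A ^ p + φ B ^ p ≤ φ (A ∪ B) ^ p) :
    ∃ lam, IsFinAddMeasure lam ∧ (∀ A ∈ 𝒜, lam A ≤ φ A) ∧ φ univ / p ^ (1 + p⁻¹) ≤ lam univ := by
  refine exists_isFinAddMeasure_le_of_forall_finset h𝒜.univ_mem fun s hs ↦ ?_
  obtain ⟨α, _, f, hf, hf𝒜, hfs⟩ := exists_surjective_finite_preimage h𝒜 hs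
  obtain ⟨lam, hlam, hle, hmass⟩ :=
    exists_isFinAddMeasure_le_preimage hf hf𝒜 hp hφ_empty hφ_nonneg hφ_sub hφ_lower
  refine ⟨lam, hlam, fun A hA ↦ ?_, hmass⟩
  obtain ⟨T, rfl⟩ := hfs A hA
  exact hle T

end SetAlgebra

lemma two_mul_rpow_sub_one_le_one_div_rpow {p : ℝ} (hp : 1 ≤ p) :
    2 * ((2 : ℝ) ^ p - 1) ^ (-(1 / p)) - 1 ≤ 1 / p ^ (1 + p⁻¹) := by
  have hp₀ : 0 < p := by linarith
  set k := 1 / p ^ (1 + p⁻¹) with hk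
  have hk₀ : 0 < k := by positivity
  have htwo : p ≤ (2 : ℝ) ^ p - 1 := by
    have := one_add_mul_self_le_rpow_one_add (s := 1) (by norm_num) hp
    norm_num at this
    linarith
  have hone_add : 1 + p⁻¹ ≤ (1 + k) ^ p := calc
    1 + p⁻¹ ≤ 1 + p * k := by
      have hroot : p ^ p⁻¹ ≤ p := by
        simpa using Real.rpow_le_rpow_of_exponent_le hp (inv_le_one_of_one_le₀ hp)
      rw [hk, Real.rpow_add hp₀, Real.rpow_one, mul_one_div, ← div_div, div_self hp₀.ne', one_div]
      gcongr
    _ ≤ (1 + k) ^ p := one_add_mul_self_le_rpow_one_add (by linarith) hp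
  have hquot : 2 ^ p / ((2 : ℝ) ^ p - 1) ≤ (1 + k) ^ p := calc
    2 ^ p / ((2 : ℝ) ^ p - 1) = 1 + ((2 : ℝ) ^ p - 1)⁻¹ := by
      have : (2 : ℝ) ^ p - 1 ≠ 0 := by linarith
      field_simp
      ring
    _ ≤ 1 + p⁻¹ := by gcongr
    _ ≤ (1 + k) ^ p := hone_add
  rw [sub_le_iff_le_add']
  calc 2 * ((2 : ℝ) ^ p - 1) ^ (-(1 / p)) = (2 ^ p / ((2 : ℝ) ^ p - 1)) ^ p⁻¹ := by
        rw [Real.div_rpow (by positivity) (by linarith), Real.rpow_rpow_inv (by norm_num) hp₀.ne',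
          one_div, Real.rpow_neg (by linarith), div_eq_mul_inv]
    _ ≤ 1 + k := by
        rw [Real.rpow_inv_le_iff_of_pos (div_nonneg (by positivity) (by linarith))
          (by positivity) hp₀]
        exact hquot

/-- Let `𝒜` be an algebra of subsets of a set `Ω` and `1 < p < ∞`.
If `φ : 𝒜 → ℝ` is a normalized submeasure satisfying a lower `p`-estimate (i.e. `φ^p`
is a supermeasure), then there is a finitely additive measure `λ` on `𝒜` with
`0 ≤ λ ≤ φ` and `λ(Ω) ≥ K_p = 2 (2^p - 1)^{-1/p} - 1`. -/
theorem submeasure_lower_estimate_dominates_measure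
    {Ω : Type*} (𝒜 : Set (Set Ω))
    (h_empty : (∅ : Set Ω) ∈ 𝒜) (h_univ : (univ : Set Ω) ∈ 𝒜)
    (h_compl : ∀ A ∈ 𝒜, Aᶜ ∈ 𝒜)
    (h_union : ∀ A ∈ 𝒜, ∀ B ∈ 𝒜, A ∪ B ∈ 𝒜)
    (p : ℝ) (hp : 1 < p)
    (φ : Set Ω → ℝ)
    (hφ_empty : φ ∅ = 0)
    (hφ_mono : ∀ A ∈ 𝒜, ∀ B ∈ 𝒜, A ⊆ B → φ A ≤ φ B)
    (hφ_norm : φ univ = 1)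
    (hφ_sub : ∀ A ∈ 𝒜, ∀ B ∈ 𝒜, Disjoint A B → φ (A ∪ B) ≤ φ A + φ B)
    (hφ_lower : ∀ A ∈ 𝒜, ∀ B ∈ 𝒜, Disjoint A B → φ A ^ p + φ B ^ p ≤ φ (A ∪ B) ^ p) :
    ∃ lam : Set Ω → ℝ,
      lam ∅ = 0 ∧
      (∀ A ∈ 𝒜, ∀ B ∈ 𝒜, A ⊆ B → lam A ≤ lam B) ∧
      (∀ A ∈ 𝒜, ∀ B ∈ 𝒜, Disjoint A B → lam (A ∪ B) = lam A + lam B) ∧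
      (∀ A ∈ 𝒜, 0 ≤ lam A ∧ lam A ≤ φ A) ∧
      2 * ((2 : ℝ) ^ p - 1) ^ (-(1 / p)) - 1 ≤ lam univ := by
  have hφ_nonneg : ∀ A ∈ 𝒜, 0 ≤ φ A := fun A hA ↦
    hφ_empty ▸ hφ_mono ∅ h_empty A hA (empty_subset A)
  obtain ⟨lam, hlam, hle, hmass⟩ := submeasure_lower_estimate_dominates_measure_general
    ⟨h_empty, fun _ hA ↦ h_compl _ hA, fun _ _ hA hB ↦ h_union _ hA _ hB⟩ hp.le
    hφ_empty hφ_nonneg hφ_sub hφ_lower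
  rw [hφ_norm] at hmass
  exact ⟨lam, hlam.empty, fun _ _ _ _ hAB ↦ hlam.mono hAB, fun A _ B _ ↦ hlam.union A B,
    fun A hA ↦ ⟨hlam.nonneg A, hle A hA⟩,
    (two_mul_rpow_sub_one_le_one_div_rpow hp.le).trans hmass⟩
end

section
/- Let 𝒜 be an algebra of subsets of a set Ω and let 0 < p < 1. If φ : 𝒜 → ℝ is a normalized supermeasure which satisfies an upper p-estimate, then there exists a finitely additive measure λ on 𝒜 with λ(A) ≥ φ(A) for all A ∈ 𝒜, λ(Ω) ≤ K_p (where K_p = 2(2^p − 1)^{−1/p} − 1), and λ is φ-continuous: for every sequence (F_n) in 𝒜, if φ(F_n) → 0 then λ(F_n) → 0. -/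
open Set Filter Topology

/-!
Among the additive majorants `μ` of `φ` choose one with the least total mass.

On a finite algebra, least mass forces every additive `ν` with `ν ⊤ < 0` to be negative on some
tight `b`, that is, one with `φ b = μ b`: otherwise `μ + ε ν` would be a smaller majorant. Applied
to `ν b = s μ b - μ (b \ P)` this yields a tight set at least a fraction `r = μ Pᶜ / μ ⊤` of which
lies outside `P`, and the upper `p`-estimate then gives a set `b` disjoint from `P` with
`φ b ≥ μ b * G r`, where `G r = (1 - (1 - r) ^ p) ^ (1 / p) / r`. Collecting such sets greedily and
using superadditivity gives `φ ⊤ ≥ μ ⊤ * ∫₀¹ G`. Finally `G` is increasing and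
`G (s / 2) ≥ G (1 / 2) * G s`, so `J = ∫₀¹ G` satisfies `J ≥ G (1 / 2) / 2 + G (1 / 2) * J / 2`,
which is `1 ≤ K_p * J`.

Compactness carries the bound from finite subalgebras to the whole algebra. There, a majorant of
least mass is `φ`-continuous: if `φ b → 0` along an ultrafilter, then `a ↦ lim μ (a \ b)` is again
an additive majorant, so it has at least the mass of `μ`, and therefore `μ b → 0`.
-/

/-- The constant `K_p` bounding the total mass of the dominating measure. -/
noncomputable def dominationConst (p : ℝ) : ℝ := 2 * ((2 : ℝ) ^ p - 1) ^ (-(1 / p)) - 1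

section Real

theorem concaveOn_increment_antitone {s : Set ℝ} {f : ℝ → ℝ} (hf : ConcaveOn ℝ s f) {x y t : ℝ}
    (hx : x ∈ s) (hyt : y + t ∈ s) (hxy : x ≤ y) (ht : 0 ≤ t) :
    f (y + t) - f y ≤ f (x + t) - f x := by
  rcases ht.eq_or_lt with rfl | ht
  · simp
  have hd : 0 < y - x + t := by linarith
  set θ := t / (y - x + t)
  have hθ₀ : 0 ≤ θ := by positivity
  have hθ₁ : 0 ≤ 1 - θ := sub_nonneg.2 ((div_le_one hd).2 (by linarith))
  have hθ : θ * (y - x + t) = t := div_mul_cancel₀ t hd.ne'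
  have hxt_eq : (1 - θ) * x + θ * (y + t) = x + t := by linarith
  have hy_eq : θ * x + (1 - θ) * (y + t) = y := by linarith
  have hxt : (1 - θ) * f x + θ * f (y + t) ≤ f (x + t) := by
    simpa only [smul_eq_mul, hxt_eq] using hf.2 hx hyt hθ₁ hθ₀ (by ring)
  have hy : θ * f x + (1 - θ) * f (y + t) ≤ f y := by
    simpa only [smul_eq_mul, hy_eq] using hf.2 hx hyt hθ₀ hθ₁ (by ring)
  linarith

theorem rpow_sub_rpow_sub_le_s1 {p : ℝ} (hp₀ : 0 ≤ p) (hp₁ : p ≤ 1) {b c t : ℝ} (ht : 0 ≤ t)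
    (htb : t ≤ b) (hbc : b ≤ c) : c ^ p - (c - t) ^ p ≤ b ^ p - (b - t) ^ p := by
  simpa using concaveOn_increment_antitone (Real.concaveOn_rpow hp₀ hp₁) (x := b - t) (y := c - t)
    (t := t) (mem_Ici.2 (by linarith)) (mem_Ici.2 (by linarith)) (by linarith) ht

theorem add_rpow_le_rpow_add_mul_rpow {p : ℝ} (hp₀ : 0 ≤ p) (hp₁ : p ≤ 1) {x y : ℝ} (hy : 0 ≤ y)
    (hyx : y ≤ x) : (x + y) ^ p ≤ x ^ p + (2 ^ p - 1) * y ^ p := by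
  have h := rpow_sub_rpow_sub_le_s1 hp₀ hp₁ hy (b := 2 * y) (c := x + y) (by linarith) (by linarith)
  rw [Real.mul_rpow two_pos.le hy, show 2 * y - y = y by ring, add_sub_cancel_right] at h
  linarith

theorem mul_left_endpoint_le_integral {f : ℝ → ℝ} {a b : ℝ} (hab : a ≤ b)
    (hf : MonotoneOn f (Icc a b)) : (b - a) * f a ≤ ∫ x in a..b, f x := by
  simpa using intervalIntegral.integral_mono_on (μ := MeasureTheory.volume) hab
    intervalIntegrable_const
    (MonotoneOn.intervalIntegrable (by rwa [uIcc_of_le hab]))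
    fun x hx => hf (left_mem_Icc.2 hab) hx hx.1

theorem integral_le_mul_right_endpoint {f : ℝ → ℝ} {a b : ℝ} (hab : a ≤ b)
    (hf : MonotoneOn f (Icc a b)) : ∫ x in a..b, f x ≤ (b - a) * f b := by
  simpa using intervalIntegral.integral_mono_on (μ := MeasureTheory.volume) hab
    (MonotoneOn.intervalIntegrable (by rwa [uIcc_of_le hab])) intervalIntegrable_const
    fun x hx => hf hx (right_mem_Icc.2 hab) hx.2

end Real

/-- The function `G` of the proof: if `μ` is an additive majorant of `φ` of least mass and `r` is
the fraction of the mass of `μ` outside `P`, then some `b` disjoint from `P` satisfies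
`μ b * profile p r ≤ φ b`. Division by zero gives `profile p 0 = 0`, which keeps `profile p`
monotone at `0`. -/
noncomputable def profile (p r : ℝ) : ℝ := (1 - (1 - r) ^ p) ^ p⁻¹ / r

namespace profile

variable {p : ℝ}

theorem one_sub_rpow_nonneg (hp : 0 ≤ p) {r : ℝ} (hr : r ∈ Icc (0 : ℝ) 1) :
    0 ≤ 1 - (1 - r) ^ p :=
  sub_nonneg.2 (Real.rpow_le_one (sub_nonneg.2 hr.2) (sub_le_self _ hr.1) hp)

theorem nonneg (hp : 0 ≤ p) {r : ℝ} (hr : r ∈ Icc (0 : ℝ) 1) : 0 ≤ profile p r :=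
  div_nonneg (Real.rpow_nonneg (one_sub_rpow_nonneg hp hr) _) hr.1

theorem mul_rpow (hp : 0 < p) {r t : ℝ} (hr : r ∈ Ioc (0 : ℝ) 1) (ht : 0 ≤ t) :
    (t * profile p r) ^ p = (t / r) ^ p - (t / r - t) ^ p := by
  have hr' : r ∈ Icc (0 : ℝ) 1 := Ioc_subset_Icc_self hr
  have hbase := one_sub_rpow_nonneg hp.le hr'
  have htr : 0 ≤ t / r := div_nonneg ht hr'.1
  have hsub : t / r - t = t / r * (1 - r) := by
    have := hr.1.ne'
    field_simp
  calc (t * profile p r) ^ p = (t / r * (1 - (1 - r) ^ p) ^ p⁻¹) ^ p := by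
        rw [profile, mul_div_assoc', div_mul_eq_mul_div]
    _ = (t / r) ^ p * (1 - (1 - r) ^ p) := by
        rw [Real.mul_rpow htr (Real.rpow_nonneg hbase _), Real.rpow_inv_rpow hbase hp.ne']
    _ = (t / r) ^ p - (t / r - t) ^ p := by
        rw [hsub, Real.mul_rpow htr (sub_nonneg.2 hr.2)]
        ring

theorem rpow_eq (hp : 0 < p) {r : ℝ} (hr : r ∈ Ioc (0 : ℝ) 1) :
    profile p r ^ p = (1 / r) ^ p - (1 / r - 1) ^ p := by
  simpa using mul_rpow hp hr zero_le_one

theorem half_eq (hp : 0 < p) : profile p (1 / 2) = (2 ^ p - 1) ^ p⁻¹ := by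
  have h := rpow_eq hp (r := 1 / 2) (by norm_num)
  norm_num at h
  rw [← h, Real.rpow_rpow_inv (nonneg hp.le (by norm_num)) hp.ne']

theorem half_pos (hp : 0 < p) : 0 < profile p (1 / 2) := by
  rw [half_eq hp]
  exact Real.rpow_pos_of_pos (sub_pos.2 (Real.one_lt_rpow one_lt_two hp)) _

theorem half_le_two (hp : 0 < p) : profile p (1 / 2) ≤ 2 := by
  have hpow : (1 : ℝ) ≤ 2 ^ p := Real.one_le_rpow one_le_two hp.le
  calc profile p (1 / 2) = (2 ^ p - 1) ^ p⁻¹ := half_eq hp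
    _ ≤ (2 ^ p) ^ p⁻¹ :=
        Real.rpow_le_rpow (sub_nonneg.2 hpow) (sub_le_self _ zero_le_one) (inv_nonneg.2 hp.le)
    _ = 2 := Real.rpow_rpow_inv two_pos.le hp.ne'

theorem monotoneOn (hp₀ : 0 < p) (hp₁ : p ≤ 1) : MonotoneOn (profile p) (Icc 0 1) := by
  intro r hr s hs hrs
  rcases hr.1.eq_or_lt with rfl | hr₀
  · simpa [profile] using nonneg hp₀.le hs
  have hs₀ : 0 < s := hr₀.trans_le hrs
  rw [← Real.rpow_le_rpow_iff (nonneg hp₀.le hr) (nonneg hp₀.le hs) hp₀, rpow_eq hp₀ ⟨hr₀, hr.2⟩,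
    rpow_eq hp₀ ⟨hs₀, hs.2⟩]
  exact rpow_sub_rpow_sub_le_s1 hp₀.le hp₁ zero_le_one (one_le_one_div hs₀ hs.2)
    (one_div_le_one_div_of_le hr₀ hrs)

theorem half_mul_le (hp₀ : 0 < p) (hp₁ : p ≤ 1) {s : ℝ} (hs : s ∈ Icc (0 : ℝ) 1) :
    profile p (1 / 2) * profile p s ≤ profile p (s / 2) := by
  rcases hs.1.eq_or_lt with rfl | hs₀
  · simp [profile]
  have hhalf : s / 2 ∈ Ioc (0 : ℝ) 1 := ⟨by linarith, by linarith [hs.2]⟩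
  have hx : 1 ≤ 1 / s := one_le_one_div hs₀ hs.2
  have hdouble : 1 / (s / 2) = 2 * (1 / s) := by field_simp
  have hpow : (0 : ℝ) ≤ 2 ^ p - 1 := sub_nonneg.2 (Real.one_le_rpow one_le_two hp₀.le)
  have hadd := add_rpow_le_rpow_add_mul_rpow hp₀.le hp₁ (x := 1 / s) (y := 1 / s - 1)
    (by linarith) (by linarith)
  rw [← Real.rpow_le_rpow_iff (mul_nonneg (half_pos hp₀).le (nonneg hp₀.le hs))
    (nonneg hp₀.le (Ioc_subset_Icc_self hhalf)) hp₀,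
    Real.mul_rpow (half_pos hp₀).le (nonneg hp₀.le hs), rpow_eq hp₀ hhalf,
    rpow_eq hp₀ ⟨hs₀, hs.2⟩, half_eq hp₀, Real.rpow_inv_rpow hpow hp₀.ne', hdouble,
    Real.mul_rpow two_pos.le (by linarith), show 2 * (1 / s) - 1 = 1 / s + (1 / s - 1) by ring]
  linarith

theorem intervalIntegrable (hp₀ : 0 < p) (hp₁ : p ≤ 1) {a b : ℝ} (ha : a ∈ Icc (0 : ℝ) 1)
    (hb : b ∈ Icc (0 : ℝ) 1) : IntervalIntegrable (profile p) MeasureTheory.volume a b :=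
  ((monotoneOn hp₀ hp₁).mono (uIcc_subset_Icc ha hb)).intervalIntegrable

theorem half_mul_integral_le (hp₀ : 0 < p) (hp₁ : p ≤ 1) :
    profile p (1 / 2) * ∫ x in (0 : ℝ)..1, profile p x
      ≤ 2 * ∫ x in (0 : ℝ)..(1 / 2), profile p x := by
  have hint : IntervalIntegrable (fun x => profile p (x / 2)) MeasureTheory.volume 0 1 := by
    refine MonotoneOn.intervalIntegrable fun x hx y hy hxy => ?_
    rw [uIcc_of_le zero_le_one] at hx hy
    exact monotoneOn hp₀ hp₁ ⟨by linarith [hx.1], by linarith [hx.2]⟩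
      ⟨by linarith [hy.1], by linarith [hy.2]⟩ (by linarith)
  calc profile p (1 / 2) * ∫ x in (0 : ℝ)..1, profile p x
      = ∫ x in (0 : ℝ)..1, profile p (1 / 2) * profile p x :=
        (intervalIntegral.integral_const_mul _ _).symm
    _ ≤ ∫ x in (0 : ℝ)..1, profile p (x / 2) :=
        intervalIntegral.integral_mono_on zero_le_one
          ((intervalIntegrable hp₀ hp₁ (by simp) (by simp)).const_mul _) hint
          fun x hx => half_mul_le hp₀ hp₁ hx
    _ = 2 * ∫ x in (0 : ℝ)..(1 / 2), profile p x := by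
        simp [intervalIntegral.integral_comp_div]

theorem half_le_mul_integral (hp₀ : 0 < p) (hp₁ : p ≤ 1) :
    profile p (1 / 2) ≤ (2 - profile p (1 / 2)) * ∫ x in (0 : ℝ)..1, profile p x := by
  have hmem : (1 / 2 : ℝ) ∈ Icc (0 : ℝ) 1 := by norm_num
  have hsplit := intervalIntegral.integral_add_adjacent_intervals
    (intervalIntegrable hp₀ hp₁ (left_mem_Icc.2 zero_le_one) hmem)
    (intervalIntegrable hp₀ hp₁ hmem (right_mem_Icc.2 zero_le_one))
  have hupper := mul_left_endpoint_le_integral hmem.2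
    ((monotoneOn hp₀ hp₁).mono (Icc_subset_Icc_left hmem.1))
  linarith [half_mul_integral_le hp₀ hp₁]

end profile

theorem dominationConst_eq {p : ℝ} (hp : 0 < p) :
    dominationConst p = (2 - profile p (1 / 2)) / profile p (1 / 2) := by
  have hpow : (0 : ℝ) ≤ 2 ^ p - 1 := sub_nonneg.2 (Real.one_le_rpow one_le_two hp.le)
  rw [sub_div, div_self (profile.half_pos hp).ne', dominationConst, one_div p, Real.rpow_neg hpow,
    ← profile.half_eq hp, ← div_eq_mul_inv]

theorem dominationConst_nonneg {p : ℝ} (hp : 0 < p) : 0 ≤ dominationConst p := by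
  rw [dominationConst_eq hp]
  exact div_nonneg (sub_nonneg.2 (profile.half_le_two hp)) (profile.half_pos hp).le

theorem one_le_dominationConst_mul_integral {p : ℝ} (hp₀ : 0 < p) (hp₁ : p ≤ 1) :
    1 ≤ dominationConst p * ∫ x in (0 : ℝ)..1, profile p x := by
  rw [dominationConst_eq hp₀, div_mul_eq_mul_div, one_le_div (profile.half_pos hp₀)]
  exact profile.half_le_mul_integral hp₀ hp₁

section BooleanAlgebra

variable {α : Type*} [BooleanAlgebra α] {φ μ ν : α → ℝ} {p : ℝ}

/-- Supermeasures on a Boolean algebra. Monotonicity and `φ ⊥ = 0` follow from the two fields. -/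
structure IsSupermeasure (φ : α → ℝ) : Prop where
  nonneg : 0 ≤ φ
  add_le_sup ⦃a b : α⦄ : Disjoint a b → φ a + φ b ≤ φ (a ⊔ b)

/-- Upper `p`-estimates, stated for `φ ^ p`: the powers are real, so they behave as intended for
nonnegative `φ`. -/
def HasUpperEstimate (p : ℝ) (φ : α → ℝ) : Prop :=
  ∀ ⦃a b : α⦄, Disjoint a b → φ (a ⊔ b) ^ p ≤ φ a ^ p + φ b ^ p

/-- Signed finitely additive measures on a Boolean algebra. -/
def IsFinitelyAdditive (μ : α → ℝ) : Prop :=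
  ∀ ⦃a b : α⦄, Disjoint a b → μ (a ⊔ b) = μ a + μ b

/-- The finitely additive `μ ≥ φ`. They are automatically positive measures when `0 ≤ φ`. -/
def additiveMajorants (φ : α → ℝ) : Set (α → ℝ) := {μ | IsFinitelyAdditive μ ∧ φ ≤ μ}

/-- Additive majorants whose total mass is the least possible. -/
structure IsLeastMassMajorant (φ μ : α → ℝ) : Prop where
  mem : μ ∈ additiveMajorants φ
  top_le : ∀ ν ∈ additiveMajorants φ, μ ⊤ ≤ ν ⊤

theorem IsSupermeasure.monotone (hφ : IsSupermeasure φ) : Monotone φ := fun a b hab => by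
  have h := hφ.add_le_sup (disjoint_sdiff_self_right (x := a) (y := b))
  rw [sup_sdiff_cancel_right hab] at h
  have h₀ : 0 ≤ φ (b \ a) := hφ.nonneg _
  linarith

theorem HasUpperEstimate.rpow_le_sdiff_add (hφp : HasUpperEstimate p φ) (hp : 0 ≤ p)
    (hφ : 0 ≤ φ) (hmono : Monotone φ) (a b : α) : φ a ^ p ≤ φ (a \ b) ^ p + φ b ^ p := by
  have h := hφp (disjoint_inf_sdiff (x := a) (y := b)).symm
  rw [sup_comm, sup_inf_sdiff] at h
  have hinf := Real.rpow_le_rpow (hφ _) (hmono (inf_le_right : a ⊓ b ≤ b)) hp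
  linarith

namespace IsFinitelyAdditive

theorem map_bot (hμ : IsFinitelyAdditive μ) : μ ⊥ = 0 := by
  simpa using hμ (disjoint_bot_left (a := (⊥ : α)))

theorem inf_add_sdiff (hμ : IsFinitelyAdditive μ) (a b : α) : μ (a ⊓ b) + μ (a \ b) = μ a := by
  rw [← hμ disjoint_inf_sdiff, sup_inf_sdiff]

theorem compl_add (hμ : IsFinitelyAdditive μ) (a : α) : μ a + μ aᶜ = μ ⊤ := by
  rw [← hμ disjoint_compl_right, sup_compl_eq_top]

theorem sdiff_right (hμ : IsFinitelyAdditive μ) (c : α) :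
    IsFinitelyAdditive fun a => μ (a \ c) := fun a b hab => by
  simp only [sup_sdiff]
  exact hμ (hab.mono sdiff_le sdiff_le)

theorem add (hμ : IsFinitelyAdditive μ) (hν : IsFinitelyAdditive ν) :
    IsFinitelyAdditive (μ + ν) := fun a b hab => by
  simp only [Pi.add_apply, hμ hab, hν hab]
  ring

theorem const_smul (hμ : IsFinitelyAdditive μ) (c : ℝ) : IsFinitelyAdditive (c • μ) :=
  fun a b hab => by simp only [Pi.smul_apply, hμ hab, smul_add]

theorem monotone (hμ : IsFinitelyAdditive μ) (hμ₀ : 0 ≤ μ) : Monotone μ :=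
  IsSupermeasure.monotone ⟨hμ₀, fun _ _ hab => (hμ hab).ge⟩

end IsFinitelyAdditive

theorem isClosed_additiveMajorants (φ : α → ℝ) : IsClosed (additiveMajorants φ) := by
  simp only [additiveMajorants, IsFinitelyAdditive, ofPred_and, ofPred_forall]
  exact (isClosed_iInter fun a => isClosed_iInter fun b => isClosed_iInter fun _ =>
    isClosed_eq (by fun_prop) (by fun_prop)).inter isClosed_Ici

theorem exists_isLeastMassMajorant (hφ : 0 ≤ φ) (hne : (additiveMajorants φ).Nonempty) :
    ∃ μ, IsLeastMassMajorant φ μ := by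
  obtain ⟨ν, hν⟩ := hne
  let X : Set (α → ℝ) := additiveMajorants φ ∩ {μ | μ ⊤ ≤ ν ⊤}
  have hclosed : IsClosed X :=
    (isClosed_additiveMajorants φ).inter (isClosed_le (by fun_prop) (by fun_prop))
  have hbox : X ⊆ univ.pi fun _ => Icc 0 (ν ⊤) := fun μ hμ a _ =>
    have hμ₀ : 0 ≤ μ := hφ.trans hμ.1.2
    ⟨hμ₀ a, (hμ.1.1.monotone hμ₀ le_top).trans hμ.2⟩
  obtain ⟨μ, hμ, hmin⟩ :=
    ((isCompact_univ_pi fun _ => isCompact_Icc).of_isClosed_subset hclosed hbox).exists_isMinOn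
      (f := fun μ : α → ℝ => μ ⊤) ⟨ν, hν, le_refl (ν ⊤)⟩ (by fun_prop)
  refine ⟨μ, hμ.1, fun κ hκ => ?_⟩
  rcases le_total (κ ⊤) (ν ⊤) with h | h
  · exact hmin ⟨hκ, h⟩
  · exact hμ.2.trans h

theorem IsSupermeasure.mul_integral_profile_le_sup (hp₀ : 0 < p) (hp₁ : p ≤ 1)
    (hφ : IsSupermeasure φ) (hμ : IsFinitelyAdditive μ) (hμ₀ : 0 ≤ μ) (htop : 0 < μ ⊤) {a b : α}
    (hab : Disjoint a b) (ha : μ ⊤ * ∫ x in (μ aᶜ / μ ⊤)..1, profile p x ≤ φ a)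
    (hb : μ b * profile p (μ aᶜ / μ ⊤) ≤ φ b) :
    μ ⊤ * ∫ x in (μ (a ⊔ b)ᶜ / μ ⊤)..1, profile p x ≤ φ (a ⊔ b) := by
  have hmem (c : α) : μ c / μ ⊤ ∈ Icc (0 : ℝ) 1 :=
    ⟨div_nonneg (hμ₀ c) htop.le, (div_le_one htop).2 (hμ.monotone hμ₀ le_top)⟩
  have hcompl : μ aᶜ = μ (a ⊔ b)ᶜ + μ b := by
    linarith [hμ.compl_add a, hμ.compl_add (a ⊔ b), hμ hab]
  have hwidth : μ ⊤ * (μ aᶜ / μ ⊤ - μ (a ⊔ b)ᶜ / μ ⊤) = μ b := by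
    rw [hcompl]
    field_simp
    ring
  have hstep : ∫ x in (μ (a ⊔ b)ᶜ / μ ⊤)..(μ aᶜ / μ ⊤), profile p x
      ≤ (μ aᶜ / μ ⊤ - μ (a ⊔ b)ᶜ / μ ⊤) * profile p (μ aᶜ / μ ⊤) :=
    integral_le_mul_right_endpoint
      (div_le_div_of_nonneg_right (hμ.monotone hμ₀ (compl_le_compl le_sup_left)) htop.le)
      ((profile.monotoneOn hp₀ hp₁).mono (Icc_subset_Icc (hmem _).1 (hmem _).2))
  calc μ ⊤ * ∫ x in (μ (a ⊔ b)ᶜ / μ ⊤)..1, profile p x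
      = μ ⊤ * (∫ x in (μ (a ⊔ b)ᶜ / μ ⊤)..(μ aᶜ / μ ⊤), profile p x)
          + μ ⊤ * ∫ x in (μ aᶜ / μ ⊤)..1, profile p x := by
        rw [← mul_add, intervalIntegral.integral_add_adjacent_intervals
          (profile.intervalIntegrable hp₀ hp₁ (hmem _) (hmem _))
          (profile.intervalIntegrable hp₀ hp₁ (hmem _) (by simp))]
    _ ≤ μ b * profile p (μ aᶜ / μ ⊤) + φ a := by
        rw [← hwidth, mul_assoc]
        exact add_le_add (mul_le_mul_of_nonneg_left hstep htop.le) ha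
    _ ≤ φ (a ⊔ b) := by linarith [hφ.add_le_sup hab]

section Finite

theorem setOf_isAtom_le_sup (a b : α) :
    {c | IsAtom c ∧ c ≤ a ⊔ b} = {c | IsAtom c ∧ c ≤ a} ∪ {c | IsAtom c ∧ c ≤ b} := by
  ext c
  refine ⟨fun ⟨hc, hle⟩ => ?_, ?_⟩
  · by_cases hca : c ≤ a
    · exact .inl ⟨hc, hca⟩
    · exact .inr ⟨hc, Disjoint.left_le_of_le_sup_left hle (hc.not_le_iff_disjoint.1 hca)⟩
  · rintro (⟨hc, hle⟩ | ⟨hc, hle⟩)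
    · exact ⟨hc, le_sup_of_le_left hle⟩
    · exact ⟨hc, le_sup_of_le_right hle⟩

theorem isFinitelyAdditive_ncard_atoms [Finite α] :
    IsFinitelyAdditive fun a : α => ({c | IsAtom c ∧ c ≤ a}.ncard : ℝ) := fun a b hab => by
  have hdisj : Disjoint {c | IsAtom c ∧ c ≤ a} {c | IsAtom c ∧ c ≤ b} :=
    Set.disjoint_left.2 fun c hca hcb => hca.1.1 (disjoint_self.1 (hab.mono hca.2 hcb.2))
  simp only [setOf_isAtom_le_sup, ncard_union_eq hdisj, Nat.cast_add]

theorem additiveMajorants_nonempty_of_finite [Finite α] (hφ : IsSupermeasure φ) :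
    (additiveMajorants φ).Nonempty := by
  refine ⟨_, (isFinitelyAdditive_ncard_atoms (α := α)).const_smul (φ ⊤), fun a => ?_⟩
  have htop : 0 ≤ φ ⊤ := hφ.nonneg ⊤
  rcases eq_bot_or_exists_atom_le a with rfl | ⟨c, hc⟩
  · have h := hφ.add_le_sup (disjoint_bot_left (a := (⊥ : α)))
    rw [sup_idem] at h
    exact (by linarith : φ ⊥ ≤ 0).trans (mul_nonneg htop (Nat.cast_nonneg _))
  · have hcard : (1 : ℝ) ≤ {c | IsAtom c ∧ c ≤ a}.ncard :=
      mod_cast (ncard_pos (toFinite _)).2 ⟨c, hc⟩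
    exact (hφ.monotone le_top).trans (le_mul_of_one_le_right htop hcard)

namespace IsLeastMassMajorant

variable [Finite α]

theorem exists_tight_neg (hμ : IsLeastMassMajorant φ μ) (hν : IsFinitelyAdditive ν)
    (hneg : ν ⊤ < 0) : ∃ b, φ b = μ b ∧ ν b < 0 := by
  by_contra! hcon
  have hdom : ∀ᶠ ε : ℝ in 𝓝[>] 0, ∀ b, φ b ≤ (μ + ε • ν) b := by
    refine eventually_all.2 fun b => ?_
    rcases (hμ.mem.2 b).lt_or_eq with hlt | htight
    · have hlim : Tendsto (fun ε : ℝ => (μ + ε • ν) b) (𝓝 0) (𝓝 (μ b)) :=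
        Continuous.tendsto' (by simp only [Pi.add_apply, Pi.smul_apply]; fun_prop) _ _ (by simp)
      exact nhdsWithin_le_nhds ((hlim.eventually_const_lt hlt).mono fun _ => le_of_lt)
    · filter_upwards [self_mem_nhdsWithin] with ε hε
      exact htight.le.trans (le_add_of_nonneg_right (mul_nonneg (le_of_lt hε) (hcon b htight)))
  obtain ⟨ε, hε, hle⟩ := (eventually_mem_nhdsWithin.and hdom).exists
  have hmass : μ ⊤ ≤ μ ⊤ + ε * ν ⊤ := hμ.top_le _ ⟨hμ.mem.1.add (hν.const_smul ε), hle⟩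
  linarith [mul_neg_of_pos_of_neg hε hneg]

theorem exists_tight_mul_le_sdiff (hφ : 0 ≤ φ) (hμ : IsLeastMassMajorant φ μ) (htop : 0 < μ ⊤)
    (P : α) : ∃ b, φ b = μ b ∧ 0 < μ b ∧ μ Pᶜ / μ ⊤ * μ b ≤ μ (b \ P) := by
  by_contra! hcon
  have hadd := hμ.mem.1
  have hμ₀ : 0 ≤ μ := hφ.trans hμ.mem.2
  -- At `s = μ Pᶜ / μ ⊤` the measure `s μ - μ (· \ P)` has mass `0`; below it the mass is negative.
  have hev : ∀ᶠ s in 𝓝[<] (μ Pᶜ / μ ⊤), ∀ b, φ b = μ b → 0 < μ b → μ (b \ P) < s * μ b := by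
    refine eventually_all.2 fun b => ?_
    by_cases hb : φ b = μ b ∧ 0 < μ b
    · have hlim : Tendsto (fun s => s * μ b) (𝓝 (μ Pᶜ / μ ⊤)) (𝓝 (μ Pᶜ / μ ⊤ * μ b)) :=
        tendsto_id.mul_const _
      exact nhdsWithin_le_nhds
        ((hlim.eventually_const_lt (hcon b hb.1 hb.2)).mono fun _ h _ _ => h)
    · exact .of_forall fun _ htight hpos => (hb ⟨htight, hpos⟩).elim
  obtain ⟨s, hs, hlt⟩ := (eventually_mem_nhdsWithin.and hev).exists
  have hneg : (s • μ + (-1 : ℝ) • fun a => μ (a \ P)) ⊤ < 0 := by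
    have := (lt_div_iff₀ htop).1 hs
    simp only [Pi.add_apply, Pi.smul_apply, smul_eq_mul, top_sdiff]
    linarith
  obtain ⟨b, htight, hb⟩ :=
    hμ.exists_tight_neg ((hadd.const_smul s).add ((hadd.sdiff_right P).const_smul (-1))) hneg
  simp only [Pi.add_apply, Pi.smul_apply, smul_eq_mul] at hb
  rcases (hμ₀ b).eq_or_lt with hzero | hpos
  · have hle : μ (b \ P) ≤ μ b := hadd.monotone hμ₀ sdiff_le
    have hzero' : μ b = 0 := hzero.symm
    rw [hzero', mul_zero] at hb
    linarith
  · linarith [hlt b htight hpos]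

theorem exists_disjoint_mul_profile_le (hp₀ : 0 < p) (hp₁ : p ≤ 1) (hφ : 0 ≤ φ)
    (hφp : HasUpperEstimate p φ) (hμ : IsLeastMassMajorant φ μ) {P : α} (hP : 0 < μ Pᶜ) :
    ∃ b, Disjoint P b ∧ 0 < μ b ∧ μ b * profile p (μ Pᶜ / μ ⊤) ≤ φ b := by
  have hadd := hμ.mem.1
  have hμ₀ : 0 ≤ μ := hφ.trans hμ.mem.2
  have htop : 0 < μ ⊤ := hP.trans_le (hadd.monotone hμ₀ le_top)
  have hr : μ Pᶜ / μ ⊤ ∈ Ioc (0 : ℝ) 1 :=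
    ⟨div_pos hP htop, (div_le_one htop).2 (hadd.monotone hμ₀ le_top)⟩
  obtain ⟨b, htight, hb, hfrac⟩ := hμ.exists_tight_mul_le_sdiff hφ htop P
  have hpos : 0 < μ (b \ P) := (mul_pos hr.1 hb).trans_le hfrac
  refine ⟨b \ P, disjoint_sdiff_self_right, hpos, ?_⟩
  have hinf : μ (b ⊓ P) = μ b - μ (b \ P) := eq_sub_of_add_eq (hadd.inf_add_sdiff b P)
  have hinfpow : φ (b ⊓ P) ^ p ≤ (μ b - μ (b \ P)) ^ p :=
    Real.rpow_le_rpow (hφ _) (hinf ▸ hμ.mem.2 (b ⊓ P)) hp₀.le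
  have hupper : μ b ^ p ≤ φ (b ⊓ P) ^ p + φ (b \ P) ^ p := by
    simpa only [sup_inf_sdiff, htight] using hφp (disjoint_inf_sdiff (x := b) (y := P))
  have hincr := rpow_sub_rpow_sub_le_s1 hp₀.le hp₁ hpos.le (hadd.monotone hμ₀ sdiff_le)
    ((le_div_iff₀ hr.1).2 (by linarith) : μ b ≤ μ (b \ P) / (μ Pᶜ / μ ⊤))
  rw [← Real.rpow_le_rpow_iff
    (mul_nonneg hpos.le (profile.nonneg hp₀.le (Ioc_subset_Icc_self hr))) (hφ _) hp₀,
    profile.mul_rpow hp₀ hr hpos.le]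
  linarith

theorem mul_integral_profile_le (hp₀ : 0 < p) (hp₁ : p ≤ 1) (hφ : IsSupermeasure φ)
    (hφp : HasUpperEstimate p φ) (hμ : IsLeastMassMajorant φ μ) :
    μ ⊤ * ∫ x in (0 : ℝ)..1, profile p x ≤ φ ⊤ := by
  have hμ₀ : 0 ≤ μ := hφ.nonneg.trans hμ.mem.2
  rcases (hμ₀ ⊤).eq_or_lt with hzero | htop
  · rw [← hzero]
    simpa using hφ.nonneg ⊤
  let good : Set α := {a | μ ⊤ * ∫ x in (μ aᶜ / μ ⊤)..1, profile p x ≤ φ a}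
  have hbot : ⊥ ∈ good := by simpa [good, div_self htop.ne'] using hφ.nonneg ⊥
  obtain ⟨P, hP, hmax⟩ := (toFinite good).exists_maximal ⟨⊥, hbot⟩
  rcases (hμ₀ Pᶜ).eq_or_lt with hzero | hpos
  · have hP' : μ ⊤ * ∫ x in (μ Pᶜ / μ ⊤)..1, profile p x ≤ φ P := hP
    rw [← hzero, Pi.zero_apply, zero_div] at hP'
    exact hP'.trans (hφ.monotone le_top)
  · obtain ⟨b, hdisj, hb, hle⟩ :=
      hμ.exists_disjoint_mul_profile_le hp₀ hp₁ hφ.nonneg hφp hpos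
    have hsup : P ⊔ b ∈ good :=
      hφ.mul_integral_profile_le_sup hp₀ hp₁ hμ.mem.1 hμ₀ htop hdisj hP hle
    have hb_bot : b = ⊥ := hdisj.eq_bot_of_ge (le_sup_right.trans (hmax hsup le_sup_left))
    rw [hb_bot, hμ.mem.1.map_bot] at hb
    exact hb.false.elim

theorem top_le_dominationConst_mul (hp₀ : 0 < p) (hp₁ : p ≤ 1) (hφ : IsSupermeasure φ)
    (hφp : HasUpperEstimate p φ) (hμ : IsLeastMassMajorant φ μ) :
    μ ⊤ ≤ dominationConst p * φ ⊤ := by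
  have hμ₀ : 0 ≤ μ := hφ.nonneg.trans hμ.mem.2
  calc μ ⊤ ≤ μ ⊤ * (dominationConst p * ∫ x in (0 : ℝ)..1, profile p x) :=
        le_mul_of_one_le_right (hμ₀ ⊤) (one_le_dominationConst_mul_integral hp₀ hp₁)
    _ = dominationConst p * (μ ⊤ * ∫ x in (0 : ℝ)..1, profile p x) := mul_left_comm _ _ _
    _ ≤ dominationConst p * φ ⊤ :=
        mul_le_mul_of_nonneg_left (hμ.mul_integral_profile_le hp₀ hp₁ hφ hφp)
          (dominationConst_nonneg hp₀)

end IsLeastMassMajorant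

end Finite

section Subalgebra

theorem finite_booleanSubalgebra_closure {s : Set α} (hs : s.Finite) :
    Finite (BooleanSubalgebra.closure s) := by
  let t : Set α := latticeClosure (s ∪ {⊥, ⊤})
  have ht : t.Finite := (hs.union (by simp)).latticeClosure
  have hst : s ∪ {⊥, ⊤} ⊆ t := subset_latticeClosure
  have := ht.to_subtype
  have hfin : (BooleanSubalgebra.closure t : Set α).Finite := by
    refine (finite_range fun u : Finset (t × t) => u.sup fun x => x.1.1 \ x.2.1).subset
      fun a ha => ?_
    obtain ⟨u, rfl⟩ := (BooleanSubalgebra.mem_closure_iff_sup_sdiff isSublattice_latticeClosure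
      (hst (by simp)) (hst (by simp))).1 ha
    exact mem_range_self u
  exact (hfin.subset (BooleanSubalgebra.closure_mono (subset_union_left.trans hst))).to_subtype

theorem disjoint_coe_iff {L : BooleanSubalgebra α} {a b : L} :
    Disjoint (a : α) b ↔ Disjoint a b := by
  simp [disjoint_iff, Subtype.ext_iff]

theorem IsSupermeasure.restrict (hφ : IsSupermeasure φ) (L : BooleanSubalgebra α) :
    IsSupermeasure fun a : L => φ a :=
  ⟨fun _ => hφ.nonneg _, fun _ _ hab => hφ.add_le_sup (disjoint_coe_iff.2 hab)⟩

theorem HasUpperEstimate.restrict (hφp : HasUpperEstimate p φ) (L : BooleanSubalgebra α) :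
    HasUpperEstimate p fun a : L => φ a :=
  fun _ _ hab => hφp (disjoint_coe_iff.2 hab)

theorem exists_additiveMajorant_le_of_finite {C : ℝ} (hφ : 0 ≤ φ)
    (hfin : ∀ L : BooleanSubalgebra α, Finite L →
      ∃ μ ∈ additiveMajorants fun a : L => φ a, μ ⊤ ≤ C) :
    ∃ μ ∈ additiveMajorants φ, μ ⊤ ≤ C := by
  let cl (S : Finset α) : BooleanSubalgebra α := BooleanSubalgebra.closure S
  have hlocal (S : Finset α) : ∃ m : α → Icc 0 C,
      (fun a : cl S => (m a : ℝ)) ∈ additiveMajorants fun a : cl S => φ a := by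
    obtain ⟨ν, hν, htop⟩ := hfin (cl S) (finite_booleanSubalgebra_closure S.finite_toSet)
    have hν₀ : 0 ≤ ν := fun a => (hφ a).trans (hν.2 a)
    let νIcc (a : cl S) : Icc 0 C := ⟨ν a, hν₀ a, (hν.1.monotone hν₀ le_top).trans htop⟩
    have : Nonempty (Icc 0 C) := ⟨νIcc ⊤⟩
    obtain ⟨m, hm⟩ := Subtype.val_injective.surjective_comp_right νIcc
    have hmν : (fun a : cl S => (m a : ℝ)) = ν :=
      funext fun a => congr_arg Subtype.val (congr_fun hm a)
    exact ⟨m, hmν ▸ hν⟩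
  choose m hm using hlocal
  have : Nonempty (α → Icc 0 C) := ⟨m ∅⟩
  let U : Ultrafilter (Finset α) := .of atTop
  let μ : α → Icc 0 C := (U.map m).lim
  have hlim (a : α) : Tendsto (fun S => (m S a : ℝ)) U (𝓝 (μ a)) := by
    have hcont : Continuous fun f : α → Icc 0 C => (f a : ℝ) := by fun_prop
    exact (hcont.tendsto μ).comp (U.map m).le_nhds_lim
  have hmem (a : α) : ∀ᶠ S in (U : Filter (Finset α)), a ∈ cl S :=
    ((eventually_ge_atTop {a}).filter_mono (Ultrafilter.of_le atTop)).mono fun _ hS =>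
      BooleanSubalgebra.subset_closure (Finset.singleton_subset_iff.1 hS)
  refine ⟨fun a => μ a, ⟨fun a b hab => ?_, fun a => ge_of_tendsto (hlim a) ?_⟩, (μ ⊤).2.2⟩
  · refine tendsto_nhds_unique_of_eventuallyEq (hlim _) ((hlim a).add (hlim b)) ?_
    filter_upwards [hmem a, hmem b] with S ha hb
    exact (hm S).1 (disjoint_coe_iff.1 hab : Disjoint (⟨a, ha⟩ : cl S) ⟨b, hb⟩)
  · filter_upwards [hmem a] with S ha
    exact (hm S).2 ⟨a, ha⟩

theorem exists_additiveMajorant_le_dominationConst_mul (hp₀ : 0 < p) (hp₁ : p ≤ 1)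
    (hφ : IsSupermeasure φ) (hφp : HasUpperEstimate p φ) :
    ∃ μ ∈ additiveMajorants φ, μ ⊤ ≤ dominationConst p * φ ⊤ := by
  refine exists_additiveMajorant_le_of_finite hφ.nonneg fun L _ => ?_
  have hL := hφ.restrict L
  obtain ⟨μ, hμ⟩ :=
    exists_isLeastMassMajorant hL.nonneg (additiveMajorants_nonempty_of_finite hL)
  exact ⟨μ, hμ.mem, hμ.top_le_dominationConst_mul hp₀ hp₁ hL (hφp.restrict L)⟩

end Subalgebra

theorem IsLeastMassMajorant.tendsto_zero (hp : 0 < p) (hφ : 0 ≤ φ) (hmono : Monotone φ)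
    (hφp : HasUpperEstimate p φ) (hμ : IsLeastMassMajorant φ μ) :
    Tendsto μ (comap φ (𝓝 0)) (𝓝 0) := by
  have hadd := hμ.mem.1
  have hμ₀ : 0 ≤ μ := hφ.trans hμ.mem.2
  refine (tendsto_iff_ultrafilter _ _ _).2 fun U hU => ?_
  have hφU : Tendsto φ U (𝓝 0) := tendsto_iff_comap.2 hU
  have hmem (a b : α) : μ (a \ b) ∈ Icc 0 (μ a) := ⟨hμ₀ _, hadd.monotone hμ₀ sdiff_le⟩
  choose ν hν hlim using fun a : α =>
    isCompact_Icc.ultrafilter_le_nhds' (U.map fun b : α => μ (a \ b))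
      (Ultrafilter.mem_map.2 (univ_mem' (hmem a)))
  have hlim (a : α) : Tendsto (fun b => μ (a \ b)) U (𝓝 (ν a)) := hlim a
  have hνadd : IsFinitelyAdditive ν := fun a b hab =>
    tendsto_nhds_unique (hlim (a ⊔ b))
      (((hlim a).add (hlim b)).congr fun c => (hadd.sdiff_right c hab).symm)
  have hφν : φ ≤ ν := fun a => by
    have hpow : Tendsto (fun b => μ (a \ b) ^ p + φ b ^ p) U (𝓝 (ν a ^ p)) := by
      simpa [Real.zero_rpow hp.ne'] using
        ((hlim a).rpow_const (.inr hp.le)).add (hφU.rpow_const (.inr hp.le))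
    refine (Real.rpow_le_rpow_iff (hφ a) (hν a).1 hp).1 (ge_of_tendsto' hpow fun b => ?_)
    have hdiff := Real.rpow_le_rpow (hφ _) (hμ.mem.2 (a \ b)) hp.le
    linarith [hφp.rpow_le_sdiff_add hp.le hφ hmono a b]
  have htop : ν ⊤ = μ ⊤ := (hν ⊤).2.antisymm (hμ.top_le ν ⟨hνadd, hφν⟩)
  have hzero := (hlim ⊤).const_sub (μ ⊤)
  rw [htop, sub_self] at hzero
  exact hzero.congr fun b => by rw [top_sdiff, ← hadd.compl_add b, add_sub_cancel_right]

theorem supermeasure_upper_estimate_dominated_by_measure_general (hp₀ : 0 < p) (hp₁ : p ≤ 1)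
    (hφ : IsSupermeasure φ) (hφp : HasUpperEstimate p φ) :
    ∃ μ, IsFinitelyAdditive μ ∧ φ ≤ μ ∧ μ ⊤ ≤ dominationConst p * φ ⊤ ∧
      Tendsto μ (comap φ (𝓝 0)) (𝓝 0) := by
  obtain ⟨ν, hν, htop⟩ := exists_additiveMajorant_le_dominationConst_mul hp₀ hp₁ hφ hφp
  obtain ⟨μ, hμ⟩ := exists_isLeastMassMajorant hφ.nonneg ⟨ν, hν⟩
  exact ⟨μ, hμ.mem.1, hμ.mem.2, (hμ.top_le ν hν).trans htop,
    hμ.tendsto_zero hp₀ hφ.nonneg hφ.monotone hφp⟩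

end BooleanAlgebra

/-- An algebra of sets, viewed as a Boolean subalgebra of the power set. -/
def setAlgebraSubalgebra {Ω : Type*} {𝒜 : Set (Set Ω)} (h𝒜 : MeasureTheory.IsSetAlgebra 𝒜) :
    BooleanSubalgebra (Set Ω) where
  carrier := 𝒜
  supClosed' _ hA _ hB := h𝒜.union_mem hA hB
  infClosed' _ hA _ hB := h𝒜.inter_mem hA hB
  compl_mem' hA := h𝒜.compl_mem hA
  bot_mem' := h𝒜.empty_mem

/-- Let `𝒜` be an algebra of subsets of a set `Ω` and `0 < p < 1`.
If `φ : 𝒜 → ℝ` is a normalized supermeasure satisfying an upper `p`-estimate (i.e. `φ^p`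
is a submeasure), then there is a finitely additive measure `λ` on `𝒜` with `λ ≥ φ`,
`λ(Ω) ≤ K_p = 2 (2^p - 1)^{-1/p} - 1`, and `λ` is `φ`-continuous. -/
theorem supermeasure_upper_estimate_dominated_by_measure
    {Ω : Type*} (𝒜 : Set (Set Ω))
    (h_empty : (∅ : Set Ω) ∈ 𝒜) (h_univ : (univ : Set Ω) ∈ 𝒜)
    (h_compl : ∀ A ∈ 𝒜, Aᶜ ∈ 𝒜)
    (h_union : ∀ A ∈ 𝒜, ∀ B ∈ 𝒜, A ∪ B ∈ 𝒜)
    (p : ℝ) (hp0 : 0 < p) (hp1 : p < 1)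
    (φ : Set Ω → ℝ)
    (hφ_empty : φ ∅ = 0)
    (hφ_mono : ∀ A ∈ 𝒜, ∀ B ∈ 𝒜, A ⊆ B → φ A ≤ φ B)
    (hφ_norm : φ univ = 1)
    (hφ_super : ∀ A ∈ 𝒜, ∀ B ∈ 𝒜, Disjoint A B → φ A + φ B ≤ φ (A ∪ B))
    (hφ_upper : ∀ A ∈ 𝒜, ∀ B ∈ 𝒜, Disjoint A B → φ (A ∪ B) ^ p ≤ φ A ^ p + φ B ^ p) :
    ∃ lam : Set Ω → ℝ,
      lam ∅ = 0 ∧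
      (∀ A ∈ 𝒜, ∀ B ∈ 𝒜, A ⊆ B → lam A ≤ lam B) ∧
      (∀ A ∈ 𝒜, ∀ B ∈ 𝒜, Disjoint A B → lam (A ∪ B) = lam A + lam B) ∧
      (∀ A ∈ 𝒜, φ A ≤ lam A) ∧
      lam univ ≤ 2 * ((2 : ℝ) ^ p - 1) ^ (-(1 / p)) - 1 ∧
      (∀ F : ℕ → Set Ω, (∀ n, F n ∈ 𝒜) →
        Tendsto (fun n => φ (F n)) atTop (𝓝 0) →
        Tendsto (fun n => lam (F n)) atTop (𝓝 0)) := by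
  let L : BooleanSubalgebra (Set Ω) := setAlgebraSubalgebra
    ⟨h_empty, fun A hA => h_compl A hA, fun A B hA hB => h_union A hA B hB⟩
  have hφ : IsSupermeasure fun A : L => φ A :=
    ⟨fun A => hφ_empty.symm.trans_le (hφ_mono ∅ h_empty A A.2 (empty_subset _)),
      fun A B hAB => hφ_super A A.2 B B.2 (disjoint_coe_iff.2 hAB)⟩
  have hφp : HasUpperEstimate p fun A : L => φ A :=
    fun A B hAB => hφ_upper A A.2 B B.2 (disjoint_coe_iff.2 hAB)
  obtain ⟨μ, hμ, hφμ, htop, hcont⟩ :=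
    supermeasure_upper_estimate_dominated_by_measure_general hp0 hp1.le hφ hφp
  obtain ⟨lam, rfl⟩ := Subtype.val_injective.surjective_comp_right μ
  have hmono := hμ.monotone (hφ.nonneg.trans hφμ)
  refine ⟨lam, hμ.map_bot, fun A hA B hB hAB => ?_, fun A hA B hB hAB => ?_,
    fun A hA => hφμ ⟨A, hA⟩, ?_, fun F hF hlim => ?_⟩
  · exact hmono (a := ⟨A, hA⟩) (b := ⟨B, hB⟩) hAB
  · exact hμ (disjoint_coe_iff.1 hAB : Disjoint (⟨A, hA⟩ : L) ⟨B, hB⟩)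
  · exact htop.trans_eq (by simp [hφ_norm, dominationConst])
  · let G (n : ℕ) : L := ⟨F n, hF n⟩
    exact hcont.comp (tendsto_comap_iff.2 hlim : Tendsto G atTop (comap (fun A : L => φ A) (𝓝 0)))
end

section
/- Let 𝒜 be an algebra of subsets of a set Ω and let φ be a submeasure on 𝒜 such that for some constant c > 0 and some q < ∞ one has φ(A_1 ∪ ⋯ ∪ A_n) ≥ c (φ(A_1)^q + ⋯ + φ(A_n)^q)^{1/q} whenever A_1, …, A_n ∈ 𝒜 are pairwise disjoint. Then there is a finitely additive measure μ on 𝒜 which is equivalent to φ, i.e. for every sequence (A_n) in 𝒜, φ(A_n) → 0 if and only if μ(A_n) → 0. -/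
open Set Filter Topology
open MeasureTheory BoundedContinuousFunction
open scoped ENNReal Finset Pointwise

/-!
The lower estimate makes `φ` uniformly exhaustive: for each `t > 0` the number of disjoint sets on
which `φ ≥ t` is bounded. Such a submeasure is equivalent to a measure, by an argument of Kalton and
Roberts.

Suppose that a finite family of sets with `φ ≥ ε` covers every point with low multiplicity. A random
sparse bipartite graph in which each small vertex set has at least as many neighbours as elements,
combined with Hall's theorem, cuts each set of the family into at most three labelled cells so that
cells with the same label are disjoint. One cell of each set has `φ ≥ ε / 3`, and the pigeonhole
principle gives too many disjoint large cells. So the sets with `φ ≥ ε` have positive intersection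
number, and Kelley's theorem, a Hahn-Banach separation, provides a finitely additive measure bounded
below on them.

A weighted sum of such measures over `ε = 1, 1/2, 1/3, …` is a measure with respect to which `φ` is
continuous. Its absolutely continuous part with respect to `φ` still has this property.
-/

lemma sq_pow_self_div_factorial_le (s : ℕ) : ((s : ℝ) ^ s / s.factorial) ^ 2 ≤ 9 ^ s :=
  calc ((s : ℝ) ^ s / s.factorial) ^ 2
      ≤ Real.exp s ^ 2 := by gcongr; exact Real.pow_div_factorial_le_exp _ s.cast_nonneg s
    _ = (Real.exp 1 ^ 2) ^ s := by rw [← Real.exp_one_pow, pow_right_comm]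
    _ ≤ (3 ^ 2) ^ s := by gcongr; exact Real.exp_one_lt_three.le
    _ = 9 ^ s := by norm_num

-- The constant is `36 = 4 * 9`, where `9` bounds `e ^ 2`.
lemma choose_mul_choose_mul_pow_le {k n s : ℕ} (h : 36 * k * s ≤ n ^ 2) :
    (k.choose s : ℝ) * (n.choose s * (((s : ℝ) / n) ^ 3) ^ s) ≤ (1 / 4) ^ s := by
  rcases n.eq_zero_or_pos with rfl | hn
  · cases s <;> simp
  have : (0 : ℝ) < n := by exact_mod_cast hn
  have hratio : (k * s / n ^ 2 : ℝ) ≤ 1 / 36 := by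
    rw [div_le_iff₀ (by positivity)]
    have : (36 * k * s : ℝ) ≤ n ^ 2 := by exact_mod_cast h
    linarith
  calc (k.choose s : ℝ) * (n.choose s * (((s : ℝ) / n) ^ 3) ^ s)
      ≤ k ^ s / s.factorial * (n ^ s / s.factorial * (((s : ℝ) / n) ^ 3) ^ s) := by
        gcongr <;> exact Nat.choose_le_pow_div _ _
    _ = ((s : ℝ) ^ s / s.factorial) ^ 2 * (k * s / n ^ 2) ^ s := by
        simp only [div_pow, mul_pow, ← pow_mul]
        field_simp
        ring
    _ ≤ 9 ^ s * (1 / 36) ^ s := by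
        gcongr
        exact sq_pow_self_div_factorial_le s
    _ = (1 / 4) ^ s := by rw [← mul_pow]; norm_num

lemma sum_choose_mul_pow_lt_one (κ : Type*) [Fintype κ] (n : ℕ) :
    ∑ E : Finset κ with 0 < #E ∧ 36 * Fintype.card κ * #E ≤ n ^ 2,
      (n.choose #E : ℝ) * (((#E : ℝ) / n) ^ 3) ^ #E < 1 := by
  set k := Fintype.card κ
  let p : ℕ → ℝ := fun s =>
    if 0 < s ∧ 36 * k * s ≤ n ^ 2 then n.choose s * (((s : ℝ) / n) ^ 3) ^ s else 0
  have hp (s : ℕ) : k.choose (s + 1) • p (s + 1) ≤ (1 / 4) * (1 / 2) ^ s := by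
    simp only [p, nsmul_eq_mul]
    split_ifs with hs
    · calc _ ≤ (1 / 4 : ℝ) ^ (s + 1) := choose_mul_choose_mul_pow_le hs.2
        _ = (1 / 4) * (1 / 4) ^ s := pow_succ' _ _
        _ ≤ (1 / 4) * (1 / 2) ^ s := by gcongr; norm_num
    · rw [mul_zero]; positivity
  calc _ = ∑ E : Finset κ, p #E := Finset.sum_filter _ _
    _ = ∑ s ∈ Finset.range (k + 1), k.choose s • p s := by
        rw [← Finset.powerset_univ, Finset.sum_powerset_apply_card, Finset.card_univ]
    _ = ∑ s ∈ Finset.range k, k.choose (s + 1) • p (s + 1) := by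
        rw [Finset.sum_range_succ']; simp [p]
    _ ≤ ∑ s ∈ Finset.range k, (1 / 4 : ℝ) * (1 / 2) ^ s := Finset.sum_le_sum fun s _ => hp s
    _ ≤ 1 / 4 * 2 := by
        rw [← Finset.mul_sum]
        gcongr
        exact sum_geometric_two_le k
    _ < 1 := by norm_num

lemma card_maps_into {κ ι : Type*} [Fintype κ] [Fintype ι] [DecidableEq κ] [DecidableEq ι]
    [Nonempty ι] (r : ℕ) (E : Finset κ) (F : Finset ι) :
    (#{g : κ → Fin r → ι | ∀ x ∈ E, ∀ j, g x j ∈ F} : ℝ) =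
      (((#F : ℝ) / Fintype.card ι) ^ r) ^ #E * Fintype.card (κ → Fin r → ι) := by
  have hset : ({g : κ → Fin r → ι | ∀ x ∈ E, ∀ j, g x j ∈ F} : Finset _) =
      Fintype.piFinset fun x => Fintype.piFinset fun _ => if x ∈ E then F else Finset.univ := by
    ext g
    simp only [Finset.mem_filter_univ, Fintype.mem_piFinset]
    refine forall_congr' fun x => ?_
    split_ifs with hx <;> simp [hx]
  have hfactor (x : κ) :
      (∏ _j : Fin r, (#(if x ∈ E then F else Finset.univ) : ℝ)) =
        (if x ∈ E then ((#F : ℝ) / Fintype.card ι) ^ r else 1) * (Fintype.card ι : ℝ) ^ r := by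
    split_ifs <;> simp [div_pow]
  calc (#{g : κ → Fin r → ι | ∀ x ∈ E, ∀ j, g x j ∈ F} : ℝ)
      = ∏ x : κ, ∏ _j : Fin r, (#(if x ∈ E then F else Finset.univ) : ℝ) := by
        simp only [hset, Fintype.card_piFinset, Nat.cast_prod]
    _ = (((#F : ℝ) / Fintype.card ι) ^ r) ^ #E * Fintype.card (κ → Fin r → ι) := by
        simp only [hfactor, Finset.prod_mul_distrib, Finset.prod_ite_mem, Finset.univ_inter,
          Finset.prod_const, Fintype.card_fun, Fintype.card_fin, Finset.card_univ, Nat.cast_pow]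

lemma exists_forall_not_maps_into (κ ι : Type*) [Fintype κ] [Fintype ι] [Nonempty ι] :
    ∃ g : κ → Fin 3 → ι, ∀ E : Finset κ,
      0 < #E ∧ 36 * Fintype.card κ * #E ≤ Fintype.card ι ^ 2 →
        ∀ F : Finset ι, #F = #E → ¬ ∀ x ∈ E, ∀ j, g x j ∈ F := by
  classical
  set n := Fintype.card ι
  set total := Fintype.card (κ → Fin 3 → ι)
  by_contra! hbad
  let 𝓔 : Finset (Finset κ) := {E | 0 < #E ∧ 36 * Fintype.card κ * #E ≤ n ^ 2}
  let confined (E : Finset κ) (F : Finset ι) : Finset (κ → Fin 3 → ι) :=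
    {g | ∀ x ∈ E, ∀ j, g x j ∈ F}
  have hcover : (Finset.univ : Finset (κ → Fin 3 → ι)) ⊆
      𝓔.biUnion fun E => (Finset.univ.powersetCard #E).biUnion (confined E) := fun g _ => by
    simpa only [Finset.mem_biUnion, Finset.mem_powersetCard_univ, 𝓔, confined,
      Finset.mem_filter_univ] using hbad g
  have hunion : total ≤ ∑ E ∈ 𝓔, ∑ F ∈ Finset.univ.powersetCard #E, #(confined E F) :=
    (Finset.card_le_card hcover).trans <| Finset.card_biUnion_le.trans <|
      Finset.sum_le_sum fun _ _ => Finset.card_biUnion_le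
  have hsum (E : Finset κ) : ∑ F ∈ Finset.univ.powersetCard #E, (#(confined E F) : ℝ) =
      n.choose #E * (((#E : ℝ) / n) ^ 3) ^ #E * total := by
    rw [Finset.sum_congr rfl fun F hF => by
        rw [card_maps_into 3 E F, Finset.mem_powersetCard_univ.1 hF],
      Finset.sum_const, Finset.card_powersetCard, Finset.card_univ, nsmul_eq_mul, mul_assoc]
  have : (0 : ℝ) < total := by exact_mod_cast Fintype.card_pos
  refine lt_irrefl (total : ℝ) ?_
  calc (total : ℝ) ≤ ∑ E ∈ 𝓔, ∑ F ∈ Finset.univ.powersetCard #E, (#(confined E F) : ℝ) := by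
        exact_mod_cast hunion
    _ = (∑ E ∈ 𝓔, n.choose #E * (((#E : ℝ) / n) ^ 3) ^ #E) * total := by
        rw [Finset.sum_mul, Finset.sum_congr rfl fun E _ => hsum E]
    _ < 1 * total := by
        gcongr
        exact sum_choose_mul_pow_lt_one κ n
    _ = total := one_mul _

theorem exists_concentrator (κ ι : Type*) [Fintype κ] [Fintype ι] [Nonempty ι] [DecidableEq ι] :
    ∃ t : κ → Finset ι, (∀ x, #(t x) ≤ 3) ∧
      ∀ E : Finset κ, 36 * Fintype.card κ * #E ≤ Fintype.card ι ^ 2 → #E ≤ #(E.biUnion t) := by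
  obtain ⟨g, hg⟩ := exists_forall_not_maps_into κ ι
  refine ⟨fun x => Finset.univ.image (g x), fun x => Finset.card_image_le, fun E hE => ?_⟩
  by_contra! hlt
  have hEι : #E ≤ Fintype.card ι := by
    have := E.card_le_univ
    nlinarith
  obtain ⟨F, hF, hFcard⟩ := Finset.exists_superset_card_eq hlt.le hEι
  exact hg E ⟨by omega, hE⟩ F hFcard fun x hx j =>
    hF (Finset.mem_biUnion.2 ⟨x, hx, Finset.mem_image_of_mem _ (Finset.mem_univ j)⟩)

lemma exists_injOn_selection {κ ι : Type*} [Nonempty ι] [DecidableEq ι] (t : κ → Finset ι)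
    (E : Finset κ) (hall : ∀ S ⊆ E, #S ≤ #(S.biUnion t)) :
    ∃ f : κ → ι, InjOn f E ∧ ∀ x ∈ E, f x ∈ t x := by
  classical
  obtain ⟨f, hf_inj, hf_mem⟩ :=
    (Finset.all_card_le_biUnion_card_iff_exists_injective fun x : E => t x).1 fun S => by
      have hS := hall (S.map (Function.Embedding.subtype _)) (Finset.map_subtype_subset S)
      rw [Finset.card_map] at hS
      convert hS using 2
      ext y
      simp
  refine ⟨fun x => if hx : x ∈ E then f ⟨x, hx⟩ else Classical.arbitrary ι,
    fun x hx y hy hxy => ?_, fun x hx => ?_⟩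
  · rw [Finset.mem_coe] at hx hy
    simpa [hx, hy, hf_inj.eq_iff] using hxy
  · simpa [hx] using hf_mem ⟨x, hx⟩

section SetAlgebra

variable {Ω : Type*} {𝒜 : Set (Set Ω)}

open Classical in
lemma setOf_filter_mem_mem (h𝒜 : IsSetAlgebra 𝒜) {κ : Type*} [Fintype κ] {b : κ → Set Ω}
    (hb : ∀ x, b x ∈ 𝒜) (P : Finset κ → Prop) :
    {ω | P {x | ω ∈ b x}} ∈ 𝒜 := by
  have hatom (E : Finset κ) : {ω | ({x | ω ∈ b x} : Finset κ) = E} ∈ 𝒜 := by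
    have : {ω | ({x | ω ∈ b x} : Finset κ) = E} =
        ⋂ x ∈ (Finset.univ : Finset κ), if x ∈ E then b x else (b x)ᶜ := by
      ext ω
      simp only [mem_ofPred_eq, Finset.ext_iff, Finset.mem_filter_univ, Finset.mem_univ,
        iInter_true, mem_iInter]
      refine forall_congr' fun x => ?_
      by_cases hx : x ∈ E <;> simp [hx]
    rw [this]
    refine h𝒜.biInter_mem _ fun x _ => ?_
    split_ifs
    exacts [hb x, h𝒜.compl_mem (hb x)]
  have : {ω | P {x | ω ∈ b x}} =
      ⋃ E ∈ ({E | P E} : Finset (Finset κ)), {ω | ({x | ω ∈ b x} : Finset κ) = E} := by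
    ext ω; simp
  rw [this]
  exact h𝒜.biUnion_mem _ fun E _ => hatom E

-- At each point `ω`, Hall's theorem matches the `x` with `ω ∈ b x` injectively with elements of the
-- `t x`, and `d x y` consists of the points at which `x` is matched with `y`.
theorem exists_disjoint_cells (h𝒜 : IsSetAlgebra 𝒜) {κ ι : Type*} [Finite κ] [Nonempty ι]
    [DecidableEq ι] {b : κ → Set Ω} (hb : ∀ x, b x ∈ 𝒜) (t : κ → Finset ι)
    (hall : ∀ ω, ∀ E : Finset κ, (∀ x ∈ E, ω ∈ b x) → #E ≤ #(E.biUnion t)) :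
    ∃ d : κ → ι → Set Ω, (∀ x y, d x y ∈ 𝒜) ∧
      (∀ y, Pairwise (Function.onFun Disjoint fun x => d x y)) ∧
      ∀ x, b x ⊆ ⋃ y ∈ t x, d x y := by
  classical
  have := Fintype.ofFinite κ
  let S (ω : Ω) : Finset κ := {x | ω ∈ b x}
  have hmatch (E : Finset κ) : ∃ f : κ → ι,
      (∃ ω, S ω = E) → InjOn f E ∧ ∀ x ∈ E, f x ∈ t x := by
    by_cases hE : ∃ ω, S ω = E
    · obtain ⟨ω, rfl⟩ := hE
      obtain ⟨f, hf⟩ := exists_injOn_selection t (S ω) fun E hE =>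
        hall ω E fun x hx => (Finset.mem_filter_univ x).1 (hE hx)
      exact ⟨f, fun _ => hf⟩
    · exact ⟨Classical.arbitrary _, fun h => absurd h hE⟩
  choose f hf using hmatch
  refine ⟨fun x y => {ω | x ∈ S ω ∧ f (S ω) x = y},
    fun x y => setOf_filter_mem_mem h𝒜 hb fun E => x ∈ E ∧ f E x = y, fun y x x' hne => ?_,
    fun x ω hω => ?_⟩
  · refine Set.disjoint_left.2 ?_
    rintro ω ⟨hx, hxy⟩ ⟨hx', hx'y⟩
    exact hne ((hf (S ω) ⟨ω, rfl⟩).1 hx hx' (hxy.trans hx'y.symm))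
  · have hx : x ∈ S ω := (Finset.mem_filter_univ x).2 hω
    exact mem_iUnion₂.2 ⟨f (S ω) x, (hf (S ω) ⟨ω, rfl⟩).2 x hx, hx, rfl⟩

end SetAlgebra

/-- `φ` is a submeasure on `𝒜`; its values outside `𝒜` are irrelevant. -/
structure IsSubmeasure {Ω : Type*} (𝒜 : Set (Set Ω)) (φ : Set Ω → ℝ) : Prop where
  empty : φ ∅ = 0
  mono : ∀ A ∈ 𝒜, ∀ B ∈ 𝒜, A ⊆ B → φ A ≤ φ B
  union_le_of_disjoint : ∀ A ∈ 𝒜, ∀ B ∈ 𝒜, Disjoint A B → φ (A ∪ B) ≤ φ A + φ B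

/-- `φ` is uniformly exhaustive on `𝒜`: for each `t > 0` there is a bound on the number of disjoint
members of `𝒜` on which `φ` is at least `t`. -/
def UniformlyExhaustive {Ω : Type*} (𝒜 : Set (Set Ω)) (φ : Set Ω → ℝ) : Prop :=
  ∀ t > 0, ∃ N : ℕ, ∀ (n : ℕ) (A : Fin n → Set Ω), (∀ i, A i ∈ 𝒜) →
    Pairwise (Function.onFun Disjoint A) → (∀ i, t ≤ φ (A i)) → n ≤ N

/-- Kelley's intersection number of `𝒮` is at least `δ`: any finite list of members of `𝒮`,
repetitions allowed, has a point covered by at least a proportion `δ` of the list. -/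
def IntersectionNumberGE {Ω : Type*} (𝒮 : Set (Set Ω)) (δ : ℝ) : Prop :=
  ∀ (ι : Type) [Fintype ι] [Nonempty ι] (a : ι → Set Ω), (∀ i, a i ∈ 𝒮) →
    ∃ ω, δ * Fintype.card ι ≤ ∑ i, (a i).indicator (1 : Ω → ℝ) ω

namespace IsSubmeasure

variable {Ω : Type*} {𝒜 : Set (Set Ω)} {φ : Set Ω → ℝ} {A B : Set Ω}

lemma nonneg (hφ : IsSubmeasure 𝒜 φ) (h𝒜 : IsSetAlgebra 𝒜) (hA : A ∈ 𝒜) : 0 ≤ φ A :=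
  hφ.empty ▸ hφ.mono _ h𝒜.empty_mem _ hA (empty_subset A)

lemma union_le (hφ : IsSubmeasure 𝒜 φ) (h𝒜 : IsSetAlgebra 𝒜) (hA : A ∈ 𝒜) (hB : B ∈ 𝒜) :
    φ (A ∪ B) ≤ φ A + φ B := by
  have hBA := h𝒜.sdiff_mem hB hA
  calc φ (A ∪ B) = φ (A ∪ B \ A) := by rw [union_sdiff_self]
    _ ≤ φ A + φ (B \ A) := hφ.union_le_of_disjoint A hA _ hBA disjoint_sdiff_right
    _ ≤ φ A + φ B := by gcongr; exact hφ.mono _ hBA _ hB sdiff_subset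

lemma biUnion_le (hφ : IsSubmeasure 𝒜 φ) (h𝒜 : IsSetAlgebra 𝒜) {κ : Type*} {d : κ → Set Ω}
    (s : Finset κ) (hd : ∀ x ∈ s, d x ∈ 𝒜) : φ (⋃ x ∈ s, d x) ≤ ∑ x ∈ s, φ (d x) := by
  classical
  induction s using Finset.induction_on with
  | empty => simp [hφ.empty]
  | insert x s hx ih =>
    have hs : ∀ y ∈ s, d y ∈ 𝒜 := fun y hy => hd y (Finset.mem_insert_of_mem hy)
    rw [Finset.set_biUnion_insert, Finset.sum_insert hx]
    exact (hφ.union_le h𝒜 (hd x (Finset.mem_insert_self x s)) (h𝒜.biUnion_mem s hs)).trans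
      (add_le_add_right (ih hs) _)

lemma exists_div_le_of_subset_biUnion (hφ : IsSubmeasure 𝒜 φ) (h𝒜 : IsSetAlgebra 𝒜) {ι : Type*}
    {d : ι → Set Ω} (hd : ∀ y, d y ∈ 𝒜) {t : Finset ι} {r : ℕ} (ht : #t ≤ r) (hA : A ∈ 𝒜)
    (hAd : A ⊆ ⋃ y ∈ t, d y) {ε : ℝ} (hε : 0 < ε) (hεA : ε ≤ φ A) :
    ∃ y, ε / r ≤ φ (d y) := by
  by_contra! hlt
  have hle : ε ≤ ∑ y ∈ t, φ (d y) := hεA.trans <|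
    (hφ.mono A hA _ (h𝒜.biUnion_mem t fun y _ => hd y) hAd).trans
      (hφ.biUnion_le h𝒜 t fun y _ => hd y)
  obtain rfl | hne := t.eq_empty_or_nonempty
  · exact hε.not_ge (by simpa using hle)
  have hr : (0 : ℝ) < r := by exact_mod_cast hne.card_pos.trans_le ht
  have : ∑ y ∈ t, φ (d y) < ε :=
    calc ∑ y ∈ t, φ (d y) < ∑ _ ∈ t, ε / r := Finset.sum_lt_sum_of_nonempty hne fun y _ => hlt y
      _ = #t * (ε / r) := by rw [Finset.sum_const, nsmul_eq_mul]
      _ ≤ r * (ε / r) := by gcongr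
      _ = ε := mul_div_cancel₀ ε hr.ne'
  exact this.not_ge hle

theorem intersectionNumberGE (hφ : IsSubmeasure 𝒜 φ) (h𝒜 : IsSetAlgebra 𝒜) {ε : ℝ} (hε : 0 < ε)
    {N : ℕ} (hN : ∀ (n : ℕ) (A : Fin n → Set Ω), (∀ i, A i ∈ 𝒜) →
      Pairwise (Function.onFun Disjoint A) → (∀ i, ε / 3 ≤ φ (A i)) → n ≤ N) :
    IntersectionNumberGE {A ∈ 𝒜 | ε ≤ φ A} (1 / (36 * (N + 1) ^ 2)) := by
  classical
  intro ι _ _ a ha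
  by_contra! hfew
  -- With every `a i` repeated `N + 1` times, some `y₀` is the label of more than `N` large cells.
  let b (x : ι × Fin (N + 1)) : Set Ω := a x.1
  obtain ⟨t, ht_card, ht_hall⟩ := exists_concentrator (ι × Fin (N + 1)) ι
  have hall (ω : Ω) (E : Finset (ι × Fin (N + 1))) (hE : ∀ x ∈ E, ω ∈ b x) :
      #E ≤ #(E.biUnion t) := by
    have hEω : #E ≤ #{i | ω ∈ a i} * (N + 1) := by
      have : E ⊆ ({i | ω ∈ a i} : Finset ι) ×ˢ Finset.univ := fun x hx => by
        simpa [b] using hE x hx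
      simpa using Finset.card_le_card this
    have hω : 36 * (N + 1) ^ 2 * #{i | ω ∈ a i} ≤ Fintype.card ι := by
      have := hfew ω
      simp only [Set.indicator_apply, Pi.one_apply, Finset.sum_boole] at this
      rw [one_div, inv_mul_eq_div, lt_div_iff₀ (by positivity)] at this
      exact_mod_cast (mul_comm _ _).trans_le this.le
    apply ht_hall
    rw [Fintype.card_prod, Fintype.card_fin]
    calc 36 * (Fintype.card ι * (N + 1)) * #E
        ≤ 36 * (Fintype.card ι * (N + 1)) * (#{i | ω ∈ a i} * (N + 1)) := by gcongr
      _ = Fintype.card ι * (36 * (N + 1) ^ 2 * #{i | ω ∈ a i}) := by ring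
      _ ≤ Fintype.card ι ^ 2 := by rw [sq (Fintype.card ι)]; exact Nat.mul_le_mul_left _ hω
  obtain ⟨d, hd_mem, hd_disj, hd_cover⟩ := exists_disjoint_cells h𝒜 (fun x => (ha x.1).1) t hall
  choose y hy using fun x => hφ.exists_div_le_of_subset_biUnion h𝒜 (hd_mem x) (ht_card x)
    (ha x.1).1 (hd_cover x) hε (ha x.1).2
  obtain ⟨y₀, hy₀⟩ := Fintype.exists_lt_card_fiber_of_mul_lt_card (n := N) y (by
    rw [Fintype.card_prod, Fintype.card_fin]
    exact Nat.mul_lt_mul_of_pos_left N.lt_succ_self Fintype.card_pos)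
  let e := (Finset.equivFin {x | y x = y₀}).symm
  refine hy₀.not_ge (hN _ (fun i => d (e i) y₀) (fun i => hd_mem _ _) (fun i j hij => ?_)
    fun i => ?_)
  · exact hd_disj y₀ fun h => hij (e.injective (Subtype.ext h))
  · have hyi : y (e i) = y₀ := (Finset.mem_filter.1 (e i).2).2
    simpa [hyi] using hy (e i)

end IsSubmeasure

lemma IntersectionNumberGE.exists_lt_weighted_sum {Ω : Type*} {𝒮 : Set (Set Ω)} {δ t : ℝ}
    (h : IntersectionNumberGE 𝒮 δ) (hδ : 0 ≤ δ) (ht : t < δ) {κ : Type} [Fintype κ]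
    {w : κ → ℝ} (hw : ∀ i, 0 ≤ w i) (hw_sum : ∑ i, w i = 1) {a : κ → Set Ω}
    (ha : ∀ i, a i ∈ 𝒮) : ∃ ω, t < ∑ i, w i * (a i).indicator (1 : Ω → ℝ) ω := by
  obtain ⟨N, hN⟩ := exists_nat_gt (Fintype.card κ / (δ - t))
  rw [div_lt_iff₀ (sub_pos.2 ht)] at hN
  have hN_pos : (0 : ℝ) < N :=
    pos_of_mul_pos_left ((Nat.cast_nonneg _).trans_lt hN) (sub_pos.2 ht).le
  -- Repeating `a i` about `N * w i` times turns the weights into multiplicities.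
  let n (i : κ) : ℕ := ⌈N * w i⌉₊
  have hn_ge : (N : ℝ) ≤ Fintype.card (Σ i, Fin (n i)) := by
    calc (N : ℝ) = ∑ i, N * w i := by rw [← Finset.mul_sum, hw_sum, mul_one]
      _ ≤ ∑ i, (n i : ℝ) := Finset.sum_le_sum fun i _ => Nat.le_ceil _
      _ = Fintype.card (Σ i, Fin (n i)) := by simp
  have : Nonempty (Σ i, Fin (n i)) :=
    Fintype.card_pos_iff.1 (by exact_mod_cast hN_pos.trans_le hn_ge)
  obtain ⟨ω, hω⟩ := h (Σ i, Fin (n i)) (fun x => a x.1) fun x => ha x.1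
  refine ⟨ω, lt_of_mul_lt_mul_left ?_ hN_pos.le⟩
  have hind (i : κ) : (n i : ℝ) * (a i).indicator (1 : Ω → ℝ) ω ≤
      N * (w i * (a i).indicator (1 : Ω → ℝ) ω) + 1 := by
    have := (Nat.ceil_lt_add_one (mul_nonneg hN_pos.le (hw i))).le
    by_cases hi : ω ∈ a i <;> simp [hi, n, this]
  have : δ * N ≤ N * ∑ i, w i * (a i).indicator (1 : Ω → ℝ) ω + Fintype.card κ := by
    calc δ * N ≤ δ * Fintype.card (Σ i, Fin (n i)) := by gcongr
      _ ≤ ∑ x : Σ i, Fin (n i), (a x.1).indicator (1 : Ω → ℝ) ω := hω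
      _ = ∑ i, n i * (a i).indicator (1 : Ω → ℝ) ω := by
        simp only [Fintype.sum_sigma, Finset.sum_const, Finset.card_univ, Fintype.card_fin,
          nsmul_eq_mul]
      _ ≤ ∑ i, (N * (w i * (a i).indicator (1 : Ω → ℝ) ω) + 1) :=
        Finset.sum_le_sum fun i _ => hind i
      _ = _ := by simp [Finset.sum_add_distrib, Finset.mul_sum]
  linarith

section Functional

variable {Ω : Type*} [TopologicalSpace Ω] {δ u : ℝ}

lemma convex_nonpos_add_ball (δ : ℝ) :
    Convex ℝ ({g : Ω →ᵇ ℝ | g ≤ 0} + Metric.ball 0 δ) := by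
  refine Convex.add (fun f hf g hg r s hr hs _ ω => ?_) (convex_ball 0 δ)
  simpa using add_nonpos (mul_nonpos_of_nonneg_of_nonpos hr (hf ω))
    (mul_nonpos_of_nonneg_of_nonpos hs (hg ω))

lemma ball_subset_nonpos_add_ball (δ : ℝ) :
    Metric.ball 0 δ ⊆ {g : Ω →ᵇ ℝ | g ≤ 0} + Metric.ball 0 δ :=
  Set.subset_add_right _ (le_refl (0 : Ω →ᵇ ℝ))

lemma nonneg_of_forall_nonpos_add_ball_lt {F : (Ω →ᵇ ℝ) →L[ℝ] ℝ} (hδ : 0 < δ)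
    (hF : ∀ g ∈ ({g : Ω →ᵇ ℝ | g ≤ 0} + Metric.ball 0 δ), F g < u) {f : Ω →ᵇ ℝ} (hf : 0 ≤ f) :
    0 ≤ F f := by
  by_contra! hneg
  obtain ⟨n, hn⟩ := exists_nat_ge (u / -F f)
  rw [div_le_iff₀ (neg_pos.2 hneg)] at hn
  have : F (-(n : ℝ) • f) < u := by
    refine hF _ ⟨_, fun ω => ?_, 0, Metric.mem_ball_self hδ, add_zero _⟩
    simpa using mul_nonneg n.cast_nonneg (hf ω)
  rw [map_smul, smul_eq_mul] at this
  linarith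

lemma mul_apply_one_le_of_forall_nonpos_add_ball_lt {F : (Ω →ᵇ ℝ) →L[ℝ] ℝ} (hδ : 0 < δ)
    (hF : ∀ g ∈ ({g : Ω →ᵇ ℝ | g ≤ 0} + Metric.ball 0 δ), F g < u) : δ * F 1 ≤ u := by
  have hu : 0 < u := by
    simpa using hF 0 (ball_subset_nonpos_add_ball δ (Metric.mem_ball_self hδ))
  by_contra! hlt
  have hF1 : 0 < F 1 := pos_of_mul_pos_right (hu.trans hlt) hδ.le
  have hball : (u / F 1) • (1 : Ω →ᵇ ℝ) ∈ Metric.ball (0 : Ω →ᵇ ℝ) δ := by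
    rw [mem_ball_zero_iff]
    refine (BoundedContinuousFunction.norm_le (by positivity)).2 (fun ω => ?_) |>.trans_lt
      ((div_lt_iff₀ hF1).2 hlt)
    simp [abs_of_pos hu, abs_of_pos hF1]
  refine lt_irrefl u ?_
  simpa [hF1.ne'] using hF _ (ball_subset_nonpos_add_ball δ hball)

theorem IntersectionNumberGE.exists_clm [DiscreteTopology Ω] {𝒮 : Set (Set Ω)}
    (h : IntersectionNumberGE 𝒮 δ) (hδ : 0 < δ) :
    ∃ L : (Ω →ᵇ ℝ) →L[ℝ] ℝ, (∀ f, 0 ≤ f → 0 ≤ L f) ∧ L 1 ≤ 1 ∧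
      ∀ A ∈ 𝒮, δ ≤ L (indicator A (isClopen_discrete A)) := by
  let U : Set (Ω →ᵇ ℝ) := {g | g ≤ 0} + Metric.ball 0 δ
  let K : Set (Ω →ᵇ ℝ) := convexHull ℝ ((fun A => indicator A (isClopen_discrete A)) '' 𝒮)
  have hUK : Disjoint U K := by
    refine Set.disjoint_left.2 ?_
    rintro _ ⟨g, hg, e, he, rfl⟩ hK
    obtain ⟨κ, _, w, z, hw, hw_sum, hz, hsum⟩ := mem_convexHull_iff_exists_fintype.1 hK
    choose a ha haz using hz
    obtain ⟨ω, hω⟩ := h.exists_lt_weighted_sum hδ.le (mem_ball_zero_iff.1 he) hw hw_sum ha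
    have hval : ∑ i, w i * (a i).indicator (1 : Ω → ℝ) ω = g ω + e ω := by
      simpa [← haz] using congr($hsum ω)
    have := (le_abs_self _).trans (e.norm_coe_le_norm ω)
    have hgω : g ω ≤ 0 := hg ω
    linarith
  obtain ⟨F, u, hFU, hFK⟩ := geometric_hahn_banach_open (convex_nonpos_add_ball δ)
    Metric.isOpen_ball.add_left (convex_convexHull ℝ _) hUK
  have hu : 0 < u := by
    simpa using hFU 0 (ball_subset_nonpos_add_ball δ (Metric.mem_ball_self hδ))
  refine ⟨(δ / u) • F, fun f hf => ?_, ?_, fun A hA => ?_⟩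
  · exact mul_nonneg (by positivity) (nonneg_of_forall_nonpos_add_ball_lt hδ hFU hf)
  · have := mul_apply_one_le_of_forall_nonpos_add_ball_lt hδ hFU
    calc (δ / u) * F 1 = δ * F 1 / u := by ring
      _ ≤ 1 := (div_le_one hu).2 this
  · calc δ = δ / u * u := by field_simp
      _ ≤ δ / u * F (indicator A (isClopen_discrete A)) := by
        gcongr
        exact hFK _ (subset_convexHull ℝ _ ⟨A, hA, rfl⟩)

end Functional

theorem IntersectionNumberGE.exists_addContent {Ω : Type*} {𝒜 𝒮 : Set (Set Ω)} {δ : ℝ}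
    (h : IntersectionNumberGE 𝒮 δ) (hδ : 0 < δ) (h𝒜 : IsSetRing 𝒜) :
    ∃ μ : AddContent ℝ≥0∞ 𝒜, μ univ ≤ 1 ∧ ∀ A ∈ 𝒮, ENNReal.ofReal δ ≤ μ A := by
  let _ : TopologicalSpace Ω := ⊥
  have : DiscreteTopology Ω := ⟨rfl⟩
  obtain ⟨L, hL_nonneg, hL_one, hL_ge⟩ := h.exists_clm hδ
  let χ (A : Set Ω) : Ω →ᵇ ℝ := indicator A (isClopen_discrete A)
  have hχ_union {A B : Set Ω} (hAB : Disjoint A B) : χ (A ∪ B) = χ A + χ B := by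
    ext ω
    simp [χ, Set.indicator_union_of_disjoint hAB]
  have hLχ (A : Set Ω) : 0 ≤ L (χ A) :=
    hL_nonneg _ fun ω => Set.indicator_nonneg (fun _ _ => zero_le_one) ω
  have hχ_empty : χ ∅ = 0 := by ext ω; simp [χ]
  have hχ_univ : χ univ = 1 := by ext ω; simp [χ]
  refine ⟨h𝒜.addContent_of_union (fun A => ENNReal.ofReal (L (χ A))) (by simp [hχ_empty])
    fun {A B} _ _ hAB => ?_, ?_, fun A hA => ?_⟩
  · rw [hχ_union hAB, map_add, ENNReal.ofReal_add (hLχ A) (hLχ B)]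
  · change ENNReal.ofReal (L (χ univ)) ≤ 1
    rw [hχ_univ]
    exact ENNReal.ofReal_le_one.2 hL_one
  · exact ENNReal.ofReal_le_ofReal (hL_ge A hA)

/-- Continuity of the set function `φ` with respect to `ψ` on `𝒜`: `φ A → 0` as `ψ A → 0` with
`A ∈ 𝒜`. Phrasing it with filters lets real and `ℝ≥0∞`-valued set functions be compared. -/
def AbsContOn {Ω X Y : Type*} [Zero X] [TopologicalSpace X] [Zero Y] [TopologicalSpace Y]
    (𝒜 : Set (Set Ω)) (φ : Set Ω → X) (ψ : Set Ω → Y) : Prop :=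
  Tendsto φ (comap ψ (𝓝 0) ⊓ 𝓟 𝒜) (𝓝 0)

lemma AbsContOn.tendsto_zero {Ω X Y : Type*} [Zero X] [TopologicalSpace X] [Zero Y]
    [TopologicalSpace Y] {𝒜 : Set (Set Ω)} {φ : Set Ω → X} {ψ : Set Ω → Y}
    (h : AbsContOn 𝒜 φ ψ) {α : Type*} {l : Filter α} {A : α → Set Ω} (hA : ∀ n, A n ∈ 𝒜)
    (hψ : Tendsto (fun n => ψ (A n)) l (𝓝 0)) : Tendsto (fun n => φ (A n)) l (𝓝 0) :=
  h.comp (tendsto_inf.2 ⟨tendsto_comap_iff.2 hψ, tendsto_principal.2 (.of_forall hA)⟩)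

theorem exists_addContent_forall_absContOn {Ω : Type*} {𝒜 : Set (Set Ω)} (h𝒜 : IsSetRing 𝒜)
    (μ : ℕ → AddContent ℝ≥0∞ 𝒜) (hμ : ∀ k, μ k univ ≤ 1) :
    ∃ ν : AddContent ℝ≥0∞ 𝒜, ν univ ≠ ∞ ∧ ∀ k, AbsContOn 𝒜 (μ k) ν := by
  let ν : AddContent ℝ≥0∞ 𝒜 := h𝒜.addContent_of_union (fun A => ∑' k, 2⁻¹ ^ k * μ k A) (by simp)
    fun hA hB hAB => by
      simp only [addContent_union h𝒜 hA hB hAB, mul_add, ENNReal.tsum_add]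
  refine ⟨ν, ?_, fun k => ENNReal.tendsto_nhds_zero.2 fun ε hε => ?_⟩
  · refine ((ENNReal.tsum_le_tsum fun k => mul_le_of_le_one_right' (hμ k)).trans_lt ?_).ne
    rw [ENNReal.tsum_geometric, ENNReal.one_sub_inv_two, inv_inv]
    exact ENNReal.ofNat_lt_top
  · have hpos : (0 : ℝ≥0∞) < 2⁻¹ ^ k := ENNReal.pow_pos (by simp) k
    have hsmall : ∀ᶠ A in comap ν (𝓝 0), ν A < 2⁻¹ ^ k * ε :=
      tendsto_comap.eventually_lt_const (ENNReal.mul_pos hpos.ne' hε.ne')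
    filter_upwards [hsmall.filter_mono inf_le_left] with A hA
    have : 2⁻¹ ^ k * μ k A ≤ 2⁻¹ ^ k * ε := (ENNReal.le_tsum k).trans hA.le
    exact (ENNReal.mul_le_mul_iff_right hpos.ne' (by simp)).1 this

/-- The infimum of what is left of `μ A` after removing from `A` a set `B ∈ 𝒜` with `φ B ≤ δ`. As
`δ` tends to `0` these infima increase to the absolutely continuous part of `μ`. -/
noncomputable def residualMass {Ω : Type*} {𝒜 : Set (Set Ω)} (φ : Set Ω → ℝ)
    (μ : AddContent ℝ≥0∞ 𝒜) (δ : ℝ) (A : Set Ω) : ℝ≥0∞ :=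
  ⨅ (B) (_ : B ∈ 𝒜 ∧ φ B ≤ δ), μ (A \ B)

section LebesgueDecomposition

variable {Ω : Type*} {𝒜 : Set (Set Ω)} {φ : Set Ω → ℝ} {μ : AddContent ℝ≥0∞ 𝒜} {A B : Set Ω}
  {δ δ₁ δ₂ : ℝ}

lemma residualMass_le (hB : B ∈ 𝒜) (hδ : φ B ≤ δ) : residualMass φ μ δ A ≤ μ (A \ B) :=
  iInf₂_le B ⟨hB, hδ⟩

lemma residualMass_antitone : Antitone fun δ => residualMass φ μ δ A := fun _ _ h =>
  le_iInf₂ fun _ hB => residualMass_le hB.1 (hB.2.trans h)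

lemma residualMass_eq_zero (hA : A ∈ 𝒜) (hδ : φ A ≤ δ) : residualMass φ μ δ A = 0 := by
  simpa using residualMass_le (μ := μ) (A := A) hA hδ

lemma residualMass_le_self (hφ : IsSubmeasure 𝒜 φ) (h𝒜 : IsSetAlgebra 𝒜) (hδ : 0 ≤ δ) :
    residualMass φ μ δ A ≤ μ A := by
  simpa using residualMass_le (μ := μ) (A := A) h𝒜.empty_mem (hφ.empty.trans_le hδ)

lemma residualMass_union_le (hφ : IsSubmeasure 𝒜 φ) (h𝒜 : IsSetAlgebra 𝒜) (hA : A ∈ 𝒜)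
    (hB : B ∈ 𝒜) :
    residualMass φ μ (δ₁ + δ₂) (A ∪ B) ≤ residualMass φ μ δ₁ A + residualMass φ μ δ₂ B := by
  refine ENNReal.le_iInf₂_add_iInf₂ fun C ⟨hC, hCδ⟩ D ⟨hD, hDδ⟩ => ?_
  have hAC := h𝒜.sdiff_mem hA hC
  have hBD := h𝒜.sdiff_mem hB hD
  calc residualMass φ μ (δ₁ + δ₂) (A ∪ B)
      ≤ μ ((A ∪ B) \ (C ∪ D)) :=
        residualMass_le (h𝒜.union_mem hC hD) ((hφ.union_le h𝒜 hC hD).trans (add_le_add hCδ hDδ))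
    _ ≤ μ (A \ C ∪ B \ D) :=
        addContent_mono h𝒜.isSetRing.isSetSemiring
          (h𝒜.sdiff_mem (h𝒜.union_mem hA hB) (h𝒜.union_mem hC hD)) (h𝒜.union_mem hAC hBD) (by grind)
    _ ≤ μ (A \ C) + μ (B \ D) := addContent_union_le h𝒜.isSetRing hAC hBD

lemma residualMass_add_residualMass_le (h𝒜 : IsSetAlgebra 𝒜) (hA : A ∈ 𝒜) (hB : B ∈ 𝒜)
    (hAB : Disjoint A B) :
    residualMass φ μ δ A + residualMass φ μ δ B ≤ residualMass φ μ δ (A ∪ B) := by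
  refine le_iInf₂ fun C ⟨hC, hCδ⟩ => ?_
  rw [union_sdiff_distrib, addContent_union h𝒜.isSetRing (h𝒜.sdiff_mem hA hC)
    (h𝒜.sdiff_mem hB hC) (hAB.mono sdiff_subset sdiff_subset)]
  exact add_le_add (residualMass_le hC hCδ) (residualMass_le hC hCδ)

lemma iSup_residualMass_union (hφ : IsSubmeasure 𝒜 φ) (h𝒜 : IsSetAlgebra 𝒜) (hA : A ∈ 𝒜)
    (hB : B ∈ 𝒜) (hAB : Disjoint A B) :
    ⨆ δ : Ioi (0 : ℝ), residualMass φ μ δ (A ∪ B) =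
      (⨆ δ : Ioi (0 : ℝ), residualMass φ μ δ A) + ⨆ δ : Ioi (0 : ℝ), residualMass φ μ δ B := by
  refine le_antisymm (iSup_le fun δ => ?_) (ENNReal.iSup_add_iSup_le fun δ₁ δ₂ => ?_)
  · let half : Ioi (0 : ℝ) := ⟨δ / 2, half_pos (mem_Ioi.1 δ.2)⟩
    rw [← add_halves (δ : ℝ)]
    exact (residualMass_union_le hφ h𝒜 hA hB).trans <| add_le_add
      (le_iSup (fun δ : Ioi (0 : ℝ) => residualMass φ μ δ A) half)
      (le_iSup (fun δ : Ioi (0 : ℝ) => residualMass φ μ δ B) half)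
  · calc residualMass φ μ δ₁ A + residualMass φ μ δ₂ B
        ≤ residualMass φ μ (δ₁ ⊓ δ₂ : Ioi (0 : ℝ)) A + residualMass φ μ (δ₁ ⊓ δ₂ : Ioi (0 : ℝ)) B :=
          add_le_add (residualMass_antitone inf_le_left) (residualMass_antitone inf_le_right)
      _ ≤ residualMass φ μ (δ₁ ⊓ δ₂ : Ioi (0 : ℝ)) (A ∪ B) :=
          residualMass_add_residualMass_le h𝒜 hA hB hAB
      _ ≤ _ := le_iSup (fun δ : Ioi (0 : ℝ) => residualMass φ μ δ (A ∪ B)) (δ₁ ⊓ δ₂)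

/-- The absolutely continuous part of `μ` in its Lebesgue decomposition with respect to `φ`. -/
noncomputable def acPart (hφ : IsSubmeasure 𝒜 φ) (h𝒜 : IsSetAlgebra 𝒜) (μ : AddContent ℝ≥0∞ 𝒜) :
    AddContent ℝ≥0∞ 𝒜 :=
  h𝒜.isSetRing.addContent_of_union (fun A => ⨆ δ : Ioi (0 : ℝ), residualMass φ μ δ A)
    (ENNReal.iSup_eq_zero.2 fun δ => residualMass_eq_zero h𝒜.empty_mem (hφ.empty.trans_le δ.2.le))
    (iSup_residualMass_union hφ h𝒜)

lemma residualMass_le_acPart (hφ : IsSubmeasure 𝒜 φ) (h𝒜 : IsSetAlgebra 𝒜) (hδ : 0 < δ) :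
    residualMass φ μ δ A ≤ acPart hφ h𝒜 μ A :=
  le_iSup (fun δ : Ioi (0 : ℝ) => residualMass φ μ δ A) ⟨δ, hδ⟩

lemma acPart_le (hφ : IsSubmeasure 𝒜 φ) (h𝒜 : IsSetAlgebra 𝒜) : acPart hφ h𝒜 μ A ≤ μ A :=
  iSup_le fun δ => residualMass_le_self hφ h𝒜 δ.2.le

lemma acPart_le_of_acPart_univ_le (hφ : IsSubmeasure 𝒜 φ) (h𝒜 : IsSetAlgebra 𝒜)
    (hμ : acPart hφ h𝒜 μ univ ≠ ∞) {ε : ℝ≥0∞} (hδ : 0 < δ)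
    (hε : acPart hφ h𝒜 μ univ ≤ residualMass φ μ (δ + δ) univ + ε)
    (hA : A ∈ 𝒜) (hAδ : φ A ≤ δ) : acPart hφ h𝒜 μ A ≤ ε := by
  have hAc := h𝒜.compl_mem hA
  have hfin : acPart hφ h𝒜 μ Aᶜ ≠ ∞ := ne_top_of_le_ne_top hμ <|
    addContent_mono h𝒜.isSetRing.isSetSemiring hAc h𝒜.univ_mem (subset_univ _)
  refine (ENNReal.add_le_add_iff_right hfin).1 ?_
  calc acPart hφ h𝒜 μ A + acPart hφ h𝒜 μ Aᶜ
      = acPart hφ h𝒜 μ univ := by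
        rw [← addContent_union h𝒜.isSetRing hA hAc disjoint_compl_right, union_compl_self]
    _ ≤ residualMass φ μ (δ + δ) (A ∪ Aᶜ) + ε := by rwa [union_compl_self]
    _ ≤ residualMass φ μ δ A + residualMass φ μ δ Aᶜ + ε := by
        gcongr
        exact residualMass_union_le hφ h𝒜 hA hAc
    _ ≤ ε + acPart hφ h𝒜 μ Aᶜ := by
        rw [residualMass_eq_zero hA hAδ, zero_add, add_comm]
        gcongr
        exact residualMass_le_acPart hφ h𝒜 hδ

theorem absContOn_acPart_left (hφ : IsSubmeasure 𝒜 φ) (h𝒜 : IsSetAlgebra 𝒜) (hμ : μ univ ≠ ∞) :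
    AbsContOn 𝒜 (acPart hφ h𝒜 μ) φ := by
  have hfin : acPart hφ h𝒜 μ univ ≠ ∞ := ne_top_of_le_ne_top hμ (acPart_le hφ h𝒜)
  refine ENNReal.tendsto_nhds_zero.2 fun ε hε => ?_
  obtain ⟨δ, hδ, hδε⟩ : ∃ δ > 0, acPart hφ h𝒜 μ univ < residualMass φ μ (δ + δ) univ + ε := by
    have hlt : acPart hφ h𝒜 μ univ < ⨆ δ : Ioi (0 : ℝ), (residualMass φ μ δ univ + ε) := by
      rw [← ENNReal.iSup_add]
      exact ENNReal.lt_add_right hfin hε.ne'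
    obtain ⟨δ, hδ⟩ := lt_iSup_iff.1 hlt
    exact ⟨δ / 2, half_pos (mem_Ioi.1 δ.2), by rwa [add_halves]⟩
  have hsmall : ∀ᶠ A in comap φ (𝓝 0), φ A < δ := tendsto_comap.eventually_lt_const hδ
  filter_upwards [hsmall.filter_mono inf_le_left, mem_inf_of_right (mem_principal_self 𝒜)]
    with A hAδ hA
  exact acPart_le_of_acPart_univ_le hφ h𝒜 hfin hδ hδε.le hA hAδ.le

theorem absContOn_acPart_right (hφ : IsSubmeasure 𝒜 φ) (h𝒜 : IsSetAlgebra 𝒜)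
    (hφμ : AbsContOn 𝒜 φ μ) : AbsContOn 𝒜 φ (acPart hφ h𝒜 μ) := by
  refine tendsto_order.2 ⟨fun r hr => ?_, fun ε hε => ?_⟩
  · filter_upwards [mem_inf_of_right (mem_principal_self 𝒜)] with A hA
    exact hr.trans_le (hφ.nonneg h𝒜 hA)
  obtain ⟨η, hη, hημ⟩ := ((ENNReal.nhds_zero_basis.comap μ).inf_principal 𝒜).eventually_iff.1
    (hφμ.eventually_lt_const (half_pos hε))
  have hsmall : ∀ᶠ A in comap (acPart hφ h𝒜 μ) (𝓝 0), acPart hφ h𝒜 μ A < η :=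
    tendsto_comap.eventually_lt_const hη
  filter_upwards [hsmall.filter_mono inf_le_left, mem_inf_of_right (mem_principal_self 𝒜)]
    with A hAη hA
  have hres := (residualMass_le_acPart hφ h𝒜 (half_pos hε)).trans_lt hAη
  simp only [residualMass, iInf_lt_iff] at hres
  obtain ⟨B, ⟨hB, hBε⟩, hAB⟩ := hres
  have hAB_mem := h𝒜.sdiff_mem hA hB
  calc φ A ≤ φ (B ∪ A \ B) :=
        hφ.mono A hA _ (h𝒜.union_mem hB hAB_mem) (by grind)
    _ ≤ φ B + φ (A \ B) := hφ.union_le h𝒜 hB hAB_mem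
    _ < ε / 2 + ε / 2 := add_lt_add_of_le_of_lt hBε (hημ ⟨hAB, hAB_mem⟩)
    _ = ε := add_halves ε

end LebesgueDecomposition

theorem IsSubmeasure.exists_addContent_absContOn {Ω : Type*} {𝒜 : Set (Set Ω)} {φ : Set Ω → ℝ}
    (hφ : IsSubmeasure 𝒜 φ) (h𝒜 : IsSetAlgebra 𝒜) (hexh : UniformlyExhaustive 𝒜 φ) :
    ∃ ν : AddContent ℝ≥0∞ 𝒜, ν univ ≠ ∞ ∧ AbsContOn 𝒜 φ ν := by
  have hkelley (k : ℕ) : ∃ μ : AddContent ℝ≥0∞ 𝒜, μ univ ≤ 1 ∧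
      ∃ η > 0, ∀ A ∈ 𝒜, 1 / (k + 1 : ℝ) ≤ φ A → η ≤ μ A := by
    obtain ⟨N, hN⟩ := hexh (1 / (k + 1) / 3) (by positivity)
    obtain ⟨μ, hμ, hμ_ge⟩ := (hφ.intersectionNumberGE h𝒜 (by positivity) hN).exists_addContent
      (by positivity) h𝒜.isSetRing
    exact ⟨μ, hμ, _, ENNReal.ofReal_pos.2 (by positivity), fun A hA hkA => hμ_ge A ⟨hA, hkA⟩⟩
  choose μ hμ η hη hημ using hkelley
  obtain ⟨ν, hν, hμν⟩ := exists_addContent_forall_absContOn h𝒜.isSetRing μ hμ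
  refine ⟨ν, hν, tendsto_order.2 ⟨fun r hr => ?_, fun ε hε => ?_⟩⟩
  · filter_upwards [mem_inf_of_right (mem_principal_self 𝒜)] with A hA
    exact hr.trans_le (hφ.nonneg h𝒜 hA)
  · obtain ⟨k, hk⟩ := exists_nat_one_div_lt hε
    filter_upwards [(hμν k).eventually_lt_const (hη k),
      mem_inf_of_right (mem_principal_self 𝒜)] with A hAη hA
    by_contra! hle
    exact hAη.not_ge (hημ k A hA (hk.le.trans hle))

lemma IsSubmeasure.uniformlyExhaustive_of_lower_estimate {Ω : Type*} {𝒜 : Set (Set Ω)}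
    {φ : Set Ω → ℝ} (hφ : IsSubmeasure 𝒜 φ) (h𝒜 : IsSetAlgebra 𝒜) {c q : ℝ} (hc : 0 < c)
    (hq : 0 < q) (hlower : ∀ (n : ℕ) (A : Fin n → Set Ω), (∀ i, A i ∈ 𝒜) →
      Pairwise (Function.onFun Disjoint A) → c * (∑ i, φ (A i) ^ q) ^ (1 / q) ≤ φ (⋃ i, A i)) :
    UniformlyExhaustive 𝒜 φ := by
  intro t ht
  obtain ⟨N, hN⟩ := exists_nat_ge ((φ univ / (c * t)) ^ q)
  refine ⟨N, fun n A hA hdisj hAt => ?_⟩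
  have hU : ⋃ i, A i ∈ 𝒜 := by simpa using h𝒜.biUnion_mem Finset.univ fun i _ => hA i
  have hn : c * (n ^ (1 / q) * t) ≤ φ univ :=
    calc c * ((n : ℝ) ^ (1 / q) * t) = c * (∑ _i : Fin n, t ^ q) ^ (1 / q) := by
          rw [Finset.sum_const, Finset.card_univ, Fintype.card_fin, nsmul_eq_mul,
            Real.mul_rpow n.cast_nonneg (by positivity), one_div, Real.rpow_rpow_inv ht.le hq.ne']
      _ ≤ c * (∑ i, φ (A i) ^ q) ^ (1 / q) := by
          gcongr with i
          exact hAt i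
      _ ≤ φ (⋃ i, A i) := hlower n A hA hdisj
      _ ≤ φ univ := hφ.mono _ hU _ h𝒜.univ_mem (subset_univ _)
  have hroot : (n : ℝ) ^ q⁻¹ ≤ φ univ / (c * t) := by
    rw [le_div_iff₀ (by positivity), ← one_div]
    linarith
  have hφ_univ : 0 ≤ φ univ / (c * t) := (by positivity : (0 : ℝ) ≤ n ^ q⁻¹).trans hroot
  have := (Real.rpow_inv_le_iff_of_pos n.cast_nonneg hφ_univ hq).1 hroot
  exact_mod_cast this.trans hN

theorem submeasure_crude_lower_estimate_equivalent_measure_general {Ω : Type*} {𝒜 : Set (Set Ω)}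
    {φ : Set Ω → ℝ} (h𝒜 : IsSetAlgebra 𝒜) (hφ : IsSubmeasure 𝒜 φ)
    (hexh : UniformlyExhaustive 𝒜 φ) :
    ∃ μ : Set Ω → ℝ,
      μ ∅ = 0 ∧
      (∀ A ∈ 𝒜, ∀ B ∈ 𝒜, A ⊆ B → μ A ≤ μ B) ∧
      (∀ A ∈ 𝒜, ∀ B ∈ 𝒜, Disjoint A B → μ (A ∪ B) = μ A + μ B) ∧
      (∀ A : ℕ → Set Ω, (∀ n, A n ∈ 𝒜) →
        (Tendsto (fun n => φ (A n)) atTop (𝓝 0) ↔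
          Tendsto (fun n => μ (A n)) atTop (𝓝 0))) := by
  obtain ⟨ν₀, hν₀, hφν₀⟩ := hφ.exists_addContent_absContOn h𝒜 hexh
  let ν := acPart hφ h𝒜 ν₀
  have hmono {A B : Set Ω} (hA : A ∈ 𝒜) (hB : B ∈ 𝒜) (hAB : A ⊆ B) : ν A ≤ ν B :=
    addContent_mono h𝒜.isSetRing.isSetSemiring hA hB hAB
  have hfin {A : Set Ω} (hA : A ∈ 𝒜) : ν A ≠ ∞ := ne_top_of_le_ne_top hν₀ <|
    (hmono hA h𝒜.univ_mem (subset_univ A)).trans (acPart_le hφ h𝒜)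
  refine ⟨fun A => (ν A).toReal, by simp, fun A hA B hB hAB => ?_, fun A hA B hB hAB => ?_,
    fun A hA => ?_⟩
  · exact ENNReal.toReal_mono (hfin hB) (hmono hA hB hAB)
  · simp only [addContent_union h𝒜.isSetRing hA hB hAB, ENNReal.toReal_add (hfin hA) (hfin hB)]
  · rw [ENNReal.tendsto_toReal_zero_iff fun n => hfin (hA n)]
    exact ⟨(absContOn_acPart_left hφ h𝒜 hν₀).tendsto_zero hA,
      (absContOn_acPart_right hφ h𝒜 hφν₀).tendsto_zero hA⟩

/-- If `φ` is a submeasure on an algebra `𝒜` of subsets of `Ω` such that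
for some `c > 0` and `q < ∞` one has `φ(A₁ ∪ ⋯ ∪ Aₙ) ≥ c (φ(A₁)^q + ⋯ + φ(Aₙ)^q)^{1/q}`
for disjoint `A₁, …, Aₙ ∈ 𝒜`, then there is a finitely additive measure `μ` on `𝒜`
equivalent to `φ`. -/
theorem submeasure_crude_lower_estimate_equivalent_measure
    {Ω : Type*} (𝒜 : Set (Set Ω))
    (h_empty : (∅ : Set Ω) ∈ 𝒜) (h_univ : (univ : Set Ω) ∈ 𝒜)
    (h_compl : ∀ A ∈ 𝒜, Aᶜ ∈ 𝒜)
    (h_union : ∀ A ∈ 𝒜, ∀ B ∈ 𝒜, A ∪ B ∈ 𝒜)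
    (φ : Set Ω → ℝ)
    (hφ_empty : φ ∅ = 0)
    (hφ_mono : ∀ A ∈ 𝒜, ∀ B ∈ 𝒜, A ⊆ B → φ A ≤ φ B)
    (hφ_sub : ∀ A ∈ 𝒜, ∀ B ∈ 𝒜, Disjoint A B → φ (A ∪ B) ≤ φ A + φ B)
    (c q : ℝ) (hc : 0 < c) (hq : 0 < q)
    (hφ_lower : ∀ (n : ℕ) (A : Fin n → Set Ω), (∀ i, A i ∈ 𝒜) →
      Pairwise (Function.onFun Disjoint A) →
      c * (∑ i, φ (A i) ^ q) ^ (1 / q) ≤ φ (⋃ i, A i)) :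
    ∃ μ : Set Ω → ℝ,
      μ ∅ = 0 ∧
      (∀ A ∈ 𝒜, ∀ B ∈ 𝒜, A ⊆ B → μ A ≤ μ B) ∧
      (∀ A ∈ 𝒜, ∀ B ∈ 𝒜, Disjoint A B → μ (A ∪ B) = μ A + μ B) ∧
      (∀ A : ℕ → Set Ω, (∀ n, A n ∈ 𝒜) →
        (Tendsto (fun n => φ (A n)) atTop (𝓝 0) ↔
          Tendsto (fun n => μ (A n)) atTop (𝓝 0))) := by
  have h𝒜 : IsSetAlgebra 𝒜 := ⟨h_empty, fun A => h_compl A, fun A B hA => h_union A hA B⟩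
  have hφ : IsSubmeasure 𝒜 φ := ⟨hφ_empty, hφ_mono, hφ_sub⟩
  exact submeasure_crude_lower_estimate_equivalent_measure_general h𝒜 hφ
    (hφ.uniformlyExhaustive_of_lower_estimate h𝒜 hc hq hφ_lower)
end

section
/- Let ‖·‖_X be an admissible extended-value quasinorm on the Borel functions of a compact Hausdorff space Ω which is p-normable (i.e. ‖f + g‖_X^p ≤ ‖f‖_X^p + ‖g‖_X^p for all f, g) and satisfies a crude lower q-estimate with some constant b, where 0 < p < q < ∞. Then for every 0 < r < p the space X is r-convex: there is a constant M < ∞ (depending only on p, q, r, b) such that ‖(Σ_{i=1}^n |f_i|^r)^{1/r}‖_X ≤ M (Σ_{i=1}^n ‖f_i‖_X^r)^{1/r} for all f_1, …, f_n ∈ X. -/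
open Set Filter Topology MeasureTheory ENNReal

/-- An admissible extended-value quasinorm on the Borel functions of `Ω`. -/
structure AdmissibleQuasinorm (Ω : Type*) [TopologicalSpace Ω] [MeasurableSpace Ω] where
  N : (Ω → ℝ) → ℝ≥0∞
  mono : ∀ f g : Ω → ℝ, Measurable f → Measurable g →
    (∀ x, |f x| ≤ |g x|) → N f ≤ N g
  smul : ∀ (α : ℝ) (f : Ω → ℝ), Measurable f →
    N (fun x => α * f x) = ENNReal.ofReal |α| * N f
  quasi : ∃ C : ℝ≥0∞, ∀ f g : Ω → ℝ, Measurable f → Measurable g →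
    (∀ x, 0 ≤ f x) → (∀ x, 0 ≤ g x) → (∀ x, f x = 0 ∨ g x = 0) →
    N (fun x => f x + g x) ≤ C * (N f + N g)
  exists_pos : ∃ u : Ω → ℝ, Measurable u ∧ (∀ x, 0 < u x) ∧ 0 < N u ∧ N u < ⊤
  (cont : ∀ (f : ℕ → Ω → ℝ) (g : Ω → ℝ), (∀ n, Measurable (f n)) → Measurable g →
    (∀ n x, 0 ≤ f n x) → (∀ n x, f n x ≤ f (n + 1) x) →
    (∀ x, Tendsto (fun n => f n x) atTop (𝓝 (g x))) →
    Tendsto (fun n => N (f n)) atTop (𝓝 (N g)))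

/-- `f₁, …, fₙ` are disjointly supported. -/
def DisjSupp {Ω : Type*} {n : ℕ} (f : Fin n → Ω → ℝ) : Prop :=
  ∀ i j, i ≠ j → ∀ x, f i x = 0 ∨ f j x = 0

/-- A crude upper `p`-estimate with constant `a`. -/
def CrudeUpper {Ω : Type*} [TopologicalSpace Ω] [MeasurableSpace Ω]
    (X : AdmissibleQuasinorm Ω) (p a : ℝ) : Prop :=
  ∀ (n : ℕ) (f : Fin n → Ω → ℝ), (∀ i, Measurable (f i)) → DisjSupp f →
    X.N (fun x => ∑ i, f i x) ≤ ENNReal.ofReal a * (∑ i, X.N (f i) ^ p) ^ (1 / p)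

/-- A crude lower `q`-estimate with constant `b`. -/
def CrudeLower {Ω : Type*} [TopologicalSpace Ω] [MeasurableSpace Ω]
    (X : AdmissibleQuasinorm Ω) (q b : ℝ) : Prop :=
  ∀ (n : ℕ) (f : Fin n → Ω → ℝ), (∀ i, Measurable (f i)) → DisjSupp f →
    (∑ i, X.N (f i) ^ q) ^ (1 / q) ≤ ENNReal.ofReal b * X.N (fun x => ∑ i, f i x)

/-!
Let `h = (∑ |fᵢ|ʳ)^(1/r)`. By `p`-normability `T ↦ ‖h 1_T‖ᵖ` is a submeasure `ψ`, and the crude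
lower `q`-estimate bounds `∑ ψ(T_k)^(q/p)` for disjoint sets `T_k`. Let `S` be a random set that
contains each point with probability at most `1/(2K)`, and take `K` independent copies of it. Their
parts outside the overlaps are disjoint, so the lower estimate makes one of these parts small on
average, while the overlap contains each point only with probability at most `1/(4K)`. Iterating,
with twice as many copies each time, gives `𝔼 ψ(S) ≤ ψ(Ω)/2` if `K` is large.

If instead `S` contains each point with probability at least `2K/n`, apply this to the complement
of the union of `n` independent copies of `S`: it follows that `ψ(Ω) ≤ 2 n 𝔼 ψ(S)`. Hence
`‖h‖ᵖ ≤ C ∑ w_j ‖h 1_(A_j)‖ᵖ` for every weighted cover `∑ w_j 1_(A_j) ≥ 1`. Cover `Ω` by the sets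
`{|fᵢ|ʳ ≥ 2ᵏ dᵢ hʳ}` with weights `4 · 2ᵏ dᵢ`, where `dᵢ` is about `‖fᵢ‖ʳ / ∑ ‖fⱼ‖ʳ`. As
`2ᵏ dᵢ ‖h 1_A‖ʳ ≤ ‖fᵢ‖ʳ` on such a set `A`, the sum over `k` is geometric, with ratio
`2^(1 - p/r) < 1`.
-/

open scoped NNReal

section RandomSets

variable {V : Type*}

/-- A submeasure: a monotone, finitely subadditive `ℝ≥0∞`-valued function of sets. -/
structure IsSubmeasure_s4 (ψ : Set V → ℝ≥0∞) : Prop where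
  empty : ψ ∅ = 0
  mono : Monotone ψ
  union_le : ∀ S T, ψ (S ∪ T) ≤ ψ S + ψ T

/-- A lower `t`-estimate for a set function, the analogue of `CrudeLower` for the set function
`T ↦ ‖h 1_T‖`. The constant `B` stands outside the `t`-th power. -/
def HasLowerEstimate (ψ : Set V → ℝ≥0∞) (t : ℝ) (B : ℝ≥0∞) : Prop :=
  ∀ (K : ℕ) (E : Fin K → Set V), Pairwise (Function.onFun Disjoint E) →
    ∑ k, ψ (E k) ^ t ≤ B * ψ (⋃ k, E k) ^ t

/-- The part of the `k`-th set of a finite family that is covered by the other sets. -/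
def overlap {K : ℕ} (x : Fin K → Set V) (k : Fin K) : Set V := x k ∩ ⋃ j ≠ k, x j

variable {ψ : Set V → ℝ≥0∞} {t : ℝ} {B : ℝ≥0∞}

namespace IsSubmeasure_s4

theorem biUnion_le_s4 {ι : Type*} (hψ : IsSubmeasure_s4 ψ) (s : Finset ι) (A : ι → Set V) :
    ψ (⋃ i ∈ s, A i) ≤ ∑ i ∈ s, ψ (A i) := by
  classical
  induction s using Finset.induction_on with
  | empty => simp [hψ.empty]
  | insert i s hi ih =>
    rw [Finset.sum_insert hi, Finset.set_biUnion_insert]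
    exact (hψ.union_le _ _).trans (by gcongr)

theorem iUnion_le {ι : Type*} [Fintype ι] (hψ : IsSubmeasure_s4 ψ) (A : ι → Set V) :
    ψ (⋃ i, A i) ≤ ∑ i, ψ (A i) := by
  simpa using hψ.biUnion_le_s4 Finset.univ A

theorem le_sum_indicator_singleton [Fintype V] (hψ : IsSubmeasure_s4 ψ) (S : Set V) :
    ψ S ≤ ∑ v, S.indicator (fun v ↦ ψ {v}) v := by
  classical
  calc ψ S = ψ (⋃ v ∈ S.toFinset, {v}) := by simp
    _ ≤ ∑ v ∈ S.toFinset, ψ {v} := hψ.biUnion_le_s4 _ _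
    _ = ∑ v, S.indicator (fun v ↦ ψ {v}) v := by
      simp only [indicator_apply, ← Finset.sum_filter]
      congr 1
      ext v
      simp

theorem lintegral_le_sum_measure_mem [Fintype V] (hψ : IsSubmeasure_s4 ψ) (μ : Measure (Set V)) :
    ∫⁻ S, ψ S ∂μ ≤ ∑ v, ψ {v} * μ {S | v ∈ S} := by
  calc ∫⁻ S, ψ S ∂μ ≤ ∫⁻ S, ∑ v, {S | v ∈ S}.indicator (fun _ ↦ ψ {v}) S ∂μ :=
        lintegral_mono hψ.le_sum_indicator_singleton
    _ = ∑ v, ψ {v} * μ {S | v ∈ S} := by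
      rw [lintegral_finsetSum _ fun _ _ ↦ Measurable.of_discrete]
      exact Finset.sum_congr rfl fun v _ ↦ lintegral_indicator_const .of_discrete _

end IsSubmeasure_s4

theorem pairwise_disjoint_sdiff_overlap {K : ℕ} (x : Fin K → Set V) :
    Pairwise (Function.onFun Disjoint fun k ↦ x k \ overlap x k) := by
  intro i j hij
  refine Set.disjoint_left.2 fun v hi hj ↦ hi.2 ⟨hi.1, ?_⟩
  exact mem_biUnion hij.symm hj.1

theorem pi_mem_overlap_le [Finite V] (μ : Measure (Set V)) [IsProbabilityMeasure μ] {K : ℕ}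
    (k : Fin K) (v : V) :
    Measure.pi (fun _ : Fin K ↦ μ) {x | v ∈ overlap x k} ≤ K * μ {S | v ∈ S} ^ 2 := by
  set π := Measure.pi fun _ : Fin K ↦ μ
  have pair_prob (j : Fin K) (hj : j ≠ k) :
      π {x | v ∈ x k ∧ v ∈ x j} = μ {S | v ∈ S} ^ 2 := by
    have hindep := (ProbabilityTheory.iIndepFun_pi (μ := fun _ : Fin K ↦ μ)
      (X := fun _ S ↦ S) fun _ ↦ aemeasurable_id).indepFun hj.symm
    have hmarg (i : Fin K) : π ((fun x ↦ x i) ⁻¹' {S | v ∈ S}) = μ {S | v ∈ S} :=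
      (measurePreserving_eval (fun _ : Fin K ↦ μ) i).measure_preimage
        (MeasurableSet.of_discrete (s := {S | v ∈ S})).nullMeasurableSet
    have := hindep.measure_inter_preimage_eq_mul {S | v ∈ S} {S | v ∈ S} .of_discrete .of_discrete
    rw [hmarg, hmarg, ← sq] at this
    exact this
  calc π {x | v ∈ overlap x k}
      ≤ π (⋃ j ∈ Finset.univ.erase k, {x | v ∈ x k ∧ v ∈ x j}) := by
        refine measure_mono fun x hx ↦ ?_
        simpa [overlap] using hx
    _ ≤ ∑ j ∈ Finset.univ.erase k, π {x | v ∈ x k ∧ v ∈ x j} := measure_biUnion_finset_le _ _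
    _ = (Finset.univ.erase k).card * μ {S | v ∈ S} ^ 2 := by
        rw [Finset.sum_congr rfl fun j hj ↦ pair_prob j (Finset.ne_of_mem_erase hj),
          Finset.sum_const, nsmul_eq_mul]
    _ ≤ K * μ {S | v ∈ S} ^ 2 := by
        gcongr
        simp

theorem HasLowerEstimate.sum_le (h : HasLowerEstimate ψ t B) (hψ : IsSubmeasure_s4 ψ) (ht : 1 ≤ t)
    {K : ℕ} (hK : K ≠ 0) (E : Fin K → Set V) (hE : Pairwise (Function.onFun Disjoint E)) :
    ∑ k, ψ (E k) ≤ K * ((B / K) ^ t⁻¹ * ψ univ) := by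
  have ht0 : 0 < t := zero_lt_one.trans_le ht
  have hK0 : (K : ℝ≥0∞) ≠ 0 := Nat.cast_ne_zero.2 hK
  have hKt : (K : ℝ≥0∞) ≠ ⊤ := ENNReal.natCast_ne_top K
  refine (ENNReal.rpow_le_rpow_iff ht0).1 ?_
  calc (∑ k, ψ (E k)) ^ t ≤ (K : ℝ≥0∞) ^ (t - 1) * ∑ k, ψ (E k) ^ t := by
        simpa using ENNReal.rpow_sum_le_const_mul_sum_rpow Finset.univ (fun k ↦ ψ (E k)) ht
    _ ≤ (K : ℝ≥0∞) ^ (t - 1) * (B * ψ univ ^ t) := by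
        gcongr
        exact (h K E hE).trans (by gcongr; exact hψ.mono (subset_univ _))
    _ = (K * ((B / K) ^ t⁻¹ * ψ univ)) ^ t := by
        rw [ENNReal.mul_rpow_of_nonneg _ _ ht0.le, ENNReal.mul_rpow_of_nonneg _ _ ht0.le,
          ENNReal.rpow_inv_rpow ht0.ne', ENNReal.rpow_sub _ _ hK0 hKt, ENNReal.rpow_one]
        simp only [div_eq_mul_inv]
        ring

variable [Finite V]

theorem IsSubmeasure_s4.exists_measure_mem_le_sq (hψ : IsSubmeasure_s4 ψ) (h : HasLowerEstimate ψ t B)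
    (ht : 1 ≤ t) (μ : Measure (Set V)) [IsProbabilityMeasure μ] {K : ℕ} (hK : K ≠ 0) :
    ∃ ν : Measure (Set V), IsProbabilityMeasure ν ∧
      (∀ v, ν {S | v ∈ S} ≤ K * μ {S | v ∈ S} ^ 2) ∧
      ∫⁻ S, ψ S ∂μ ≤ (B / K) ^ t⁻¹ * ψ univ + ∫⁻ S, ψ S ∂ν := by
  set π := Measure.pi fun _ : Fin K ↦ μ
  obtain ⟨k, hk⟩ : ∃ k, ∫⁻ x, ψ (x k \ overlap x k) ∂π ≤ (B / K) ^ t⁻¹ * ψ univ := by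
    have : Nonempty (Fin K) := ⟨⟨0, Nat.pos_of_ne_zero hK⟩⟩
    suffices hsum : ∑ k, ∫⁻ x, ψ (x k \ overlap x k) ∂π ≤
        ∑ _k : Fin K, (B / K) ^ t⁻¹ * ψ univ by
      simpa using ENNReal.exists_le_of_sum_le Finset.univ_nonempty hsum
    calc ∑ k, ∫⁻ x, ψ (x k \ overlap x k) ∂π = ∫⁻ x, ∑ k, ψ (x k \ overlap x k) ∂π :=
          (lintegral_finsetSum _ fun _ _ ↦ Measurable.of_discrete).symm
      _ ≤ ∫⁻ _, K * ((B / K) ^ t⁻¹ * ψ univ) ∂π :=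
          lintegral_mono fun x ↦ h.sum_le hψ ht hK _ (pairwise_disjoint_sdiff_overlap x)
      _ = ∑ _k : Fin K, (B / K) ^ t⁻¹ * ψ univ := by simp
  have hmeas : Measurable fun x : Fin K → Set V ↦ overlap x k := .of_discrete
  refine ⟨π.map fun x ↦ overlap x k, Measure.isProbabilityMeasure_map hmeas.aemeasurable,
    fun v ↦ ?_, ?_⟩
  · rw [Measure.map_apply hmeas .of_discrete]
    exact pi_mem_overlap_le μ k v
  · calc ∫⁻ S, ψ S ∂μ = ∫⁻ x, ψ (x k) ∂π :=
          ((measurePreserving_eval (fun _ : Fin K ↦ μ) k).lintegral_comp .of_discrete).symm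
      _ ≤ ∫⁻ x, (ψ (x k \ overlap x k) + ψ (overlap x k)) ∂π := by
          refine lintegral_mono fun x ↦ le_trans (hψ.mono ?_) (hψ.union_le _ _)
          rw [sdiff_union_self]
          exact subset_union_left
      _ = ∫⁻ x, ψ (x k \ overlap x k) ∂π + ∫⁻ x, ψ (overlap x k) ∂π :=
          lintegral_add_left .of_discrete _
      _ ≤ (B / K) ^ t⁻¹ * ψ univ + ∫⁻ S, ψ S ∂π.map fun x ↦ overlap x k := by
          rw [lintegral_map .of_discrete hmeas]
          gcongr

theorem IsSubmeasure_s4.exists_two_pow_mul_measure_mem_le (hψ : IsSubmeasure_s4 ψ)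
    (h : HasLowerEstimate ψ t B) (ht : 1 ≤ t) (μ : Measure (Set V)) [IsProbabilityMeasure μ]
    {K : ℕ} (hK : K ≠ 0) (M : ℕ) :
    ∃ ν : Measure (Set V),
      (∀ v, 2 * K * μ {S | v ∈ S} ≤ 1 → 2 * K * 2 ^ M * ν {S | v ∈ S} ≤ 1) ∧
      ∫⁻ S, ψ S ∂μ ≤ (∑ m ∈ Finset.range M, (B / (K * 2 ^ m)) ^ t⁻¹) * ψ univ + ∫⁻ S, ψ S ∂ν := by
  suffices ∃ ν : Measure (Set V), IsProbabilityMeasure ν ∧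
      (∀ v, 2 * K * μ {S | v ∈ S} ≤ 1 → 2 * K * 2 ^ M * ν {S | v ∈ S} ≤ 1) ∧
      ∫⁻ S, ψ S ∂μ ≤ (∑ m ∈ Finset.range M, (B / (K * 2 ^ m)) ^ t⁻¹) * ψ univ + ∫⁻ S, ψ S ∂ν from
    this.imp fun _ hν ↦ hν.2
  induction M with
  | zero => exact ⟨μ, inferInstance, by simp⟩
  | succ M ih =>
    obtain ⟨ν, _, hν, hle⟩ := ih
    obtain ⟨ν', hν', hmarg, hle'⟩ :=
      hψ.exists_measure_mem_le_sq h ht ν (K := K * 2 ^ M) (by positivity)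
    push_cast at hmarg hle'
    refine ⟨ν', hν', fun v hv ↦ ?_, ?_⟩
    · calc 2 * K * 2 ^ (M + 1) * ν' {S | v ∈ S}
          ≤ 2 * K * 2 ^ (M + 1) * (K * 2 ^ M * ν {S | v ∈ S} ^ 2) := by gcongr; exact hmarg v
        _ = (2 * K * 2 ^ M * ν {S | v ∈ S}) ^ 2 := by ring
        _ ≤ 1 := pow_le_one₀ zero_le (hν v hv)
    · calc ∫⁻ S, ψ S ∂μ ≤ _ := hle
        _ ≤ (∑ m ∈ Finset.range M, (B / (K * 2 ^ m)) ^ t⁻¹) * ψ univ +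
            ((B / (K * 2 ^ M)) ^ t⁻¹ * ψ univ + ∫⁻ S, ψ S ∂ν') := by gcongr
        _ = (∑ m ∈ Finset.range (M + 1), (B / (K * 2 ^ m)) ^ t⁻¹) * ψ univ +
            ∫⁻ S, ψ S ∂ν' := by
          rw [Finset.sum_range_succ, add_mul, add_assoc]

theorem IsSubmeasure_s4.lintegral_le_half_of_measure_mem_le (hψ : IsSubmeasure_s4 ψ) (hψt : ψ univ ≠ ⊤)
    (h : HasLowerEstimate ψ t B) (ht : 1 ≤ t) {K : ℕ} (hK : K ≠ 0)
    (hKB : ∑' m : ℕ, (B / (K * 2 ^ m)) ^ t⁻¹ ≤ 2⁻¹)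
    (μ : Measure (Set V)) [IsProbabilityMeasure μ]
    (hμ : ∀ v, ψ {v} ≠ 0 → 2 * K * μ {S | v ∈ S} ≤ 1) :
    ∫⁻ S, ψ S ∂μ ≤ 2⁻¹ * ψ univ := by
  cases nonempty_fintype V
  have hbound (M : ℕ) : ∫⁻ S, ψ S ∂μ ≤ 2⁻¹ * ψ univ + (∑ v, ψ {v}) * 2⁻¹ ^ M := by
    obtain ⟨ν, hν, hle⟩ := hψ.exists_two_pow_mul_measure_mem_le h ht μ hK M
    have hsum := (ENNReal.sum_le_tsum (f := fun m : ℕ ↦ (B / (K * 2 ^ m)) ^ t⁻¹)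
      (Finset.range M)).trans hKB
    have hmarg (v : V) : ψ {v} * ν {S | v ∈ S} ≤ ψ {v} * 2⁻¹ ^ M := by
      rcases eq_or_ne (ψ {v}) 0 with hv | hv
      · simp [hv]
      gcongr
      rw [← ENNReal.inv_pow, ENNReal.le_inv_iff_mul_le, mul_comm]
      refine le_trans ?_ (hν v (hμ v hv))
      gcongr
      refine le_mul_of_one_le_left zero_le ?_
      exact_mod_cast Nat.one_le_iff_ne_zero.2 (mul_ne_zero two_ne_zero hK)
    calc ∫⁻ S, ψ S ∂μ ≤ _ := hle
      _ ≤ 2⁻¹ * ψ univ + ∑ v, ψ {v} * ν {S | v ∈ S} := by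
        gcongr
        exact hψ.lintegral_le_sum_measure_mem ν
      _ ≤ 2⁻¹ * ψ univ + (∑ v, ψ {v}) * 2⁻¹ ^ M := by
        rw [Finset.sum_mul]
        exact add_le_add le_rfl (Finset.sum_le_sum fun v _ ↦ hmarg v)
  have hfin : ∑ v, ψ {v} ≠ ⊤ :=
    ENNReal.sum_ne_top.2 fun v _ ↦ ne_top_of_le_ne_top hψt (hψ.mono (subset_univ _))
  have hlim : Tendsto (fun M : ℕ ↦ 2⁻¹ * ψ univ + (∑ v, ψ {v}) * 2⁻¹ ^ M) atTop
      (𝓝 (2⁻¹ * ψ univ + (∑ v, ψ {v}) * 0)) :=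
    (ENNReal.Tendsto.const_mul
      (ENNReal.tendsto_pow_atTop_nhds_zero_of_lt_one (by simp)) (Or.inr hfin)).const_add _
  simpa using ge_of_tendsto' hlim hbound

theorem exists_nat_mul_le_le_add_one_mul (a : ℝ≥0) {m : ℝ≥0} (hm : 1 ≤ m) :
    ∃ n : ℕ, a * m ≤ n ∧ n ≤ (a + 1) * m := by
  refine ⟨⌈a * m⌉₊, Nat.le_ceil _, (Nat.ceil_lt_add_one zero_le).le.trans ?_⟩
  rw [add_mul, one_mul]
  gcongr

theorem mul_measure_pi_notMem_iUnion_le (μ : Measure (Set V)) [IsProbabilityMeasure μ] (n : ℕ)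
    (v : V) :
    n * μ {S | v ∈ S} * Measure.pi (fun _ : Fin n ↦ μ) {x | v ∈ (⋃ i, x i)ᶜ} ≤ 1 := by
  set a := μ {S | v ∈ S}ᶜ
  have ha : μ {S | v ∈ S} = 1 - a := by
    rw [← prob_compl_eq_one_sub .of_discrete, compl_compl]
  have hpi : Measure.pi (fun _ : Fin n ↦ μ) {x | v ∈ (⋃ i, x i)ᶜ} = a ^ n := by
    have : {x : Fin n → Set V | v ∈ (⋃ i, x i)ᶜ} = Set.pi univ fun _ ↦ {S | v ∈ S}ᶜ := by
      ext x
      simp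
    rw [this, Measure.pi_pi, Finset.prod_const, Finset.card_univ, Fintype.card_fin]
  calc n * μ {S | v ∈ S} * Measure.pi (fun _ : Fin n ↦ μ) {x | v ∈ (⋃ i, x i)ᶜ}
      = (1 - a) * ∑ _i ∈ Finset.range n, a ^ n := by
        rw [hpi, ha, Finset.sum_const, Finset.card_range, nsmul_eq_mul]
        ring
    _ ≤ (1 - a) * ∑ i ∈ Finset.range n, a ^ i := by
        gcongr (1 - a) * ?_
        exact Finset.sum_le_sum fun i hi ↦
          pow_le_pow_of_le_one zero_le prob_le_one (Finset.mem_range.1 hi).le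
    _ ≤ (1 - a) * (1 - a)⁻¹ := by
        gcongr
        rw [← ENNReal.tsum_geometric]
        exact ENNReal.sum_le_tsum _
    _ ≤ 1 := ENNReal.mul_inv_le_one _

namespace IsSubmeasure_s4

theorem lintegral_pi_iUnion_le (hψ : IsSubmeasure_s4 ψ) (μ : Measure (Set V))
    [IsProbabilityMeasure μ] (n : ℕ) :
    ∫⁻ x, ψ (⋃ i, x i) ∂Measure.pi (fun _ : Fin n ↦ μ) ≤ n * ∫⁻ S, ψ S ∂μ := by
  calc ∫⁻ x, ψ (⋃ i, x i) ∂Measure.pi (fun _ : Fin n ↦ μ)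
      ≤ ∫⁻ x, ∑ i, ψ (x i) ∂Measure.pi (fun _ : Fin n ↦ μ) :=
        lintegral_mono fun x ↦ hψ.iUnion_le x
    _ = ∑ i, ∫⁻ x, ψ (x i) ∂Measure.pi (fun _ : Fin n ↦ μ) :=
        lintegral_finsetSum _ fun _ _ ↦ Measurable.of_discrete
    _ = ∑ _i : Fin n, ∫⁻ S, ψ S ∂μ := Finset.sum_congr rfl fun i _ ↦
        (measurePreserving_eval (fun _ : Fin n ↦ μ) i).lintegral_comp .of_discrete
    _ = n * ∫⁻ S, ψ S ∂μ := by simp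

theorem le_two_mul_lintegral_of_le_measure_mem (hψ : IsSubmeasure_s4 ψ) (hψt : ψ univ ≠ ⊤)
    (h : HasLowerEstimate ψ t B) (ht : 1 ≤ t) {K : ℕ} (hK : K ≠ 0)
    (hKB : ∑' m : ℕ, (B / (K * 2 ^ m)) ^ t⁻¹ ≤ 2⁻¹)
    (μ : Measure (Set V)) [IsProbabilityMeasure μ] (n : ℕ)
    (hμ : ∀ v, ψ {v} ≠ 0 → 2 * K ≤ n * μ {S | v ∈ S}) :
    ψ univ ≤ 2 * (n * ∫⁻ S, ψ S ∂μ) := by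
  set π := Measure.pi fun _ : Fin n ↦ μ
  have hmeas : Measurable fun x : Fin n → Set V ↦ (⋃ i, x i)ᶜ := .of_discrete
  have : IsProbabilityMeasure (π.map fun x ↦ (⋃ i, x i)ᶜ) :=
    Measure.isProbabilityMeasure_map hmeas.aemeasurable
  have hcompl : ∫⁻ x, ψ (⋃ i, x i)ᶜ ∂π ≤ 2⁻¹ * ψ univ := by
    rw [← lintegral_map (f := ψ) .of_discrete hmeas]
    refine hψ.lintegral_le_half_of_measure_mem_le hψt h ht hK hKB _ fun v hv ↦ ?_
    rw [Measure.map_apply hmeas .of_discrete]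
    refine le_trans ?_ (mul_measure_pi_notMem_iUnion_le μ n v)
    exact mul_le_mul' (hμ v hv) le_rfl
  have hsplit : ψ univ ≤ n * ∫⁻ S, ψ S ∂μ + 2⁻¹ * ψ univ := by
    calc ψ univ = ∫⁻ _, ψ univ ∂π := by simp
      _ ≤ ∫⁻ x, (ψ (⋃ i, x i) + ψ (⋃ i, x i)ᶜ) ∂π := by
        refine lintegral_mono fun x ↦ ?_
        simpa only [union_compl_self] using hψ.union_le (⋃ i, x i) (⋃ i, x i)ᶜ
      _ = ∫⁻ x, ψ (⋃ i, x i) ∂π + ∫⁻ x, ψ (⋃ i, x i)ᶜ ∂π := lintegral_add_left .of_discrete _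
      _ ≤ n * ∫⁻ S, ψ S ∂μ + 2⁻¹ * ψ univ := by
        gcongr
        exact hψ.lintegral_pi_iUnion_le μ n
  have hhalf : 2⁻¹ * ψ univ ≤ n * ∫⁻ S, ψ S ∂μ := by
    refine (ENNReal.add_le_add_iff_right (a := 2⁻¹ * ψ univ) (by finiteness)).1 ?_
    rwa [← add_mul, ENNReal.inv_two_add_inv_two, one_mul]
  calc ψ univ = 2 * (2⁻¹ * ψ univ) := by
        rw [← mul_assoc, ENNReal.mul_inv_cancel two_ne_zero ENNReal.ofNat_ne_top, one_mul]
    _ ≤ 2 * (n * ∫⁻ S, ψ S ∂μ) := by gcongr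

theorem ne_top_of_lintegral_ne_top (hψ : IsSubmeasure_s4 ψ) {μ : Measure (Set V)}
    (hμ : ∀ v, ψ {v} ≠ 0 → μ {S | v ∈ S} ≠ 0) (hint : ∫⁻ S, ψ S ∂μ ≠ ⊤) : ψ univ ≠ ⊤ := by
  cases nonempty_fintype V
  refine ne_top_of_le_ne_top (ENNReal.sum_ne_top.2 fun v _ ↦ ?_)
    (hψ.le_sum_indicator_singleton univ)
  rcases eq_or_ne (ψ {v}) 0 with hv | hv
  · simp [hv]
  obtain ⟨S, hvS, hS⟩ := ((frequently_ae_mem_iff.2 (hμ v hv)).and_eventually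
    (ae_lt_top (.of_discrete (f := ψ)) hint)).exists
  simpa using ne_top_of_le_ne_top hS.ne (hψ.mono (singleton_subset_iff.2 hvS))

theorem le_mul_lintegral_of_one_le_measure_mem (hψ : IsSubmeasure_s4 ψ)
    (h : HasLowerEstimate ψ t B) (ht : 1 ≤ t) {K : ℕ} (hK : K ≠ 0)
    (hKB : ∑' m : ℕ, (B / (K * 2 ^ m)) ^ t⁻¹ ≤ 2⁻¹)
    (μ : Measure (Set V)) [IsFiniteMeasure μ] (hμ : ∀ v, ψ {v} ≠ 0 → 1 ≤ μ {S | v ∈ S}) :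
    ψ univ ≤ 2 * (2 * K + 1) * ∫⁻ S, ψ S ∂μ := by
  rcases eq_or_ne (∫⁻ S, ψ S ∂μ) ⊤ with hint | hint
  · simp [hint]
  have hψt : ψ univ ≠ ⊤ := hψ.ne_top_of_lintegral_ne_top
    (fun v hv ↦ (zero_lt_one.trans_le (hμ v hv)).ne') hint
  by_cases hnull : ∀ v, ψ {v} = 0
  · cases nonempty_fintype V
    have hψ0 : ψ univ = 0 := by simpa [hnull] using hψ.le_sum_indicator_singleton univ
    simp [hψ0]
  obtain ⟨v₀, hv₀⟩ := not_forall.1 hnull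
  obtain ⟨m, hm⟩ : ∃ m : ℝ≥0, (m : ℝ≥0∞) = μ univ :=
    ⟨_, ENNReal.coe_toNNReal (measure_ne_top μ univ)⟩
  have hm1 : 1 ≤ m := by
    rw [← ENNReal.coe_le_coe, hm]
    exact (hμ v₀ hv₀).trans (measure_mono (subset_univ _))
  have hm0 : (m : ℝ≥0∞) ≠ 0 := by
    simpa using (zero_lt_one.trans_le hm1).ne'
  have : IsProbabilityMeasure ((m : ℝ≥0∞)⁻¹ • μ) :=
    ⟨by simp [← hm, ENNReal.inv_mul_cancel hm0 ENNReal.coe_ne_top]⟩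
  obtain ⟨n, hn, hn'⟩ := exists_nat_mul_le_le_add_one_mul (2 * K) hm1
  replace hn : 2 * K * (m : ℝ≥0∞) ≤ n := mod_cast hn
  replace hn' : (n : ℝ≥0∞) ≤ (2 * K + 1) * m := mod_cast hn'
  calc ψ univ ≤ 2 * (n * ∫⁻ S, ψ S ∂(m : ℝ≥0∞)⁻¹ • μ) := by
        refine hψ.le_two_mul_lintegral_of_le_measure_mem hψt h ht hK hKB _ n fun v hv ↦ ?_
        calc 2 * K = 2 * K * m * ((m : ℝ≥0∞)⁻¹ * 1) := by
              rw [mul_one, ENNReal.mul_inv_cancel_right hm0 ENNReal.coe_ne_top]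
          _ ≤ n * ((m : ℝ≥0∞)⁻¹ * μ {S | v ∈ S}) := by gcongr; exact hμ v hv
    _ ≤ 2 * ((2 * K + 1) * m * ((m : ℝ≥0∞)⁻¹ * ∫⁻ S, ψ S ∂μ)) := by
        rw [lintegral_smul_measure, smul_eq_mul]
        gcongr
    _ = 2 * (2 * K + 1) * ∫⁻ S, ψ S ∂μ := by
        rw [mul_assoc _ (m : ℝ≥0∞), ENNReal.mul_inv_cancel_left hm0 ENNReal.coe_ne_top, mul_assoc]

theorem le_mul_sum_of_one_le_sum_indicator (hψ : IsSubmeasure_s4 ψ)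
    (h : HasLowerEstimate ψ t B) (ht : 1 ≤ t) {K : ℕ} (hK : K ≠ 0)
    (hKB : ∑' m : ℕ, (B / (K * 2 ^ m)) ^ t⁻¹ ≤ 2⁻¹) {J : Type*} [Fintype J] (A : J → Set V)
    (w : J → ℝ≥0) (hw : ∀ v, ψ {v} ≠ 0 → 1 ≤ ∑ j, (A j).indicator (fun _ ↦ w j) v) :
    ψ univ ≤ 2 * (2 * K + 1) * ∑ j, w j * ψ (A j) := by
  classical
  have key := hψ.le_mul_lintegral_of_one_le_measure_mem h ht hK hKB
    (∑ j, w j • Measure.dirac (A j)) fun v hv ↦ by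
      refine (ENNReal.coe_le_coe.2 (hw v hv)).trans_eq ?_
      simp [Measure.finsetSum_apply, indicator_apply, apply_ite ENNReal.ofNNReal]
  simpa only [lintegral_finsetSum_measure, lintegral_smul_measure, lintegral_dirac,
    ENNReal.smul_def, smul_eq_mul] using key

end IsSubmeasure_s4

theorem tsum_div_two_pow_rpow (B K : ℝ≥0∞) {s : ℝ} (hs : 0 ≤ s) :
    ∑' m : ℕ, (B / (K * 2 ^ m)) ^ s = (B / K) ^ s * (1 - 2⁻¹ ^ s)⁻¹ := by
  have hterm (m : ℕ) : (B / (K * 2 ^ m)) ^ s = (B / K) ^ s * (2⁻¹ ^ s) ^ m := by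
    rw [← ENNReal.rpow_mul_natCast, mul_comm s, ENNReal.rpow_natCast_mul,
      ← ENNReal.mul_rpow_of_nonneg _ _ hs, div_eq_mul_inv, div_eq_mul_inv,
      ENNReal.mul_inv (by simp) (by simp), ENNReal.inv_pow, mul_assoc]
  simp only [hterm, ENNReal.tsum_mul_left, ENNReal.tsum_geometric]

theorem exists_nat_tsum_div_two_pow_rpow_le {B : ℝ≥0∞} (hB : B ≠ ⊤) {s : ℝ} (hs : 0 < s) :
    ∃ K : ℕ, K ≠ 0 ∧ ∑' m : ℕ, (B / (K * 2 ^ m)) ^ s ≤ 2⁻¹ := by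
  simp only [tsum_div_two_pow_rpow B _ hs.le]
  have hinv : ((1 : ℝ≥0∞) - 2⁻¹ ^ s)⁻¹ ≠ ⊤ :=
    ENNReal.inv_ne_top.2
      (tsub_pos_of_lt (ENNReal.rpow_lt_one (ENNReal.inv_lt_one.2 one_lt_two) hs)).ne'
  have hdiv : Tendsto (fun K : ℕ ↦ B / (K : ℝ≥0∞)) atTop (𝓝 0) := by
    simpa [ENNReal.div_top] using
      ENNReal.Tendsto.const_div ENNReal.tendsto_nat_nhds_top (Or.inr hB)
  have hlim : Tendsto (fun K : ℕ ↦ (B / (K : ℝ≥0∞)) ^ s * (1 - 2⁻¹ ^ s)⁻¹) atTop (𝓝 0) := by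
    simpa [ENNReal.zero_rpow_of_pos hs] using
      ENNReal.Tendsto.mul_const (hdiv.ennrpow_const s) (Or.inr hinv)
  exact ((eventually_ne_atTop 0).and (hlim.eventually_le_const (by simp))).exists

end RandomSets

section DyadicCover

variable {Ω ι : Type*} [Fintype ι] {r : ℝ} {h : Ω → ℝ}

theorem le_add_two_mul_sum_dyadic {c y : ℝ≥0} {m : ℕ} (hy : y ≤ 2 ^ m * c) :
    y ≤ c + 2 * ∑ k : Fin m, if 2 ^ (k : ℕ) * c ≤ y then 2 ^ (k : ℕ) * c else 0 := by
  induction m with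
  | zero => simpa using hy
  | succ m ih =>
    rw [Fin.sum_univ_castSucc]
    split_ifs with hm
    · calc y ≤ 2 * (2 ^ m * c) := by rwa [← mul_assoc, ← pow_succ']
        _ ≤ _ := le_add_left (mul_le_mul' le_rfl le_add_self)
    · simpa using ih (not_le.1 hm).le

theorem one_le_sum_dyadic {d y : ι → ℝ≥0} (hd : ∑ i, d i ≤ 2⁻¹)
    (hy : ∑ i, y i = 1) {m : ℕ} (hm : ∀ i, 1 ≤ 2 ^ m * d i) :
    1 ≤ ∑ j : ι × Fin m,
      if 2 ^ (j.2 : ℕ) * d j.1 ≤ y j.1 then 4 * (2 ^ (j.2 : ℕ) * d j.1) else 0 := by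
  set s := ∑ i, ∑ k : Fin m, if 2 ^ (k : ℕ) * d i ≤ y i then 2 ^ (k : ℕ) * d i else 0
  have hs : 1 ≤ 2⁻¹ + 2 * s := by
    calc 1 = ∑ i, y i := hy.symm
      _ ≤ ∑ i, (d i + 2 * ∑ k : Fin m,
            if 2 ^ (k : ℕ) * d i ≤ y i then 2 ^ (k : ℕ) * d i else 0) :=
          Finset.sum_le_sum fun i hi ↦ le_add_two_mul_sum_dyadic <|
            (hy ▸ Finset.single_le_sum (fun _ _ ↦ zero_le) hi).trans (hm i)
      _ = ∑ i, d i + 2 * s := by rw [Finset.sum_add_distrib, Finset.mul_sum]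
      _ ≤ 2⁻¹ + 2 * s := by gcongr
  have hhalf : 2⁻¹ ≤ 2 * s := by
    refine le_of_add_le_add_left (a := 2⁻¹) ?_
    rwa [← two_mul, mul_inv_cancel₀ two_ne_zero]
  calc 1 = 2 * 2⁻¹ := (mul_inv_cancel₀ two_ne_zero).symm
    _ ≤ 2 * (2 * s) := by gcongr
    _ = 4 * s := by ring
    _ = _ := by simp only [s, Fintype.sum_prod_type, Finset.mul_sum, mul_ite_zero]

theorem exists_pos_weights_le_mul (a : ι → ℝ≥0∞) :
    ∃ d : ι → ℝ≥0, (∀ i, d i ≠ 0) ∧ ∑ i, d i ≤ 2⁻¹ ∧ ∀ i, a i ≤ 4 * (∑ j, a j) * d i := by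
  rcases isEmpty_or_nonempty ι with hι | hι
  · exact ⟨fun _ ↦ 0, by simp⟩
  set S := ∑ j, a j
  set e : ι → ℝ≥0∞ := fun i ↦ 4⁻¹ * (a i / S + (Fintype.card ι : ℝ≥0∞)⁻¹)
  have haS (i : ι) : a i ≤ S := Finset.single_le_sum (fun _ _ ↦ zero_le) (Finset.mem_univ i)
  have hsum : ∑ i, e i ≤ 2⁻¹ := by
    calc ∑ i, e i = 4⁻¹ * (S / S + 1) := by
          simp only [e, ← Finset.mul_sum, Finset.sum_add_distrib, div_eq_mul_inv, ← Finset.sum_mul]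
          simp [ENNReal.mul_inv_cancel, S]
      _ ≤ 4⁻¹ * (1 + 1) := by gcongr; exact ENNReal.div_self_le_one
      _ = 2⁻¹ := by
        rw [one_add_one_eq_two, show (4 : ℝ≥0∞) = 2 * 2 by norm_num,
          ENNReal.mul_inv (by simp) (by simp), mul_assoc,
          ENNReal.inv_mul_cancel two_ne_zero ENNReal.ofNat_ne_top, mul_one]
  have hfin (i : ι) : e i ≠ ⊤ := ENNReal.sum_ne_top.1 (hsum.trans_lt (by simp)).ne i (by simp)
  have hle (i : ι) : a i ≤ 4 * S * e i := by
    calc a i ≤ S * (a i / S + (Fintype.card ι : ℝ≥0∞)⁻¹) := by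
          rcases eq_or_ne S 0 with hS | hS
          · simpa [hS] using haS i
          rcases eq_or_ne S ⊤ with hS' | hS'
          · simp [hS']
          rw [mul_add, ENNReal.mul_div_cancel hS hS']
          exact le_self_add
      _ = 4 * S * e i := by
          rw [mul_comm 4 S, mul_assoc, ENNReal.mul_inv_cancel_left (by simp) (by simp)]
  have hpos (i : ι) : e i ≠ 0 := by simp [e]
  lift e to ι → ℝ≥0 using hfin with d
  refine ⟨d, fun i ↦ mod_cast hpos i, ?_, hle⟩
  rwa [← ENNReal.coe_le_coe, ENNReal.coe_inv two_ne_zero, ENNReal.ofNNReal_finsetSum]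

theorem sum_two_pow_mul_div_two_pow_rpow_le (σ : ℝ≥0∞) {s : ℝ} (hs : 0 ≤ s) (m : ℕ) :
    ∑ k : Fin m, 2 ^ (k : ℕ) * (σ / 2 ^ (k : ℕ)) ^ s ≤ (1 - 2 ^ (1 - s))⁻¹ * σ ^ s := by
  have hterm (k : ℕ) : 2 ^ k * (σ / 2 ^ k) ^ s = (2 ^ (1 - s)) ^ k * σ ^ s := by
    rw [ENNReal.div_rpow_of_nonneg _ _ hs, ENNReal.rpow_sub _ _ two_ne_zero ENNReal.ofNat_ne_top,
      ENNReal.rpow_one, div_eq_mul_inv, div_eq_mul_inv, mul_pow, ← ENNReal.inv_pow,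
      ← ENNReal.rpow_mul_natCast, mul_comm s, ENNReal.rpow_natCast_mul]
    ring
  calc ∑ k : Fin m, 2 ^ (k : ℕ) * (σ / 2 ^ (k : ℕ)) ^ s
      = (∑ k ∈ Finset.range m, (2 ^ (1 - s)) ^ k) * σ ^ s := by
        simp only [hterm, ← Finset.sum_mul,
          Fin.sum_univ_eq_sum_range fun k ↦ ((2 : ℝ≥0∞) ^ (1 - s)) ^ k]
    _ ≤ (1 - 2 ^ (1 - s))⁻¹ * σ ^ s := by
        gcongr
        rw [← ENNReal.tsum_geometric]
        exact ENNReal.sum_le_tsum _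

theorem sum_mul_div_two_pow_rpow_le {d : ι → ℝ≥0} (hd : ∑ i, d i ≤ 2⁻¹) (σ : ℝ≥0∞) {s : ℝ}
    (hs : 0 ≤ s) (m : ℕ) :
    ∑ j : ι × Fin m, (4 * (2 ^ (j.2 : ℕ) * d j.1) : ℝ≥0) * (σ / 2 ^ (j.2 : ℕ)) ^ s ≤
      2 * (1 - 2 ^ (1 - s))⁻¹ * σ ^ s := by
  calc ∑ j : ι × Fin m, (4 * (2 ^ (j.2 : ℕ) * d j.1) : ℝ≥0) * (σ / 2 ^ (j.2 : ℕ)) ^ s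
      = 4 * (∑ i, d i : ℝ≥0) * ∑ k : Fin m, 2 ^ (k : ℕ) * (σ / 2 ^ (k : ℕ)) ^ s := by
        rw [Fintype.sum_prod_type, ENNReal.ofNNReal_finsetSum, mul_assoc, Finset.sum_mul_sum]
        simp only [Finset.mul_sum]
        push_cast
        refine Finset.sum_congr rfl fun i _ ↦ Finset.sum_congr rfl fun k _ ↦ ?_
        ring
    _ ≤ 4 * (2⁻¹ : ℝ≥0) * ((1 - 2 ^ (1 - s))⁻¹ * σ ^ s) := by
        gcongr
        exact sum_two_pow_mul_div_two_pow_rpow_le σ hs m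
    _ = 2 * (2 * 2⁻¹) * (1 - 2 ^ (1 - s))⁻¹ * σ ^ s := by
        rw [ENNReal.coe_inv two_ne_zero]
        push_cast
        ring
    _ = 2 * (1 - 2 ^ (1 - s))⁻¹ * σ ^ s := by
        rw [ENNReal.mul_inv_cancel two_ne_zero ENNReal.ofNat_ne_top, mul_one]

theorem nnnorm_sum_abs_rpow_rpow (hr : r ≠ 0) (a : ι → ℝ) :
    ‖(∑ i, |a i| ^ r) ^ (1 / r)‖₊ ^ r = ∑ i, ‖a i‖₊ ^ r := by
  have hsum : ∑ i, |a i| ^ r = ((∑ i, ‖a i‖₊ ^ r : ℝ≥0) : ℝ) := by simp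
  rw [hsum, one_div, ← NNReal.coe_rpow, NNReal.nnnorm_eq, NNReal.rpow_inv_rpow hr]

/-- The set where `|f| ^ r` is at least the fraction `c` of `|h| ^ r`. -/
def shareSet (r : ℝ) (c : ℝ≥0) (f h : Ω → ℝ) : Set Ω := {x | c * ‖h x‖₊ ^ r ≤ ‖f x‖₊ ^ r}

theorem measurableSet_shareSet [MeasurableSpace Ω] (r : ℝ) (c : ℝ≥0) {f : Ω → ℝ}
    (hf : Measurable f) (hh : Measurable h) : MeasurableSet (shareSet r c f h) :=
  measurableSet_le (by fun_prop) (by fun_prop)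

theorem one_le_sum_indicator_shareSet {f : ι → Ω → ℝ} {d : ι → ℝ≥0}
    (hd : ∑ i, d i ≤ 2⁻¹) {m : ℕ} (hm : ∀ i, 1 ≤ 2 ^ m * d i) {x : Ω} (hx : h x ≠ 0)
    (hhf : ‖h x‖₊ ^ r = ∑ i, ‖f i x‖₊ ^ r) :
    1 ≤ ∑ j : ι × Fin m, (shareSet r (2 ^ (j.2 : ℕ) * d j.1) (f j.1) h).indicator
      (fun _ ↦ 4 * (2 ^ (j.2 : ℕ) * d j.1)) x := by
  classical
  have hpos : 0 < ‖h x‖₊ ^ r := NNReal.rpow_pos (nnnorm_pos.2 hx)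
  have hy : ∑ i, ‖f i x‖₊ ^ r / ‖h x‖₊ ^ r = 1 := by
    rw [← Finset.sum_div, ← hhf, div_self hpos.ne']
  simpa only [indicator_apply, shareSet, mem_ofPred_eq, le_div_iff₀ hpos] using
    one_le_sum_dyadic hd hy hm

end DyadicCover

section Quasinorm

variable {Ω V : Type*} [TopologicalSpace Ω] [MeasurableSpace Ω] [MeasurableSpace V]
  [DiscreteMeasurableSpace V] {X : AdmissibleQuasinorm Ω} {p q r b : ℝ} {h : Ω → ℝ}

/-- `p`-normability of an admissible quasinorm: subadditivity of its `p`-th power. -/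
def AdmissibleQuasinorm.IsPNormable (X : AdmissibleQuasinorm Ω) (p : ℝ) : Prop :=
  ∀ f g : Ω → ℝ, Measurable f → Measurable g →
    X.N (fun x ↦ f x + g x) ^ p ≤ X.N f ^ p + X.N g ^ p

theorem AdmissibleQuasinorm.N_zero (X : AdmissibleQuasinorm Ω) : X.N (fun _ ↦ 0) = 0 := by
  simpa using X.smul 0 (fun _ ↦ 0) measurable_const

theorem AdmissibleQuasinorm.N_indicator_mono (X : AdmissibleQuasinorm Ω) (hh : Measurable h)
    {A A' : Set Ω} (hA : MeasurableSet A) (hA' : MeasurableSet A') (hAA' : A ⊆ A') :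
    X.N (A.indicator h) ≤ X.N (A'.indicator h) := by
  refine X.mono _ _ (hh.indicator hA) (hh.indicator hA') fun x ↦ ?_
  simpa only [Real.norm_eq_abs] using norm_indicator_le_of_subset hAA' h x

namespace AdmissibleQuasinorm.IsPNormable

theorem N_indicator_union_le (hX : X.IsPNormable p) (hp : 0 ≤ p) (hh : Measurable h)
    {A A' : Set Ω} (hA : MeasurableSet A) (hA' : MeasurableSet A') :
    X.N ((A ∪ A').indicator h) ^ p ≤ X.N (A.indicator h) ^ p + X.N (A'.indicator h) ^ p := by
  calc X.N ((A ∪ A').indicator h) ^ p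
      = X.N (fun x ↦ A.indicator h x + (A' \ A).indicator h x) ^ p := by
        rw [← union_sdiff_self, indicator_union_of_disjoint disjoint_sdiff_right]
    _ ≤ X.N (A.indicator h) ^ p + X.N ((A' \ A).indicator h) ^ p :=
        hX _ _ (hh.indicator hA) (hh.indicator (hA'.diff hA))
    _ ≤ X.N (A.indicator h) ^ p + X.N (A'.indicator h) ^ p := by
        gcongr
        exact X.N_indicator_mono hh (hA'.diff hA) hA' sdiff_subset

theorem isSubmeasure_indicator_preimage (hX : X.IsPNormable p) (hp : 0 < p) (hh : Measurable h)
    {Φ : Ω → V} (hΦ : Measurable Φ) :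
    IsSubmeasure_s4 fun T ↦ X.N ((Φ ⁻¹' T).indicator h) ^ p where
  empty := by
    simp [X.N_zero, hp]
  mono S T hST := by
    dsimp only
    gcongr
    exact X.N_indicator_mono hh (hΦ .of_discrete) (hΦ .of_discrete) (preimage_mono hST)
  union_le S T := hX.N_indicator_union_le hp.le hh (hΦ .of_discrete) (hΦ .of_discrete)

end AdmissibleQuasinorm.IsPNormable

theorem CrudeLower.hasLowerEstimate_indicator_preimage (hb : CrudeLower X q b) (hp : 0 < p)
    (hq : 0 < q) (hh : Measurable h) {Φ : Ω → V} (hΦ : Measurable Φ) :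
    HasLowerEstimate (fun T ↦ X.N ((Φ ⁻¹' T).indicator h) ^ p) (q / p)
      (ENNReal.ofReal b ^ q) := by
  intro K E hE
  have hdisj : DisjSupp fun k ↦ (Φ ⁻¹' E k).indicator h := fun i j hij x ↦ by
    by_contra! hx
    exact disjoint_left.1 ((hE hij).preimage Φ) (mem_of_indicator_ne_zero hx.1)
      (mem_of_indicator_ne_zero hx.2)
  have hsum : (fun x ↦ ∑ k, (Φ ⁻¹' E k).indicator h x) = (Φ ⁻¹' ⋃ k, E k).indicator h := by
    have := Finset.indicator_biUnion Finset.univ (fun k ↦ Φ ⁻¹' E k)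
      (fun i _ j _ hij ↦ (hE hij).preimage Φ) (f := h)
    simpa using this.symm
  have hest := hb K _ (fun k ↦ hh.indicator (hΦ (.of_discrete (s := E k)))) hdisj
  simp only [← ENNReal.rpow_mul, mul_div_cancel₀ q hp.ne']
  rw [← ENNReal.mul_rpow_of_nonneg _ _ hq.le, ← hsum]
  simpa only [one_div, ENNReal.rpow_inv_rpow hq.ne'] using ENNReal.rpow_le_rpow hest hq.le

-- The points of `Ω` are grouped by the sets `A j` they belong to, so `V` is `Set J` here.
theorem AdmissibleQuasinorm.IsPNormable.N_rpow_le_mul_sum (hX : X.IsPNormable p)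
    (hb : CrudeLower X q b) (hp : 0 < p) (hpq : p ≤ q) {K : ℕ} (hK : K ≠ 0)
    (hKb : ∑' m : ℕ, (ENNReal.ofReal b ^ q / (K * 2 ^ m)) ^ (q / p)⁻¹ ≤ 2⁻¹)
    (hh : Measurable h) {J : Type*} [Fintype J] {A : J → Set Ω} (hA : ∀ j, MeasurableSet (A j))
    (w : J → ℝ≥0) (hw : ∀ x, h x ≠ 0 → 1 ≤ ∑ j, (A j).indicator (fun _ ↦ w j) x) :
    X.N h ^ p ≤ 2 * (2 * K + 1) * ∑ j, w j * X.N ((A j).indicator h) ^ p := by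
  set Φ : Ω → Set J := fun x ↦ {j | x ∈ A j}
  have hΦ : Measurable Φ := measurable_set_iff.2 fun j ↦ measurable_mem.2 (hA j)
  have hatom (v : Set J) (hv : X.N ((Φ ⁻¹' {v}).indicator h) ^ p ≠ 0) :
      1 ≤ ∑ j, {v : Set J | j ∈ v}.indicator (fun _ ↦ w j) v := by
    obtain ⟨x, rfl, hx⟩ : ∃ x, Φ x = v ∧ h x ≠ 0 := by
      contrapose! hv
      have hzero : (Φ ⁻¹' {v}).indicator h = fun _ ↦ 0 :=
        funext fun x ↦ indicator_apply_eq_zero.2 (hv x)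
      simp [hzero, X.N_zero, hp]
    exact hw x hx
  have key := (hX.isSubmeasure_indicator_preimage hp hh hΦ).le_mul_sum_of_one_le_sum_indicator
    (hb.hasLowerEstimate_indicator_preimage hp (hp.trans_le hpq) hh hΦ)
    ((one_le_div hp).2 hpq) hK hKb (fun j ↦ {v : Set J | j ∈ v}) w hatom
  rwa [preimage_univ, indicator_univ] at key

theorem AdmissibleQuasinorm.mul_N_indicator_shareSet_rpow_le (X : AdmissibleQuasinorm Ω)
    (hr : 0 < r) {f : Ω → ℝ} (hf : Measurable f) (hh : Measurable h) (c : ℝ≥0) :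
    c * X.N ((shareSet r c f h).indicator h) ^ r ≤ X.N f ^ r := by
  set A := shareSet r c f h
  have hA : Measurable (A.indicator h) := hh.indicator (measurableSet_shareSet r c hf hh)
  set a : ℝ≥0 := c ^ r⁻¹
  have hmono : X.N (fun x ↦ a * A.indicator h x) ≤ X.N f := by
    refine X.mono _ _ (hA.const_mul _) hf fun x ↦ ?_
    by_cases hx : x ∈ A
    · suffices a * ‖h x‖₊ ≤ ‖f x‖₊ by
        simpa [indicator_of_mem hx, abs_mul] using NNReal.coe_le_coe.2 this
      rw [← NNReal.rpow_le_rpow_iff hr, NNReal.mul_rpow, NNReal.rpow_inv_rpow hr.ne']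
      exact hx
    · simp [indicator_of_notMem hx]
  rw [X.smul _ _ hA, NNReal.abs_eq, ENNReal.ofReal_coe_nnreal] at hmono
  calc c * X.N (A.indicator h) ^ r = (a * X.N (A.indicator h)) ^ r := by
        rw [ENNReal.mul_rpow_of_nonneg _ _ hr.le, ← ENNReal.coe_rpow_of_nonneg _ hr.le,
          NNReal.rpow_inv_rpow hr.ne']
    _ ≤ X.N f ^ r := by gcongr

theorem AdmissibleQuasinorm.N_indicator_shareSet_rpow_le_div (X : AdmissibleQuasinorm Ω)
    (hr : 0 < r) {f : Ω → ℝ} (hf : Measurable f) (hh : Measurable h) {c d : ℝ≥0} (hc : c ≠ 0)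
    (hd : d ≠ 0) {σ : ℝ≥0∞} (hσ : X.N f ^ r ≤ σ * d) :
    X.N ((shareSet r (c * d) f h).indicator h) ^ r ≤ σ / c := by
  rw [ENNReal.le_div_iff_mul_le (by simp [hc]) (by simp), mul_comm,
    ← ENNReal.mul_le_mul_iff_left (ENNReal.coe_ne_zero.2 hd) ENNReal.coe_ne_top]
  calc c * X.N ((shareSet r (c * d) f h).indicator h) ^ r * d
      = (c * d : ℝ≥0) * X.N ((shareSet r (c * d) f h).indicator h) ^ r := by
        push_cast
        ring
    _ ≤ X.N f ^ r := X.mul_N_indicator_shareSet_rpow_le hr hf hh _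
    _ ≤ σ * d := hσ

theorem AdmissibleQuasinorm.IsPNormable.N_rpow_le_of_nnnorm_rpow_eq_sum (hX : X.IsPNormable p)
    (hb : CrudeLower X q b) (hr : 0 < r) (hp : 0 < p) (hpq : p ≤ q) {K : ℕ} (hK : K ≠ 0)
    (hKb : ∑' m : ℕ, (ENNReal.ofReal b ^ q / (K * 2 ^ m)) ^ (q / p)⁻¹ ≤ 2⁻¹)
    (hh : Measurable h) {ι : Type*} [Fintype ι] {f : ι → Ω → ℝ} (hf : ∀ i, Measurable (f i))
    (hhf : ∀ x, ‖h x‖₊ ^ r = ∑ i, ‖f i x‖₊ ^ r) {d : ι → ℝ≥0}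
    (hd0 : ∀ i, d i ≠ 0) (hd : ∑ i, d i ≤ 2⁻¹) {σ : ℝ≥0∞}
    (hσ : ∀ i, X.N (f i) ^ r ≤ σ * d i) :
    X.N h ^ p ≤ 4 * (2 * K + 1) * (1 - 2 ^ (1 - p / r))⁻¹ * σ ^ (p / r) := by
  obtain ⟨m, hm⟩ : ∃ m : ℕ, ∀ i, 1 ≤ 2 ^ m * d i :=
    (eventually_all.2 fun i ↦ ((tendsto_pow_atTop_atTop_of_one_lt
      _root_.one_lt_two).atTop_mul_const
      (pos_iff_ne_zero.2 (hd0 i))).eventually_ge_atTop 1).exists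
  set A : ι × Fin m → Set Ω := fun j ↦ shareSet r (2 ^ (j.2 : ℕ) * d j.1) (f j.1) h
  have hA (j : ι × Fin m) : MeasurableSet (A j) := measurableSet_shareSet r _ (hf j.1) hh
  have hcover (x : Ω) (hx : h x ≠ 0) :
      1 ≤ ∑ j, (A j).indicator (fun _ ↦ 4 * (2 ^ (j.2 : ℕ) * d j.1)) x :=
    one_le_sum_indicator_shareSet hd hm hx (hhf x)
  have hlevel (j : ι × Fin m) :
      X.N ((A j).indicator h) ^ p ≤ (σ / 2 ^ (j.2 : ℕ)) ^ (p / r) := by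
    have hN : X.N ((A j).indicator h) ^ r ≤ σ / (2 ^ (j.2 : ℕ) : ℝ≥0) :=
      X.N_indicator_shareSet_rpow_le_div hr (hf j.1) hh (by simp) (hd0 j.1) (hσ j.1)
    push_cast at hN
    calc X.N ((A j).indicator h) ^ p = (X.N ((A j).indicator h) ^ r) ^ (p / r) := by
          rw [← ENNReal.rpow_mul, mul_div_cancel₀ p hr.ne']
      _ ≤ (σ / 2 ^ (j.2 : ℕ)) ^ (p / r) := by gcongr
  calc X.N h ^ p
      ≤ 2 * (2 * K + 1) * ∑ j : ι × Fin m, (4 * (2 ^ (j.2 : ℕ) * d j.1) : ℝ≥0) *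
          X.N ((A j).indicator h) ^ p :=
        hX.N_rpow_le_mul_sum hb hp hpq hK hKb hh hA _ hcover
    _ ≤ 2 * (2 * K + 1) * ∑ j : ι × Fin m, (4 * (2 ^ (j.2 : ℕ) * d j.1) : ℝ≥0) *
          (σ / 2 ^ (j.2 : ℕ)) ^ (p / r) := by
        gcongr with j
        exact hlevel j
    _ ≤ 2 * (2 * K + 1) * (2 * (1 - 2 ^ (1 - p / r))⁻¹ * σ ^ (p / r)) := by
        gcongr
        exact sum_mul_div_two_pow_rpow_le hd σ (by positivity) m
    _ = 4 * (2 * K + 1) * (1 - 2 ^ (1 - p / r))⁻¹ * σ ^ (p / r) := by ring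

end Quasinorm

theorem pNormable_crude_lower_estimate_rConvex_general
    (p q r b : ℝ) (hpq : p ≤ q) (hr0 : 0 < r) (hrp : r < p) :
    ∃ M : ℝ≥0∞, M < ⊤ ∧
      ∀ (Ω : Type*) [TopologicalSpace Ω] [MeasurableSpace Ω] (X : AdmissibleQuasinorm Ω),
        X.IsPNormable p → CrudeLower X q b →
        ∀ (ι : Type*) [Fintype ι] (f : ι → Ω → ℝ), (∀ i, Measurable (f i)) →
          X.N (fun x ↦ (∑ i, |f i x| ^ r) ^ (1 / r)) ≤
            M * (∑ i, X.N (f i) ^ r) ^ (1 / r) := by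
  have hp : 0 < p := hr0.trans hrp
  have hq : 0 < q := hp.trans_le hpq
  obtain ⟨K, hK, hKb⟩ := exists_nat_tsum_div_two_pow_rpow_le (B := ENNReal.ofReal b ^ q)
    (s := (q / p)⁻¹) (by finiteness) (by positivity)
  have hgeom : (1 - (2 : ℝ≥0∞) ^ (1 - p / r))⁻¹ ≠ ⊤ :=
    ENNReal.inv_ne_top.2 (tsub_pos_of_lt (ENNReal.rpow_lt_one_of_one_lt_of_neg one_lt_two
      (sub_neg.2 ((one_lt_div hr0).2 hrp)))).ne'
  set D : ℝ≥0∞ := 4 * (2 * K + 1) * (1 - 2 ^ (1 - p / r))⁻¹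
  refine ⟨D ^ p⁻¹ * 4 ^ (1 / r), by finiteness, fun Ω _ _ X hX hb ι _ f hf ↦ ?_⟩
  obtain ⟨d, hd0, hd, hσ⟩ := exists_pos_weights_le_mul fun i ↦ X.N (f i) ^ r
  have key := hX.N_rpow_le_of_nnnorm_rpow_eq_sum hb hr0 hp hpq hK hKb (by fun_prop) hf
    (fun x ↦ nnnorm_sum_abs_rpow_rpow hr0.ne' fun i ↦ f i x) hd0 hd hσ
  rw [mul_assoc, ← ENNReal.mul_rpow_of_nonneg _ _ (by positivity), ← ENNReal.rpow_le_rpow_iff hp,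
    ENNReal.mul_rpow_of_nonneg _ _ hp.le, ENNReal.rpow_inv_rpow hp.ne', ← ENNReal.rpow_mul,
    one_div_mul_eq_div]
  exact key

/-- If an admissible quasinorm is `p`-normable and satisfies a crude lower
`q`-estimate with constant `b` (`0 < p < q < ∞`), then for every `0 < r < p` the space is
`r`-convex, with the `r`-convexity constant depending only on `p, q, r, b`. -/
theorem pNormable_crude_lower_estimate_rConvex
    (p q r b : ℝ) (hp : 0 < p) (hpq : p < q) (hr0 : 0 < r) (hrp : r < p) :
    ∃ M : ℝ≥0∞, M < ⊤ ∧
      ∀ (Ω : Type) [TopologicalSpace Ω] [CompactSpace Ω] [T2Space Ω]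
        [MeasurableSpace Ω] [BorelSpace Ω] (X : AdmissibleQuasinorm Ω),
        (∀ f g : Ω → ℝ, Measurable f → Measurable g →
          X.N (fun x => f x + g x) ^ p ≤ X.N f ^ p + X.N g ^ p) →
        CrudeLower X q b →
        ∀ (n : ℕ) (f : Fin n → Ω → ℝ), (∀ i, Measurable (f i)) →
          (∀ i, X.N (f i) < ⊤) →
          X.N (fun x => (∑ i, |f i x| ^ r) ^ (1 / r)) ≤
            M * (∑ i, X.N (f i) ^ r) ^ (1 / r) := by
  obtain ⟨M, hM, h⟩ := pNormable_crude_lower_estimate_rConvex_general p q r b hpq.le hr0 hrp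
  exact ⟨M, hM, fun Ω _ _ _ _ _ X hX hb n f hf _ ↦ h Ω X hX hb (Fin n) f hf⟩
end
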